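/- Let f ∈ ℤ[X] be a monic squarefree polynomial with splitting field K and n = [K:ℚ]. Let η ∈ (0, 1/16) and suppose there exist a real number x₀ and a function q* assigning to each real x ≥ x₀ a natural number q*(x) > log x, such that for all x ≥ x₀, all real y with x^{1/2} < y ≤ x, every positive integer q ≤ x^η with q*(x) ∤ q, and every integer a with gcd(a, q) = 1, the number of primes p < y with p ≡ a (mod q) such that f splits into linear factors modulo p is at least π(y)/(2·n·φ(q)). Then for every ε > 0 and all sufficiently large real X, the number of Carmichael numbers m ≤ X such that f splits into linear factors modulo every prime divisor of m is at least X^{η/3 − ε}. -/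

import Mathlib

/-- A Carmichael number: a composite natural number `n > 1` such that
`a ^ (n - 1) ≡ 1 (mod n)` for every integer `a` coprime to `n`. -/
def IsCarmichael (n : ℕ) : Prop :=
  1 < n ∧ ¬ n.Prime ∧ ∀ a : ℤ, IsCoprime a (n : ℤ) → a ^ (n - 1) ≡ 1 [ZMOD (n : ℤ)]

/-- The image of `f` in `(ZMod p)[X]` is a product of linear factors. -/
def SplitsModLinear (f : Polynomial ℤ) (p : ℕ) : Prop :=
  ∃ s : Multiset (ZMod p),
    f.map (Int.castRingHom (ZMod p)) =
      (s.map fun a => Polynomial.X - Polynomial.C a).prod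

/-- `primePi y` is the number of primes `p ≤ y`. -/
noncomputable def primePi (y : ℝ) : ℕ := {p : ℕ | p.Prime ∧ (p : ℝ) ≤ y}.ncard

section Part1

namespace CarmFrob

open Finset

/-- The additive character `e(x) = exp(2πix)`. -/
noncomputable def ee (x : ℝ) : ℂ := Complex.exp ((2 * Real.pi * x : ℝ) * Complex.I)

lemma ee_add (x y : ℝ) : ee (x + y) = ee x * ee y := by
  unfold ee; rw [← Complex.exp_add]; congr 1; push_cast; ring

lemma norm_ee (x : ℝ) : ‖ee x‖ = 1 := by
  unfold ee; exact Complex.norm_exp_ofReal_mul_I _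

lemma conj_ee (x : ℝ) : (starRingEnd ℂ) (ee x) = ee (-x) := by
  unfold ee; rw [← Complex.exp_conj]; congr 1; rw [map_mul, Complex.conj_ofReal, Complex.conj_I]; push_cast; ring

lemma ee_int (k : ℤ) : ee k = 1 := by
  unfold ee
  rw [Complex.exp_eq_one_iff]
  exact ⟨k, by push_cast; ring⟩

lemma ee_zero : ee 0 = 1 := by simpa using ee_int 0

lemma ee_nat_mul (k : ℕ) (x : ℝ) : ee (k * x) = ee x ^ k := by
  unfold ee; rw [← Complex.exp_nat_mul]; congr 1; push_cast; ring

lemma ee_fract (x : ℝ) : ee (Int.fract x) = ee x := by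
  conv_rhs => rw [← Int.fract_add_floor x, ee_add, ee_int, mul_one]

/-- Dirichlet kernel -/
noncomputable def DD (H : ℕ) (x : ℝ) : ℂ := ∑ k ∈ range H, ee (k * x)

lemma norm_DD_le (H : ℕ) (x : ℝ) : ‖DD H x‖ ≤ H := by
  unfold DD
  refine (norm_sum_le _ _).trans ?_
  simp [norm_ee]

lemma norm_ee_sub_one (x : ℝ) : ‖ee x - 1‖ = 2 * |Real.sin (Real.pi * x)| := by
  unfold ee
  rw [mul_comm, Complex.norm_exp_I_mul_ofReal_sub_one]
  rw [norm_mul]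
  simp only [Real.norm_eq_abs]
  rw [show 2 * Real.pi * x / 2 = Real.pi * x by ring]
  simp

lemma sin_ge (x : ℝ) (h0 : 0 < x) (h1 : x < 1) : 2 * min x (1 - x) ≤ Real.sin (Real.pi * x) := by
  have hpi := Real.pi_pos
  rcases le_total x (1 - x) with h | h
  · rw [min_eq_left h]
    have := Real.mul_le_sin (x := Real.pi * x) (by positivity) (by nlinarith)
    have e : 2 / Real.pi * (Real.pi * x) = 2 * x := by field_simp
    linarith
  · rw [min_eq_right h]
    have := Real.mul_le_sin (x := Real.pi * (1 - x)) (by nlinarith) (by nlinarith)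
    have e : 2 / Real.pi * (Real.pi * (1 - x)) = 2 * (1 - x) := by field_simp
    have e2 : Real.sin (Real.pi * (1 - x)) = Real.sin (Real.pi * x) := by
      rw [mul_sub, mul_one, Real.sin_pi_sub]
    linarith

lemma norm_DD_sq_le (H : ℕ) (x : ℝ) (h0 : 0 < Int.fract x) :
    ‖DD H x‖ ^ 2 ≤ (1 / 4) * (1 / (Int.fract x) ^ 2 + 1 / (1 - Int.fract x) ^ 2) := by
  set y := Int.fract x with hy
  have h1 : y < 1 := Int.fract_lt_one x
  have hs := sin_ge y h0 h1
  have hm : 0 < min y (1 - y) := lt_min h0 (by linarith)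
  have hne : ee x ≠ 1 := by
    intro h
    have h2 := norm_ee_sub_one y
    rw [hy, ee_fract, h, ← hy] at h2
    simp only [sub_self, norm_zero] at h2
    have := le_abs_self (Real.sin (Real.pi * y))
    linarith
  have hD : DD H x * (ee x - 1) = ee x ^ H - 1 := by
    unfold DD
    simp_rw [ee_nat_mul]
    exact geom_sum_mul _ _
  have hn : ‖DD H x‖ * (2 * |Real.sin (Real.pi * y)|) ≤ 2 := by
    rw [← norm_ee_sub_one, hy, ee_fract, ← norm_mul, hD]
    refine (norm_sub_le _ _).trans ?_
    simp [norm_ee]; norm_num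
  have habs := le_abs_self (Real.sin (Real.pi * y))
  have h3 : ‖DD H x‖ * (2 * min y (1 - y)) ≤ 1 := by
    have : ‖DD H x‖ * (2 * min y (1 - y)) ≤ ‖DD H x‖ * |Real.sin (Real.pi * y)| :=
      mul_le_mul_of_nonneg_left (by linarith) (norm_nonneg _)
    linarith
  have h4 : ‖DD H x‖ ≤ 1 / (2 * min y (1 - y)) := by
    rw [le_div_iff₀ (by positivity)]; exact h3
  have h5 : ‖DD H x‖ ^ 2 ≤ (1 / (2 * min y (1 - y))) ^ 2 := by
    gcongr
  refine h5.trans ?_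
  have h6 : 0 ≤ 1 / y ^ 2 := by positivity
  have h7 : 0 ≤ 1 / (1 - y) ^ 2 := by positivity
  rcases le_total y (1 - y) with h | h
  · rw [min_eq_left h]
    have : (1 / (2 * y)) ^ 2 = (1 / 4) * (1 / y ^ 2) := by field_simp; norm_num
    rw [this]; linarith
  · rw [min_eq_right h]
    have : (1 / (2 * (1 - y))) ^ 2 = (1 / 4) * (1 / (1 - y) ^ 2) := by
      have : (1 - y) ≠ 0 := by linarith
      field_simp; norm_num
    rw [this]; linarith

lemma sum_inv_sq_le (s : Finset ℕ) (h : ∀ k ∈ s, 1 ≤ k) : ∑ k ∈ s, 1 / (k : ℝ) ^ 2 ≤ 2 := by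
  obtain ⟨n, hn⟩ : ∃ n, s ⊆ Finset.Ioo 0 n := by
    refine ⟨s.sup id + 1, fun k hk => ?_⟩
    rw [Finset.mem_Ioo]
    exact ⟨h k hk, Nat.lt_succ_of_le (Finset.le_sup (f := id) hk)⟩
  have h1 : ∑ k ∈ s, 1 / (k : ℝ) ^ 2 ≤ ∑ k ∈ Finset.Ioo 0 n, 1 / (k : ℝ) ^ 2 :=
    Finset.sum_le_sum_of_subset_of_nonneg hn (fun _ _ _ => by positivity)
  refine h1.trans ?_
  have := sum_Ioo_inv_sq_le (α := ℝ) 0 n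
  simpa [one_div] using this

/-- packing bound -/
lemma packing {ι : Type*} (s : Finset ι) (y : ι → ℝ) (δ : ℝ) (hδ : 0 < δ)
    (h1 : ∀ i ∈ s, δ ≤ y i) (h2 : ∀ i ∈ s, ∀ j ∈ s, i ≠ j → δ ≤ |y i - y j|) :
    ∑ i ∈ s, 1 / (y i) ^ 2 ≤ 2 / δ ^ 2 := by
  classical
  have hfl : ∀ i ∈ s, (1 : ℕ) ≤ ⌊y i / δ⌋₊ := by
    intro i hi
    rw [Nat.one_le_floor_iff, le_div_iff₀ hδ]; linarith [h1 i hi]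
  have hinj : Set.InjOn (fun i => ⌊y i / δ⌋₊) (s : Set ι) := by
    intro i hi j hj hij
    by_contra hne
    have := h2 i hi j hj hne
    simp only at hij
    have a1 := Nat.floor_le (a := y i / δ) (div_nonneg (by linarith [h1 i hi]) hδ.le)
    have a2 := Nat.lt_floor_add_one (y i / δ)
    have b1 := Nat.floor_le (a := y j / δ) (div_nonneg (by linarith [h1 j hj]) hδ.le)
    have b2 := Nat.lt_floor_add_one (y j / δ)
    rw [hij] at a1 a2
    have : |y i / δ - y j / δ| < 1 := by rw [abs_lt]; constructor <;> linarith
    rw [← sub_div, abs_div, abs_of_pos hδ, div_lt_one hδ] at this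
    linarith
  calc ∑ i ∈ s, 1 / (y i) ^ 2 ≤ ∑ i ∈ s, (1 / δ ^ 2) * (1 / ((⌊y i / δ⌋₊ : ℕ) : ℝ) ^ 2) := by
        refine Finset.sum_le_sum fun i hi => ?_
        have a1 := Nat.floor_le (a := y i / δ) (div_nonneg (by linarith [h1 i hi]) hδ.le)
        have a0 : (1 : ℝ) ≤ (⌊y i / δ⌋₊ : ℕ) := by exact_mod_cast hfl i hi
        rw [le_div_iff₀ hδ] at a1
        rw [div_mul_div_comm, mul_one, ← mul_pow]
        apply one_div_le_one_div_of_le (by positivity)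
        have : 0 ≤ δ * (⌊y i / δ⌋₊ : ℕ) := by positivity
        apply pow_le_pow_left₀ this
        linarith
    _ = (1 / δ ^ 2) * ∑ k ∈ s.image (fun i => ⌊y i / δ⌋₊), 1 / (k : ℝ) ^ 2 := by
        rw [Finset.sum_image hinj, Finset.mul_sum]
    _ ≤ (1 / δ ^ 2) * 2 := by
        apply mul_le_mul_of_nonneg_left _ (by positivity)
        apply sum_inv_sq_le
        intro k hk
        rw [Finset.mem_image] at hk
        obtain ⟨i, hi, rfl⟩ := hk
        exact hfl i hi
    _ = 2 / δ ^ 2 := by ring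

end CarmFrob

end Part1

section Part2

namespace CarmFrob

open Finset

lemma sum_DD_sq_le {ι : Type*} [DecidableEq ι] (s : Finset ι) (x : ι → ℝ) (δ : ℝ) (hδ : 0 < δ)
    (sep : ∀ i ∈ s, ∀ j ∈ s, i ≠ j → ∀ k : ℤ, δ ≤ |x i - x j - k|) (H : ℕ) (i : ι) (hi : i ∈ s) :
    ∑ j ∈ s, ‖DD H (x j - x i)‖ ^ 2 ≤ (H : ℝ) ^ 2 + 1 / δ ^ 2 := by
  rw [← Finset.add_sum_erase s _ hi]
  have h0 : ‖DD H (x i - x i)‖ ^ 2 ≤ (H : ℝ) ^ 2 := by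
    gcongr; exact norm_DD_le _ _
  have hfr : ∀ j ∈ s.erase i, δ ≤ Int.fract (x j - x i) ∧ δ ≤ 1 - Int.fract (x j - x i) := by
    intro j hj
    rw [Finset.mem_erase] at hj
    have a := sep j hj.2 i hi hj.1 ⌊x j - x i⌋
    have b := sep j hj.2 i hi hj.1 (⌊x j - x i⌋ + 1)
    have f0 := Int.fract_nonneg (x j - x i)
    have f1 := Int.fract_lt_one (x j - x i)
    have e : x j - x i - (⌊x j - x i⌋ : ℝ) = Int.fract (x j - x i) := rfl
    rw [e, abs_of_nonneg f0] at a
    have e2 : x j - x i - ((⌊x j - x i⌋ + 1 : ℤ) : ℝ) = - (1 - Int.fract (x j - x i)) := by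
      push_cast; rw [← e]; ring
    rw [e2, abs_neg, abs_of_nonneg (by linarith)] at b
    exact ⟨a, b⟩
  have hsep2 : ∀ j ∈ s.erase i, ∀ l ∈ s.erase i, j ≠ l →
      δ ≤ |Int.fract (x j - x i) - Int.fract (x l - x i)| := by
    intro j hj l hl hjl
    rw [Finset.mem_erase] at hj hl
    have := sep j hj.2 l hl.2 hjl (⌊x j - x i⌋ - ⌊x l - x i⌋)
    have e : Int.fract (x j - x i) - Int.fract (x l - x i) =
      x j - x l - ((⌊x j - x i⌋ - ⌊x l - x i⌋ : ℤ) : ℝ) := by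
      unfold Int.fract; push_cast; ring
    rw [e]; exact this
  have hp1 := packing (s.erase i) (fun j => Int.fract (x j - x i)) δ hδ
    (fun j hj => (hfr j hj).1) hsep2
  have hp2 := packing (s.erase i) (fun j => 1 - Int.fract (x j - x i)) δ hδ
    (fun j hj => (hfr j hj).2) (by
      intro j hj l hl hjl
      have := hsep2 j hj l hl hjl
      rw [show 1 - Int.fract (x j - x i) - (1 - Int.fract (x l - x i)) =
        -(Int.fract (x j - x i) - Int.fract (x l - x i)) by ring, abs_neg]
      exact this)
  have : ∑ j ∈ s.erase i, ‖DD H (x j - x i)‖ ^ 2 ≤ ∑ j ∈ s.erase i,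
      (1 / 4) * (1 / (Int.fract (x j - x i)) ^ 2 + 1 / (1 - Int.fract (x j - x i)) ^ 2) := by
    refine Finset.sum_le_sum fun j hj => norm_DD_sq_le _ _ ?_
    linarith [(hfr j hj).1]
  rw [← Finset.mul_sum, Finset.sum_add_distrib] at this
  have h3 : 2 / δ ^ 2 = 2 * (1 / δ ^ 2) := by ring
  rw [h3] at hp1 hp2
  linarith

lemma sum4_swap {ι κ : Type*} (u v : Finset κ) (s t : Finset ι) (f : κ → κ → ι → ι → ℂ) :
    ∑ k ∈ u, ∑ l ∈ v, ∑ i ∈ s, ∑ j ∈ t, f k l i j = ∑ i ∈ s, ∑ j ∈ t, ∑ k ∈ u, ∑ l ∈ v, f k l i j := by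
  calc _ = ∑ p ∈ u ×ˢ v, ∑ q ∈ s ×ˢ t, f p.1 p.2 q.1 q.2 := by
        rw [Finset.sum_product]
        simp_rw [Finset.sum_product]
    _ = ∑ q ∈ s ×ˢ t, ∑ p ∈ u ×ˢ v, f p.1 p.2 q.1 q.2 := Finset.sum_comm
    _ = _ := by
        rw [Finset.sum_product]
        simp_rw [Finset.sum_product]

/-- Expansion of the smoothed mean square. -/
lemma smoothed_sum_le {ι : Type*} [DecidableEq ι] (s : Finset ι) (x : ι → ℝ) (c : ι → ℂ) (H : ℕ)
    (B : ℝ) (hB : ∀ i ∈ s, ∑ j ∈ s, ‖DD H (x j - x i)‖ ^ 2 ≤ B) :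
    ∑ k ∈ range H, ∑ l ∈ range H, ‖∑ i ∈ s, c i * ee (((k : ℝ) - l) * x i)‖ ^ 2 ≤
      B * ∑ i ∈ s, ‖c i‖ ^ 2 := by
  have key : ((∑ k ∈ range H, ∑ l ∈ range H,
      ‖∑ i ∈ s, c i * ee (((k : ℝ) - l) * x i)‖ ^ 2 : ℝ) : ℂ) =
      ∑ i ∈ s, ∑ j ∈ s, c i * (starRingEnd ℂ) (c j) *
        (DD H (x i - x j) * (starRingEnd ℂ) (DD H (x i - x j))) := by
    push_cast
    have h1 : ∀ k l : ℕ, ((‖∑ i ∈ s, c i * ee (((k : ℝ) - l) * x i)‖ : ℂ)) ^ 2 =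
        ∑ i ∈ s, ∑ j ∈ s, c i * (starRingEnd ℂ) (c j) *
          (ee (k * (x i - x j)) * (starRingEnd ℂ) (ee (l * (x i - x j)))) := by
      intro k l
      rw [← Complex.mul_conj', map_sum, Finset.sum_mul_sum]
      refine Finset.sum_congr rfl fun i _ => Finset.sum_congr rfl fun j _ => ?_
      rw [map_mul, conj_ee, conj_ee]
      have : ee (((k : ℝ) - l) * x i) * ee (-(((k : ℝ) - l) * x j)) =
          ee (k * (x i - x j)) * ee (-(l * (x i - x j))) := by
        rw [← ee_add, ← ee_add]; congr 1; ring
      linear_combination (c i * (starRingEnd ℂ) (c j)) * this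
    simp_rw [h1]
    have h2 : ∀ i j, c i * (starRingEnd ℂ) (c j) *
        (DD H (x i - x j) * (starRingEnd ℂ) (DD H (x i - x j))) =
        ∑ k ∈ range H, ∑ l ∈ range H, c i * (starRingEnd ℂ) (c j) *
          (ee (k * (x i - x j)) * (starRingEnd ℂ) (ee (l * (x i - x j)))) := by
      intro i j
      unfold DD
      rw [map_sum, Finset.sum_mul_sum, Finset.mul_sum]
      refine Finset.sum_congr rfl fun k _ => ?_
      rw [Finset.mul_sum]
    simp_rw [h2]
    exact sum4_swap (range H) (range H) s s (fun k l i j => c i * (starRingEnd ℂ) (c j) *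
          (ee (k * (x i - x j)) * (starRingEnd ℂ) (ee (l * (x i - x j)))))
  have hn : ∑ k ∈ range H, ∑ l ∈ range H, ‖∑ i ∈ s, c i * ee (((k : ℝ) - l) * x i)‖ ^ 2 ≤
      ∑ i ∈ s, ∑ j ∈ s, ‖c i‖ * ‖c j‖ * ‖DD H (x i - x j)‖ ^ 2 := by
    have h0 : 0 ≤ ∑ k ∈ range H, ∑ l ∈ range H,
        ‖∑ i ∈ s, c i * ee (((k : ℝ) - l) * x i)‖ ^ 2 := by positivity
    have := congrArg norm key
    rw [Complex.norm_real, Real.norm_of_nonneg h0] at this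
    rw [this]
    refine (norm_sum_le _ _).trans (Finset.sum_le_sum fun i _ => ?_)
    refine (norm_sum_le _ _).trans (Finset.sum_le_sum fun j _ => ?_)
    simp only [norm_mul, RCLike.norm_conj]
    rw [sq]
  refine hn.trans ?_
  have hsymm : ∀ i j, ‖DD H (x i - x j)‖ = ‖DD H (x j - x i)‖ := by
    intro i j
    have : DD H (x i - x j) = (starRingEnd ℂ) (DD H (x j - x i)) := by
      unfold DD; rw [map_sum]
      refine Finset.sum_congr rfl fun k _ => ?_
      rw [conj_ee]; congr 1; ring
    rw [this, RCLike.norm_conj]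
  have h3 : ∑ i ∈ s, ∑ j ∈ s, ‖c i‖ * ‖c j‖ * ‖DD H (x i - x j)‖ ^ 2 ≤
      ∑ i ∈ s, ∑ j ∈ s, ((1 / 2) * (‖c i‖ ^ 2 * ‖DD H (x j - x i)‖ ^ 2) +
        (1 / 2) * (‖c j‖ ^ 2 * ‖DD H (x i - x j)‖ ^ 2)) := by
    refine Finset.sum_le_sum fun i _ => Finset.sum_le_sum fun j _ => ?_
    rw [hsymm j i]
    have := sq_nonneg (‖c i‖ - ‖c j‖)
    have h4 : ‖c i‖ * ‖c j‖ ≤ (1 / 2) * (‖c i‖ ^ 2 + ‖c j‖ ^ 2) := by nlinarith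
    have := mul_le_mul_of_nonneg_right h4 (sq_nonneg ‖DD H (x i - x j)‖)
    linarith
  have h5 : ∑ i ∈ s, ∑ j ∈ s, (1 / 2) * (‖c j‖ ^ 2 * ‖DD H (x i - x j)‖ ^ 2) =
      ∑ i ∈ s, ∑ j ∈ s, (1 / 2) * (‖c i‖ ^ 2 * ‖DD H (x j - x i)‖ ^ 2) := Finset.sum_comm
  have h6 : ∑ i ∈ s, ∑ j ∈ s, (1 / 2) * (‖c i‖ ^ 2 * ‖DD H (x j - x i)‖ ^ 2) ≤
      (1 / 2) * (B * ∑ i ∈ s, ‖c i‖ ^ 2) := by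
    rw [Finset.mul_sum, Finset.mul_sum]
    refine Finset.sum_le_sum fun i hi => ?_
    rw [← Finset.mul_sum, ← Finset.mul_sum]
    have := mul_le_mul_of_nonneg_left (hB i hi) (sq_nonneg ‖c i‖)
    nlinarith
  simp_rw [Finset.sum_add_distrib] at h3
  rw [h5] at h3
  linarith

/-- Dual large sieve. -/
lemma dual_large_sieve {ι : Type*} [DecidableEq ι] (s : Finset ι) (x : ι → ℝ) (δ : ℝ) (hδ : 0 < δ)
    (sep : ∀ i ∈ s, ∀ j ∈ s, i ≠ j → ∀ k : ℤ, δ ≤ |x i - x j - k|) (c : ι → ℂ) (M H : ℕ)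
    (hM : 2 * M ≤ H) (hH : 1 / δ ≤ H) :
    ∑ n ∈ range M, ‖∑ i ∈ s, c i * ee (n * x i)‖ ^ 2 ≤ 4 * H * ∑ i ∈ s, ‖c i‖ ^ 2 := by
  have h1 := smoothed_sum_le s x c H ((H : ℝ) ^ 2 + 1 / δ ^ 2)
    (fun i hi => sum_DD_sq_le s x δ hδ sep H i hi)
  have hHpos : (0 : ℝ) < H := lt_of_lt_of_le (by positivity) hH
  have hd : 1 / δ ^ 2 ≤ (H : ℝ) ^ 2 := by
    have := pow_le_pow_left₀ (by positivity) hH 2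
    rwa [one_div_pow] at this
  have h2 : ∑ n ∈ range M, ∑ l ∈ range (H - M), ‖∑ i ∈ s, c i * ee (n * x i)‖ ^ 2 ≤
      ∑ k ∈ range H, ∑ l ∈ range H, ‖∑ i ∈ s, c i * ee (((k : ℝ) - l) * x i)‖ ^ 2 := by
    rw [← Finset.sum_product', ← Finset.sum_product']
    have hinj : Set.InjOn (fun p : ℕ × ℕ => (p.2 + p.1, p.2))
        ((range M ×ˢ range (H - M) : Finset (ℕ × ℕ)) : Set (ℕ × ℕ)) := by
      rintro ⟨a, b⟩ _ ⟨a', b'⟩ _ h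
      simp only [Prod.mk.injEq] at h ⊢
      omega
    have : ∑ p ∈ range M ×ˢ range (H - M), ‖∑ i ∈ s, c i * ee (p.1 * x i)‖ ^ 2 =
        ∑ p ∈ (range M ×ˢ range (H - M)).image (fun p : ℕ × ℕ => (p.2 + p.1, p.2)),
          ‖∑ i ∈ s, c i * ee (((p.1 : ℝ) - p.2) * x i)‖ ^ 2 := by
      rw [Finset.sum_image hinj]
      refine Finset.sum_congr rfl fun p _ => ?_
      simp
    rw [this]
    apply Finset.sum_le_sum_of_subset_of_nonneg
    · intro p hp
      simp only [Finset.mem_image, Finset.mem_product, Finset.mem_range] at hp ⊢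
      obtain ⟨⟨a, b⟩, hab, rfl⟩ := hp
      simp only at hab ⊢
      omega
    · intros; positivity
  simp only [Finset.sum_const, Finset.card_range, nsmul_eq_mul] at h2
  rw [← Finset.mul_sum] at h2
  have hHM : (H : ℝ) / 2 ≤ ((H - M : ℕ) : ℝ) := by
    rw [Nat.cast_sub (by omega)]
    have : (2 : ℝ) * M ≤ H := by exact_mod_cast hM
    linarith
  set S := ∑ n ∈ range M, ‖∑ i ∈ s, c i * ee (n * x i)‖ ^ 2 with hS
  have hS0 : 0 ≤ S := by positivity
  set C := ∑ i ∈ s, ‖c i‖ ^ 2 with hC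
  have hC0 : 0 ≤ C := by positivity
  have h3 : (H : ℝ) / 2 * S ≤ (H : ℝ) ^ 2 * 2 * C := by
    have a := mul_le_mul_of_nonneg_right hHM hS0
    have b := mul_le_mul_of_nonneg_right hd hC0
    nlinarith
  have h4 : (H : ℝ) * S ≤ H * (4 * H * C) := by nlinarith
  exact le_of_mul_le_mul_left h4 hHpos

/-- Large sieve. -/
lemma large_sieve {ι : Type*} [DecidableEq ι] (s : Finset ι) (x : ι → ℝ) (δ : ℝ) (hδ : 0 < δ)
    (sep : ∀ i ∈ s, ∀ j ∈ s, i ≠ j → ∀ k : ℤ, δ ≤ |x i - x j - k|) (a : ℕ → ℂ) (M H : ℕ)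
    (hM : 2 * M ≤ H) (hH : 1 / δ ≤ H) :
    ∑ i ∈ s, ‖∑ n ∈ range M, a n * ee (n * x i)‖ ^ 2 ≤ 4 * H * ∑ n ∈ range M, ‖a n‖ ^ 2 := by
  set S : ι → ℂ := fun i => ∑ n ∈ range M, a n * ee (n * x i) with hS
  have hd := dual_large_sieve s x δ hδ sep (fun i => (starRingEnd ℂ) (S i)) M H hM hH
  simp only [RCLike.norm_conj] at hd
  set W := ∑ i ∈ s, ‖S i‖ ^ 2 with hW
  have hW0 : 0 ≤ W := by positivity
  have key : (W : ℂ) = ∑ n ∈ range M, a n * ∑ i ∈ s, (starRingEnd ℂ) (S i) * ee (n * x i) := by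
    rw [hW]; push_cast
    have : ∀ i, ((‖S i‖ : ℂ)) ^ 2 = ∑ n ∈ range M, a n * ((starRingEnd ℂ) (S i) * ee (n * x i)) := by
      intro i
      rw [← Complex.mul_conj']
      conv_lhs => rw [hS]
      simp only
      rw [Finset.sum_mul]
      refine Finset.sum_congr rfl fun n _ => ?_
      ring
    simp_rw [this]
    rw [Finset.sum_comm]
    simp_rw [Finset.mul_sum]
  have h1 : W ≤ ∑ n ∈ range M, ‖a n‖ * ‖∑ i ∈ s, (starRingEnd ℂ) (S i) * ee (n * x i)‖ := by
    have := congrArg norm key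
    rw [Complex.norm_real, Real.norm_of_nonneg hW0] at this
    rw [this]
    refine (norm_sum_le _ _).trans (Finset.sum_le_sum fun i _ => ?_)
    rw [norm_mul]
  have h2 := Finset.sum_mul_sq_le_sq_mul_sq (range M) (fun n => ‖a n‖)
    (fun n => ‖∑ i ∈ s, (starRingEnd ℂ) (S i) * ee (n * x i)‖)
  have h3 : W ^ 2 ≤ (∑ n ∈ range M, ‖a n‖ ^ 2) * (4 * H * W) := by
    refine (pow_le_pow_left₀ hW0 h1 2).trans (h2.trans ?_)
    exact mul_le_mul_of_nonneg_left hd (by positivity)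
  rcases hW0.eq_or_lt with h | h
  · rw [← h]; positivity
  · have : W * W ≤ W * (4 * H * ∑ n ∈ range M, ‖a n‖ ^ 2) := by nlinarith
    exact le_of_mul_le_mul_left this h

end CarmFrob

end Part2

section Part3

namespace CarmFrob

open Finset

/-- The discrepancy kernel `1[j ≡ 1 (r)] - 1[r ∤ j]/(r-1)`. -/
noncomputable def kk (r j : ℕ) : ℝ :=
  (if (j : ZMod r) = 1 then 1 else 0) - (if (j : ZMod r) = 0 then 0 else 1 / ((r : ℝ) - 1))

/-- Exponential sum with real coefficients. -/
noncomputable def ES (α : ℕ → ℝ) (M : ℕ) (x : ℝ) : ℂ := ∑ n ∈ range M, (α n : ℂ) * ee (n * x)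

lemma frac_sep (R : ℕ) (r r' b b' : ℕ) (hr : r.Prime) (hr' : r'.Prime)
    (hR : r ≤ 2 * R) (hR' : r' ≤ 2 * R)
    (hb : b ∈ Ico 1 r) (hb' : b' ∈ Ico 1 r') (hne : (r, b) ≠ (r', b')) (k : ℤ) :
    1 / (4 * (R : ℝ) ^ 2) ≤ |(b : ℝ) / r - (b' : ℝ) / r' - k| := by
  have hr0 : (0 : ℝ) < r := by exact_mod_cast hr.pos
  have hr0' : (0 : ℝ) < r' := by exact_mod_cast hr'.pos
  rw [Finset.mem_Ico] at hb hb'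
  have e : (b : ℝ) / r - (b' : ℝ) / r' - k =
      (((b : ℤ) * r' - b' * r - k * (r * r') : ℤ) : ℝ) / (r * r') := by
    push_cast; field_simp
  have hnum : ((b : ℤ) * r' - b' * r - k * (r * r') : ℤ) ≠ 0 := by
    intro h
    by_cases hrr : r = r'
    · subst hrr
      have h2 : ((b : ℤ) - b' - k * r) * r = 0 := by linear_combination h
      have hr1 : (r : ℤ) ≠ 0 := by exact_mod_cast hr.ne_zero
      have h3 : (b : ℤ) - b' = k * r := by
        rcases mul_eq_zero.1 h2 with h3 | h3
        · linarith
        · exact absurd h3 hr1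
      have h4 : (b : ℤ) - b' = 0 := by
        apply Int.eq_zero_of_abs_lt_dvd (m := (r : ℤ)) ⟨k, by rw [h3]; ring⟩
        rw [abs_lt]; constructor <;> omega
      apply hne; congr 1; omega
    · have h2 : (r : ℤ) ∣ (b : ℤ) * r' := ⟨b' + k * r', by linear_combination h⟩
      have h3 : r ∣ b * r' := by exact_mod_cast h2
      rcases hr.dvd_mul.1 h3 with h4 | h4
      · have := Nat.le_of_dvd (by omega) h4; omega
      · exact hrr ((Nat.prime_dvd_prime_iff_eq hr hr').1 h4)
  rw [e, abs_div, abs_of_pos (mul_pos hr0 hr0')]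
  have h1 : (1 : ℝ) ≤ |(((b : ℤ) * r' - b' * r - k * (r * r') : ℤ) : ℝ)| := by
    rw [← Int.cast_abs]; exact_mod_cast Int.one_le_abs hnum
  apply div_le_div₀ (by positivity) h1 (by positivity)
  have : (r : ℝ) ≤ 2 * R := by exact_mod_cast hR
  have : (r' : ℝ) ≤ 2 * R := by exact_mod_cast hR'
  nlinarith

lemma ls_primes (R : ℕ) (hR : 0 < R) (P : Finset ℕ) (hP : ∀ r ∈ P, r.Prime ∧ r ≤ 2 * R)
    (α : ℕ → ℝ) (M : ℕ) :
    ∑ r ∈ P, ∑ b ∈ Ico 1 r, ‖ES α M ((b : ℝ) / r)‖ ^ 2 ≤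
      4 * (2 * M + 4 * (R : ℝ) ^ 2) * ∑ n ∈ range M, α n ^ 2 := by
  have h := large_sieve (P.sigma fun r => Ico 1 r) (fun p => (p.2 : ℝ) / (p.1 : ℝ))
    (1 / (4 * (R : ℝ) ^ 2)) (by positivity) (by
      rintro ⟨r, b⟩ h1 ⟨r', b'⟩ h2 hne k
      rw [Finset.mem_sigma] at h1 h2
      refine frac_sep R r r' b b' (hP r h1.1).1 (hP r' h2.1).1 (hP r h1.1).2 (hP r' h2.1).2
        h1.2 h2.2 ?_ k
      intro h; apply hne
      rw [Prod.mk.injEq] at h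
      obtain ⟨rfl, rfl⟩ := h; rfl) (fun n => (α n : ℂ)) M (2 * M + 4 * R ^ 2) (by omega) (by
      push_cast; rw [one_div_one_div]; have : (0 : ℝ) ≤ M := by positivity
      linarith)
  rw [Finset.sum_sigma] at h
  push_cast at h
  simpa [ES, Complex.norm_real] using h

lemma orth (r : ℕ) (hr : 0 < r) (m : ℤ) :
    ∑ b ∈ range r, ee ((m : ℝ) * ((b : ℝ) / r)) = if (r : ℤ) ∣ m then (r : ℂ) else 0 := by
  have hr0 : (r : ℝ) ≠ 0 := by positivity
  have e : ∀ b : ℕ, ee ((m : ℝ) * ((b : ℝ) / r)) = ee ((m : ℝ) / r) ^ b := by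
    intro b; rw [← ee_nat_mul]; congr 1; field_simp
  simp_rw [e]
  split_ifs with h
  · obtain ⟨k, rfl⟩ := h
    have : ee (((r * k : ℤ) : ℝ) / r) = 1 := by
      rw [← ee_int k]; congr 1; push_cast; field_simp
    rw [this]; simp
  · have hne : ee ((m : ℝ) / r) ≠ 1 := by
      intro h1
      unfold ee at h1
      rw [Complex.exp_eq_one_iff] at h1
      obtain ⟨k, hk⟩ := h1
      apply h
      refine ⟨k, ?_⟩
      have hk2 : ((2 * Real.pi * (m / r) : ℝ) : ℂ) = ((k * (2 * Real.pi) : ℝ) : ℂ) := by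
        have hI := Complex.I_ne_zero
        apply mul_right_cancel₀ hI
        rw [hk]; push_cast; ring
      have hk3 := Complex.ofReal_injective hk2
      have hpi := Real.pi_pos
      have : (m : ℝ) = r * k := by
        field_simp at hk3
        linarith
      exact_mod_cast this
    have h2 := geom_sum_mul (ee ((m : ℝ) / r)) r
    have h3 : ee ((m : ℝ) / r) ^ r = 1 := by
      rw [← ee_nat_mul, ← ee_int m]; congr 1; field_simp
    rw [h3, sub_self] at h2
    exact (mul_eq_zero.1 h2).resolve_right (sub_ne_zero.2 hne)

/-- Sum over a residue class. -/
noncomputable def AA (α : ℕ → ℝ) (M r : ℕ) (a : ZMod r) : ℝ :=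
  ∑ m ∈ range M, if (m : ZMod r) = a then α m else 0

lemma parseval (α : ℕ → ℝ) (M r : ℕ) [NeZero r] :
    ∑ b ∈ range r, ‖ES α M ((b : ℝ) / r)‖ ^ 2 = r * ∑ a : ZMod r, AA α M r a ^ 2 := by
  have hr : 0 < r := NeZero.pos r
  apply Complex.ofReal_injective
  push_cast
  have h1 : ∀ b : ℕ, ((‖ES α M ((b : ℝ) / r)‖ : ℂ)) ^ 2 = ∑ m ∈ range M, ∑ m' ∈ range M,
      (α m : ℂ) * α m' * ee ((((m : ℤ) - m' : ℤ) : ℝ) * ((b : ℝ) / r)) := by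
    intro b
    rw [← Complex.mul_conj']
    unfold ES
    rw [map_sum, Finset.sum_mul_sum]
    refine Finset.sum_congr rfl fun m _ => Finset.sum_congr rfl fun m' _ => ?_
    rw [map_mul, conj_ee, Complex.conj_ofReal]
    have : ee ((((m : ℤ) - m' : ℤ) : ℝ) * ((b : ℝ) / r)) =
        ee ((m : ℝ) * ((b : ℝ) / r)) * ee (-((m' : ℝ) * ((b : ℝ) / r))) := by
      rw [← ee_add]; congr 1; push_cast; ring
    rw [this]; ring
  simp_rw [h1]
  rw [Finset.sum_comm]
  have h2 : ∀ m m' : ℕ, ∑ b ∈ range r,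
      (α m : ℂ) * α m' * ee ((((m : ℤ) - m' : ℤ) : ℝ) * ((b : ℝ) / r)) =
      r * ∑ a : ZMod r, ((if (m : ZMod r) = a then (α m : ℂ) else 0) *
        (if (m' : ZMod r) = a then (α m' : ℂ) else 0)) := by
    intro m m'
    rw [← Finset.mul_sum, orth r hr]
    simp only [ite_mul, zero_mul, mul_ite, mul_zero]
    simp only [Finset.sum_ite_eq, Finset.mem_univ, if_true]
    have : ((r : ℤ) ∣ (m : ℤ) - m') ↔ ((m' : ZMod r) = m) := by
      rw [← ZMod.intCast_zmod_eq_zero_iff_dvd]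
      push_cast
      rw [sub_eq_zero]; exact eq_comm
    by_cases h : (m' : ZMod r) = m
    · simp [this, h]; ring
    · have h' : ¬ ((m : ZMod r) = m') := fun e => h e.symm
      simp [this, h, h']
  have h3 : ∀ m ∈ range M, ∑ b ∈ range r, ∑ m' ∈ range M,
      (α m : ℂ) * α m' * ee ((((m : ℤ) - m' : ℤ) : ℝ) * ((b : ℝ) / r)) =
      ∑ m' ∈ range M, r * ∑ a : ZMod r, ((if (m : ZMod r) = a then (α m : ℂ) else 0) *
        (if (m' : ZMod r) = a then (α m' : ℂ) else 0)) := by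
    intro m _
    rw [Finset.sum_comm]
    exact Finset.sum_congr rfl fun m' _ => h2 m m'
  rw [Finset.sum_congr rfl h3]
  simp_rw [← Finset.mul_sum]
  congr 1
  have h4 : ∀ a : ZMod r, ((AA α M r a : ℝ) : ℂ) ^ 2 = ∑ m ∈ range M, ∑ m' ∈ range M,
      ((if (m : ZMod r) = a then (α m : ℂ) else 0) *
        (if (m' : ZMod r) = a then (α m' : ℂ) else 0)) := by
    intro a
    rw [sq, ← Finset.sum_mul_sum]
    unfold AA
    simp only [Complex.ofReal_sum, apply_ite Complex.ofReal, Complex.ofReal_zero]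
  simp_rw [h4]
  rw [Finset.sum_comm]
  conv_rhs => rw [Finset.sum_comm]
  rw [Finset.sum_comm]
  refine Finset.sum_congr rfl fun m _ => ?_
  rw [Finset.sum_comm]

lemma sum_AA (α : ℕ → ℝ) (M r : ℕ) [NeZero r] :
    ∑ a : ZMod r, AA α M r a = ∑ m ∈ range M, α m := by
  unfold AA
  rw [Finset.sum_comm]
  simp

lemma variance (α : ℕ → ℝ) (M r : ℕ) [NeZero r] :
    r * ∑ a : ZMod r, (AA α M r a - (∑ m ∈ range M, α m) / r) ^ 2 =
      ∑ b ∈ Ico 1 r, ‖ES α M ((b : ℝ) / r)‖ ^ 2 := by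
  have hr : 0 < r := NeZero.pos r
  have hr0 : (r : ℝ) ≠ 0 := by positivity
  have hp := parseval α M r
  rw [Finset.range_eq_Ico, Finset.sum_eq_sum_Ico_succ_bot hr] at hp
  have h0 : ‖ES α M (((0 : ℕ) : ℝ) / r)‖ ^ 2 = (∑ m ∈ range M, α m) ^ 2 := by
    unfold ES
    simp only [Nat.cast_zero, zero_div, mul_zero, ee_zero, mul_one]
    rw [← Complex.ofReal_sum, Complex.norm_real, Real.norm_eq_abs, sq_abs]
  rw [h0] at hp
  simp only [zero_add] at hp
  have : ∑ a : ZMod r, (AA α M r a - (∑ m ∈ range M, α m) / r) ^ 2 =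
      ∑ a : ZMod r, AA α M r a ^ 2 - (∑ m ∈ range M, α m) ^ 2 / r := by
    simp_rw [sub_sq]
    rw [Finset.sum_add_distrib, Finset.sum_sub_distrib]
    simp_rw [mul_assoc]
    rw [← Finset.mul_sum, ← Finset.sum_mul, sum_AA]
    simp only [Finset.sum_const, Finset.card_univ, ZMod.card, nsmul_eq_mul]
    field_simp; ring
  rw [this, mul_sub, ← hp]
  field_simp; ring

end CarmFrob

end Part3

section Part4

namespace CarmFrob

open Finset

lemma mean_min {ι : Type*} (s : Finset ι) (f : ι → ℝ) (N c : ℝ) (hN : N = s.card) (h0 : 0 < N) :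
    ∑ i ∈ s, (f i - (∑ j ∈ s, f j) / N) ^ 2 ≤ ∑ i ∈ s, (f i - c) ^ 2 := by
  have h1 : ∀ c : ℝ, ∑ i ∈ s, (f i - c) ^ 2 =
      ∑ i ∈ s, f i ^ 2 - 2 * c * ∑ i ∈ s, f i + N * c ^ 2 := by
    intro c
    simp_rw [sub_sq]
    rw [Finset.sum_add_distrib, Finset.sum_sub_distrib, Finset.sum_const, nsmul_eq_mul, hN,
      Finset.mul_sum]
    congr 2
    exact Finset.sum_congr rfl fun i _ => by ring
  rw [h1, h1]
  set S := ∑ i ∈ s, f i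
  have h2 : 0 ≤ N * (c - S / N) ^ 2 := by positivity
  have e : N * (c - S / N) ^ 2 = N * c ^ 2 - 2 * c * S + 2 * (S / N) * S - N * (S / N) ^ 2 := by
    field_simp; ring
  linarith

lemma cov_le {ι : Type*} (s : Finset ι) (f g : ι → ℝ) (N c d : ℝ) (hN : N = s.card) (h0 : 0 < N) :
    (∑ i ∈ s, f i * g i - (∑ i ∈ s, f i) * (∑ i ∈ s, g i) / N) ^ 2 ≤
      (∑ i ∈ s, (f i - c) ^ 2) * ∑ i ∈ s, (g i - d) ^ 2 := by
  have h1 : ∑ i ∈ s, f i * g i - (∑ i ∈ s, f i) * (∑ i ∈ s, g i) / N =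
      ∑ i ∈ s, (f i - (∑ j ∈ s, f j) / N) * (g i - (∑ j ∈ s, g j) / N) := by
    set S := ∑ i ∈ s, f i with hS
    set T := ∑ i ∈ s, g i with hT
    have : ∀ i, (f i - S / N) * (g i - T / N) = f i * g i - f i * (T / N) - (S / N) * g i +
        (S / N) * (T / N) := fun i => by ring
    simp_rw [this]
    rw [Finset.sum_add_distrib, Finset.sum_sub_distrib, Finset.sum_sub_distrib, ← Finset.sum_mul,
      ← Finset.mul_sum, Finset.sum_const, nsmul_eq_mul, ← hN, ← hS, ← hT]
    field_simp; ring
  rw [h1]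
  refine (Finset.sum_mul_sq_le_sq_mul_sq s _ _).trans ?_
  exact mul_le_mul (mean_min s f N c hN h0) (mean_min s g N d hN h0) (by positivity)
    (by positivity)

lemma bil_expand (α β : ℕ → ℝ) (M N r : ℕ) [Fact r.Prime] :
    ∑ m ∈ range M, ∑ n ∈ range N, α m * β n * kk r (m * n) =
      ∑ a ∈ univ.erase (0 : ZMod r), AA α M r a * AA β N r a⁻¹ -
        (∑ a ∈ univ.erase (0 : ZMod r), AA α M r a) *
        (∑ a ∈ univ.erase (0 : ZMod r), AA β N r a⁻¹) / ((r : ℝ) - 1) := by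
  have hinv : ∑ a ∈ univ.erase (0 : ZMod r), AA β N r a⁻¹ =
      ∑ a ∈ univ.erase (0 : ZMod r), AA β N r a := by
    apply Finset.sum_bij' (fun a _ => a⁻¹) (fun a _ => a⁻¹) <;> simp
  have e1 : ∑ a ∈ univ.erase (0 : ZMod r), AA α M r a * AA β N r a⁻¹ =
      ∑ m ∈ range M, ∑ n ∈ range N, α m * β n * (if ((m * n : ℕ) : ZMod r) = 1 then 1 else 0) := by
    unfold AA
    simp_rw [Finset.sum_mul_sum]
    rw [Finset.sum_comm]
    refine Finset.sum_congr rfl fun m _ => ?_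
    rw [Finset.sum_comm]
    refine Finset.sum_congr rfl fun n _ => ?_
    simp only [ite_mul, zero_mul]
    rw [Finset.sum_ite_eq]
    push_cast
    by_cases hm : (m : ZMod r) = 0
    · simp [hm]
    · have : ((m : ZMod r) * n = 1) ↔ ((n : ZMod r) = (m : ZMod r)⁻¹) := by
        constructor
        · intro h; exact eq_inv_of_mul_eq_one_right h
        · intro h; rw [h, mul_inv_cancel₀ hm]
      by_cases h : (n : ZMod r) = (m : ZMod r)⁻¹
      · simp [hm, h]
      · simp [hm, h, this]
  have e2 : ∀ (γ : ℕ → ℝ) (K : ℕ), ∑ a ∈ univ.erase (0 : ZMod r), AA γ K r a =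
      ∑ m ∈ range K, γ m * (if (m : ZMod r) = 0 then 0 else 1) := by
    intro γ K
    unfold AA
    rw [Finset.sum_comm]
    refine Finset.sum_congr rfl fun m _ => ?_
    rw [Finset.sum_ite_eq]
    by_cases hm : (m : ZMod r) = 0 <;> simp [hm]
  rw [hinv, e1, e2, e2, Finset.sum_mul_sum, Finset.sum_div, ← Finset.sum_sub_distrib]
  refine Finset.sum_congr rfl fun m _ => ?_
  rw [Finset.sum_div, ← Finset.sum_sub_distrib]
  refine Finset.sum_congr rfl fun n _ => ?_
  unfold kk
  push_cast
  by_cases hm : (m : ZMod r) = 0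
  · simp [hm]
  · by_cases hn : (n : ZMod r) = 0
    · simp [hn]
    · simp only [hm, hn, mul_eq_zero, or_self, if_false]
      ring

lemma bil_r (α β : ℕ → ℝ) (M N r : ℕ) (hr : r.Prime) :
    (r : ℝ) ^ 2 * (∑ m ∈ range M, ∑ n ∈ range N, α m * β n * kk r (m * n)) ^ 2 ≤
      (∑ b ∈ Ico 1 r, ‖ES α M ((b : ℝ) / r)‖ ^ 2) * ∑ b ∈ Ico 1 r, ‖ES β N ((b : ℝ) / r)‖ ^ 2 := by
  haveI : Fact r.Prime := ⟨hr⟩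
  have hr2 : (2 : ℝ) ≤ r := by exact_mod_cast hr.two_le
  rw [bil_expand, ← variance, ← variance]
  have hc := cov_le (univ.erase (0 : ZMod r)) (fun a => AA α M r a) (fun a => AA β N r a⁻¹)
    ((r : ℝ) - 1) ((∑ m ∈ range M, α m) / r) ((∑ m ∈ range N, β m) / r) (by
      rw [Finset.card_erase_of_mem (Finset.mem_univ _), Finset.card_univ, ZMod.card,
        Nat.cast_sub hr.one_le]; simp) (by linarith)
  have hinv : ∑ a ∈ univ.erase (0 : ZMod r), (AA β N r a⁻¹ - (∑ m ∈ range N, β m) / r) ^ 2 =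
      ∑ a ∈ univ.erase (0 : ZMod r), (AA β N r a - (∑ m ∈ range N, β m) / r) ^ 2 := by
    apply Finset.sum_bij' (fun a _ => a⁻¹) (fun a _ => a⁻¹) <;> simp
  rw [hinv] at hc
  have hsub : ∀ f : ZMod r → ℝ, ∑ a ∈ univ.erase (0 : ZMod r), f a ^ 2 ≤ ∑ a, f a ^ 2 := fun f =>
    Finset.sum_le_sum_of_subset_of_nonneg (Finset.erase_subset _ _) (fun _ _ _ => by positivity)
  have h2 := hc.trans (mul_le_mul (hsub fun a => (AA α M r a - (∑ m ∈ range M, α m) / r))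
    (hsub fun a => (AA β N r a - (∑ m ∈ range N, β m) / r)) (by positivity) (by positivity))
  have h3 := mul_le_mul_of_nonneg_left h2 (sq_nonneg (r : ℝ))
  refine h3.trans (le_of_eq ?_)
  ring

/-- Bilinear large sieve estimate. -/
lemma bilinear (R : ℕ) (hR : 0 < R) (P : Finset ℕ) (hP : ∀ r ∈ P, r.Prime ∧ R < r ∧ r ≤ 2 * R)
    (α β : ℕ → ℝ) (M N : ℕ) :
    ((R : ℝ) * ∑ r ∈ P, |∑ m ∈ range M, ∑ n ∈ range N, α m * β n * kk r (m * n)|) ^ 2 ≤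
      (4 * (2 * M + 4 * (R : ℝ) ^ 2) * ∑ n ∈ range M, α n ^ 2) *
      (4 * (2 * N + 4 * (R : ℝ) ^ 2) * ∑ n ∈ range N, β n ^ 2) := by
  have h1 := ls_primes R hR P (fun r hr => ⟨(hP r hr).1, (hP r hr).2.2⟩) α M
  have h2 := ls_primes R hR P (fun r hr => ⟨(hP r hr).1, (hP r hr).2.2⟩) β N
  set F : ℕ → ℝ := fun r => ∑ b ∈ Ico 1 r, ‖ES α M ((b : ℝ) / r)‖ ^ 2 with hF
  set G : ℕ → ℝ := fun r => ∑ b ∈ Ico 1 r, ‖ES β N ((b : ℝ) / r)‖ ^ 2 with hG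
  have hF0 : ∀ r, 0 ≤ F r := fun r => by positivity
  have hG0 : ∀ r, 0 ≤ G r := fun r => by positivity
  have h3 : (R : ℝ) * ∑ r ∈ P, |∑ m ∈ range M, ∑ n ∈ range N, α m * β n * kk r (m * n)| ≤
      ∑ r ∈ P, Real.sqrt (F r) * Real.sqrt (G r) := by
    rw [Finset.mul_sum]
    refine Finset.sum_le_sum fun r hr => ?_
    have h := bil_r α β M N r (hP r hr).1
    rw [← mul_pow] at h
    rw [← Real.sqrt_mul (hF0 r)]
    apply Real.le_sqrt_of_sq_le
    refine le_trans ?_ h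
    rw [mul_pow, mul_pow, sq_abs]
    have : (R : ℝ) ≤ r := by exact_mod_cast (hP r hr).2.1.le
    gcongr
  have h4 := Finset.sum_mul_sq_le_sq_mul_sq P (fun r => Real.sqrt (F r)) (fun r => Real.sqrt (G r))
  simp_rw [Real.sq_sqrt (hF0 _), Real.sq_sqrt (hG0 _)] at h4
  refine (pow_le_pow_left₀ (by positivity) h3 2).trans (h4.trans ?_)
  refine mul_le_mul h1 h2 (Finset.sum_nonneg fun r _ => hG0 r) (by positivity)

end CarmFrob

end Part4

section Part5

open Finset

namespace CarmFrob

lemma poly_le_two_pow (k : ℕ) : ∃ C : ℕ, 1 ≤ C ∧ ∀ a : ℕ, (a + 1) ^ k ≤ C * 2 ^ a := by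
  have h := (tendsto_pow_const_div_const_pow_of_one_lt k (r := (2:ℝ)) (by norm_num)).bddAbove_range
  obtain ⟨B, hB⟩ := h
  refine ⟨⌈2 * B⌉₊ + 1, by omega, fun a => ?_⟩
  have h1 := hB ⟨a + 1, rfl⟩
  simp only at h1
  have h2 : (0:ℝ) < 2 ^ (a+1) := by positivity
  rw [div_le_iff₀ h2] at h1
  have h3 := Nat.le_ceil (2 * B)
  have h4 : (0:ℝ) < 2 ^ a := by positivity
  have : (((a + 1) ^ k : ℕ) : ℝ) ≤ (((⌈2 * B⌉₊ + 1) * 2 ^ a : ℕ) : ℝ) := by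
    push_cast at h1 ⊢
    rw [pow_succ] at h1
    nlinarith
  exact_mod_cast this

lemma divisor_pow_le (k : ℕ) : ∃ C : ℕ, 1 ≤ C ∧ ∀ n : ℕ, n ≠ 0 → (n.divisors.card) ^ k ≤ C * n := by
  obtain ⟨C, hC1, hC⟩ := poly_le_two_pow k
  refine ⟨C ^ (2 ^ k), Nat.one_le_pow _ _ hC1, fun n hn => ?_⟩
  rw [Nat.card_divisors hn, ← prod_pow]
  have h1 : ∀ p ∈ n.primeFactors, (n.factorization p + 1) ^ k ≤
      (if p < 2 ^ k then C else 1) * p ^ (n.factorization p) := by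
    intro p hp
    have hp2 := (Nat.prime_of_mem_primeFactors hp).two_le
    split_ifs with h
    · exact (hC _).trans (Nat.mul_le_mul_left _ (Nat.pow_le_pow_left hp2 _))
    · rw [one_mul]
      calc (n.factorization p + 1) ^ k ≤ (2 ^ (n.factorization p)) ^ k :=
            Nat.pow_le_pow_left Nat.lt_two_pow_self _
        _ = (2 ^ k) ^ (n.factorization p) := by rw [← pow_mul, ← pow_mul, mul_comm]
        _ ≤ _ := Nat.pow_le_pow_left (by omega) _
  refine (prod_le_prod' h1).trans ?_
  rw [prod_mul_distrib]
  have h2 : ∏ p ∈ n.primeFactors, p ^ (n.factorization p) = n := Nat.prod_factorization_pow_eq_self hn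
  rw [h2]
  refine Nat.mul_le_mul_right _ ?_
  rw [← prod_filter, prod_const]
  refine Nat.pow_le_pow_right hC1 ?_
  calc _ ≤ (range (2 ^ k)).card := card_le_card (fun p hp => by simp at hp ⊢; exact hp.2)
    _ = _ := card_range _

lemma sum_conv (a b : ArithmeticFunction ℝ) (F : ℕ → ℝ) (N : ℕ) :
    ∑ k ∈ Ioc 0 N, (a * b) k * F k =
      ∑ m ∈ Ioc 0 N, ∑ n ∈ Ioc 0 (N / m), a m * b n * F (m * n) := by
  simp_rw [ArithmeticFunction.mul_apply, sum_mul]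
  rw [sum_sigma', sum_sigma']
  refine sum_nbij' (fun x => ⟨x.2.1, x.2.2⟩) (fun y => ⟨y.1 * y.2, (y.1, y.2)⟩) ?_ ?_ ?_ ?_ ?_
  · rintro ⟨k, m, n⟩ h
    simp only [mem_sigma, mem_Ioc, Nat.mem_divisorsAntidiagonal] at h ⊢
    obtain ⟨⟨h1, h2⟩, h3, h4⟩ := h
    subst h3
    have hm : 0 < m := Nat.pos_of_ne_zero (by rintro rfl; simp at h1)
    have hn : 0 < n := Nat.pos_of_ne_zero (by rintro rfl; simp at h1)
    refine ⟨⟨hm, ?_⟩, hn, ?_⟩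
    · nlinarith
    · rw [Nat.le_div_iff_mul_le hm]; linarith
  · rintro ⟨m, n⟩ h
    simp only [mem_sigma, mem_Ioc, Nat.mem_divisorsAntidiagonal] at h ⊢
    obtain ⟨⟨h1, h2⟩, h3, h4⟩ := h
    rw [Nat.le_div_iff_mul_le h1] at h4
    exact ⟨⟨by positivity, by linarith⟩, trivial, by positivity⟩
  · rintro ⟨k, m, n⟩ h
    simp only [mem_sigma, Nat.mem_divisorsAntidiagonal] at h
    obtain ⟨_, h3, _⟩ := h
    subst h3; rfl
  · rintro ⟨m, n⟩ h; rfl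
  · rintro ⟨k, m, n⟩ h
    simp only [mem_sigma, Nat.mem_divisorsAntidiagonal] at h
    obtain ⟨_, h3, _⟩ := h
    subst h3; rfl

/-- truncation of an arithmetic function -/
noncomputable def trunc (f : ArithmeticFunction ℝ) (U : ℕ) : ArithmeticFunction ℝ :=
  ⟨fun n => if n ≤ U then f n else 0, by simp⟩

lemma trunc_apply (f : ArithmeticFunction ℝ) (U n : ℕ) :
    trunc f U n = if n ≤ U then f n else 0 := rfl

lemma sub_trunc_apply (f : ArithmeticFunction ℝ) (U n : ℕ) :
    (f - trunc f U) n = if n ≤ U then 0 else f n := by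
  have : (f - trunc f U) n = f n - trunc f U n := by
    rw [sub_eq_add_neg, ArithmeticFunction.add_apply]; rfl
  rw [this, trunc_apply]; split_ifs <;> simp

open ArithmeticFunction in
lemma vaughan (U V : ℕ) : (vonMangoldt : ArithmeticFunction ℝ) = trunc vonMangoldt U
    + trunc (moebius : ArithmeticFunction ℝ) V * log
    - (trunc (moebius : ArithmeticFunction ℝ) V * trunc vonMangoldt U) * (zeta : ArithmeticFunction ℝ)
    + (((moebius : ArithmeticFunction ℝ) - trunc (moebius : ArithmeticFunction ℝ) V) * (zeta : ArithmeticFunction ℝ)) *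
      (vonMangoldt - trunc vonMangoldt U) := by
  have h1 : vonMangoldt * (zeta : ArithmeticFunction ℝ) = log := vonMangoldt_mul_zeta
  have h2 : (moebius : ArithmeticFunction ℝ) * (zeta : ArithmeticFunction ℝ) = 1 := coe_moebius_mul_coe_zeta
  rw [← h1]
  linear_combination (trunc vonMangoldt U - vonMangoldt) * h2

end CarmFrob

end Part5

section Part6

open Finset

namespace CarmFrob

lemma sum_range_zmod (r : ℕ) [NeZero r] (g : ZMod r → ℝ) :
    ∑ n ∈ range r, g (n : ZMod r) = ∑ a : ZMod r, g a := by
  refine sum_bij' (fun n _ => (n : ZMod r)) (fun a _ => a.val) ?_ ?_ ?_ ?_ ?_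
  · intros; simp
  · intro a _; simpa using ZMod.val_lt a
  · intro n hn; simpa using ZMod.val_cast_of_lt (by simpa using hn)
  · intro a _; simp
  · intros; rfl

noncomputable def kz (r : ℕ) (a : ZMod r) : ℝ :=
  (if a = 1 then 1 else 0) - (if a = 0 then 0 else 1 / ((r : ℝ) - 1))

lemma kk_eq_kz (r j : ℕ) : kk r j = kz r (j : ZMod r) := rfl

lemma sum_ite_ne_zero (r : ℕ) (hr : r.Prime) [NeZero r] :
    ∑ a : ZMod r, (if a = 0 then (0:ℝ) else 1 / ((r : ℝ) - 1)) = 1 := by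
  have hr2 : (2:ℝ) ≤ r := by exact_mod_cast hr.two_le
  have : ∀ a : ZMod r, (if a = 0 then (0:ℝ) else 1 / ((r : ℝ) - 1)) =
      1 / ((r : ℝ) - 1) - (if a = 0 then 1 / ((r : ℝ) - 1) else 0) := by
    intro a; split_ifs <;> simp
  simp_rw [this]
  rw [sum_sub_distrib, sum_ite_eq' univ (0 : ZMod r)]
  simp [ZMod.card]
  have h : (r:ℝ) - 1 ≠ 0 := by linarith
  field_simp

lemma sum_kz (r : ℕ) (hr : r.Prime) [NeZero r] : ∑ a : ZMod r, kz r a = 0 := by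
  unfold kz
  rw [sum_sub_distrib, sum_ite_ne_zero r hr, sum_ite_eq' univ (1 : ZMod r)]
  simp

lemma sum_abs_kz (r : ℕ) (hr : r.Prime) [NeZero r] : ∑ a : ZMod r, |kz r a| ≤ 2 := by
  have hr2 : (2:ℝ) ≤ r := by exact_mod_cast hr.two_le
  have h : ∀ a : ZMod r, |kz r a| ≤ (if a = 1 then 1 else 0) +
      (if a = 0 then (0:ℝ) else 1 / ((r : ℝ) - 1)) := by
    intro a
    unfold kz
    refine (abs_sub _ _).trans (le_of_eq ?_)
    congr 1
    · split_ifs <;> simp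
    · split_ifs
      · simp
      · rw [abs_of_nonneg]; apply one_div_nonneg.2; linarith
  refine (sum_le_sum (fun a _ => h a)).trans ?_
  rw [sum_add_distrib, sum_ite_ne_zero r hr, sum_ite_eq' univ (1 : ZMod r)]
  norm_num

lemma partial_kk (r m : ℕ) (hr : r.Prime) (hm : ¬ r ∣ m) (j : ℕ) :
    |∑ n ∈ range j, kk r (m * n)| ≤ 2 := by
  haveI : Fact r.Prime := ⟨hr⟩
  have hmz : (m : ZMod r) ≠ 0 := by rwa [Ne, ZMod.natCast_eq_zero_iff]
  have hb : ∀ g : ZMod r → ℝ, ∑ a : ZMod r, g ((m : ZMod r) * a) = ∑ a, g a := fun g =>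
    Equiv.sum_comp (Equiv.mulLeft₀ (m : ZMod r) hmz) g
  have h0 : ∑ n ∈ range r, kk r (m * n) = 0 := by
    have := sum_range_zmod r (fun a => kz r ((m : ZMod r) * a))
    rw [hb, sum_kz r hr] at this
    rw [← this]
    refine sum_congr rfl fun n _ => ?_
    rw [kk_eq_kz]; push_cast; rfl
  induction j using Nat.strong_induction_on with
  | _ j ih =>
    rcases lt_or_ge j r with h | h
    · refine (abs_sum_le_sum_abs _ _).trans ?_
      calc ∑ n ∈ range j, |kk r (m * n)| ≤ ∑ n ∈ range r, |kk r (m * n)| :=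
            sum_le_sum_of_subset_of_nonneg (range_mono h.le) (fun _ _ _ => abs_nonneg _)
        _ = ∑ n ∈ range r, |kz r ((m : ZMod r) * (n : ZMod r))| := by
            refine sum_congr rfl fun n _ => ?_
            rw [kk_eq_kz]; push_cast; rfl
        _ ≤ 2 := by
            rw [sum_range_zmod r (fun a => |kz r ((m : ZMod r) * a)|), hb (fun a => |kz r a|)]
            exact sum_abs_kz r hr
    · obtain ⟨i, rfl⟩ := Nat.exists_eq_add_of_le h
      rw [sum_range_add, h0, zero_add]
      have : ∀ x, kk r (m * (r + x)) = kk r (m * x) := by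
        intro x; rw [kk_eq_kz, kk_eq_kz]; push_cast; simp
      simp_rw [this]
      exact ih i (by have := hr.pos; omega)

lemma abel_bound (b k : ℕ → ℝ) (hb : Monotone b) (hb0 : ∀ n, 0 ≤ b n)
    (hk : ∀ j, |∑ n ∈ range j, k n| ≤ 2) (n : ℕ) :
    |∑ i ∈ range (n + 1), b i * k i| ≤ 4 * b n := by
  have h := Finset.sum_range_by_parts b k (n + 1)
  simp only [smul_eq_mul, Nat.add_sub_cancel] at h
  rw [h]
  refine (abs_sub _ _).trans ?_
  rw [abs_mul, abs_of_nonneg (hb0 n)]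
  have h1 : |∑ i ∈ range n, (b (i + 1) - b i) * ∑ j ∈ range (i + 1), k j| ≤
      ∑ i ∈ range n, (b (i+1) - b i) * 2 := by
    refine (abs_sum_le_sum_abs _ _).trans (sum_le_sum fun i _ => ?_)
    rw [abs_mul, abs_of_nonneg (sub_nonneg.2 (hb (Nat.le_succ i)))]
    exact mul_le_mul_of_nonneg_left (hk _) (sub_nonneg.2 (hb (Nat.le_succ i)))
  rw [← sum_mul, sum_range_sub] at h1
  have := mul_le_mul_of_nonneg_left (hk (n+1)) (hb0 n)
  have := hb0 0
  linarith

/-- Type I estimate for a single modulus. -/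
lemma typeI (a : ℕ → ℝ) (b : ℕ → ℝ) (A B : ℝ) (hA0 : 0 ≤ A) (W N r : ℕ) (hr : r.Prime) (hW : W < r)
    (ha : ∀ m ∈ Ioc 0 N, |a m| ≤ A) (haW : ∀ m, W < m → a m = 0)
    (hb : Monotone b) (hb0 : b 0 = 0) (hB : b N ≤ B) :
    |∑ m ∈ Ioc 0 N, ∑ n ∈ Ioc 0 (N / m), a m * b n * kk r (m * n)| ≤ W * A * (4 * B) := by
  have hbn : ∀ n, 0 ≤ b n := fun n => hb0 ▸ hb (Nat.zero_le n)
  have hB0 : 0 ≤ B := (hbn N).trans hB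
  have h1 : ∀ m ∈ Ioc 0 N, |∑ n ∈ Ioc 0 (N / m), a m * b n * kk r (m * n)| ≤
      if m ∈ Ioc 0 W then A * (4 * B) else 0 := by
    intro m hm
    split_ifs with h
    · simp_rw [mul_assoc]
      rw [← mul_sum, abs_mul]
      refine mul_le_mul (ha m hm) ?_ (abs_nonneg _) hA0
      rw [mem_Ioc] at h
      have hrm : ¬ r ∣ m := fun hd => by have := Nat.le_of_dvd h.1 hd; omega
      have := abel_bound b (fun n => kk r (m * n)) hb hbn (partial_kk r m hr hrm) (N / m)
      have e : ∑ n ∈ Ioc 0 (N / m), b n * kk r (m * n) =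
          ∑ n ∈ range (N / m + 1), b n * kk r (m * n) := by
        refine sum_subset (fun n hn => ?_) (fun n hn hn' => ?_)
        · simp at hn ⊢; omega
        · have : n = 0 := by simp at hn hn'; by_contra h; have := hn' (by omega); omega
          subst this; rw [hb0, zero_mul]
      rw [e]
      refine this.trans ?_
      have := hb (Nat.div_le_self N m)
      linarith
    · rw [haW m (by simp at h hm; exact h hm.1)]; simp
  refine (abs_sum_le_sum_abs _ _).trans ((sum_le_sum h1).trans ?_)
  rw [← sum_filter, sum_const, nsmul_eq_mul]
  have hc : ((filter (fun m => m ∈ Ioc 0 W) (Ioc 0 N)).card : ℝ) ≤ W := by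
    have : (filter (fun m => m ∈ Ioc 0 W) (Ioc 0 N)).card ≤ (Ioc 0 W).card :=
      card_le_card (fun m hm => (mem_filter.1 hm).2)
    simpa using (Nat.cast_le (α := ℝ)).2 this
  have : 0 ≤ A * (4 * B) := by positivity
  nlinarith

end CarmFrob

end Part6

section Part7

open Finset

namespace CarmFrob

lemma typeII_cell (R : ℕ) (hR : 0 < R) (P : Finset ℕ) (hP : ∀ r ∈ P, r.Prime ∧ R < r ∧ r ≤ 2 * R)
    (α l : ℕ → ℝ) (A B E : ℝ) (U N : ℕ) (hU : 1 ≤ U) (hE : 0 < E) (hA : 0 ≤ A) (hB : 0 ≤ B)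
    (hα : ∀ m, |α m| ≤ A) (hl : ∀ n, |l n| ≤ A) (hαU : ∀ m ≤ U, α m = 0) (hlU : ∀ n ≤ U, l n = 0)
    (hBB : 1024 * N * A ^ 4 * (N + 2 * R ^ 2 * (N / U) + R ^ 4) ≤ B ^ 2) :
    R * ∑ r ∈ P, |∑ m ∈ range ⌈E⌉₊, ∑ n ∈ range (⌊N / E⌋₊ + 1), α m * l n * kk r (m * n)| ≤ B := by
  by_cases h1 : E ≤ U
  · have : ∀ r ∈ P, |∑ m ∈ range ⌈E⌉₊, ∑ n ∈ range (⌊N / E⌋₊ + 1), α m * l n * kk r (m * n)| = 0 := by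
      intro r _
      rw [abs_eq_zero]
      refine sum_eq_zero fun m hm => sum_eq_zero fun n _ => ?_
      have hc : ⌈E⌉₊ ≤ U := Nat.ceil_le.2 h1
      rw [hαU m (by simp at hm; have := Nat.lt_ceil.2 hm; omega)]; simp
    rw [sum_eq_zero this]; simpa using hB
  by_cases h2 : N / E < U
  · have : ∀ r ∈ P, |∑ m ∈ range ⌈E⌉₊, ∑ n ∈ range (⌊N / E⌋₊ + 1), α m * l n * kk r (m * n)| = 0 := by
      intro r _
      rw [abs_eq_zero]
      refine sum_eq_zero fun m hm => sum_eq_zero fun n hn => ?_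
      have hc : ⌊N / E⌋₊ < U := (Nat.floor_lt (by positivity)).2 h2
      rw [hlU n (by simp at hn; omega)]; simp
    rw [sum_eq_zero this]; simpa using hB
  push Not at h1 h2
  have hU1 : (1:ℝ) ≤ U := by exact_mod_cast hU
  have hb := bilinear R hR P hP α l ⌈E⌉₊ (⌊N / E⌋₊ + 1)
  set M := ⌈E⌉₊
  set N' := ⌊N / E⌋₊ + 1
  have hM : (M:ℝ) ≤ 2 * E := by have := (Nat.ceil_lt_add_one hE.le).le; linarith
  have hN' : (N':ℝ) ≤ 2 * (N / E) := by
    have := Nat.floor_le (a := N / E) (by positivity)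
    simp only [N']; push_cast; linarith
  have hs1 : ∑ n ∈ range M, α n ^ 2 ≤ M * A ^ 2 := by
    calc _ ≤ ∑ n ∈ range M, A ^ 2 := sum_le_sum fun n _ => sq_le_sq' (abs_le.1 (hα n)).1 (abs_le.1 (hα n)).2
      _ = _ := by simp
  have hs2 : ∑ n ∈ range N', l n ^ 2 ≤ N' * A ^ 2 := by
    calc _ ≤ ∑ n ∈ range N', A ^ 2 := sum_le_sum fun n _ => sq_le_sq' (abs_le.1 (hl n)).1 (abs_le.1 (hl n)).2
      _ = _ := by simp
  have hMN : (M:ℝ) * N' ≤ 4 * N := by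
    calc (M:ℝ) * N' ≤ (2 * E) * (2 * (N / E)) := by gcongr
      _ = 4 * N := by field_simp; ring
  have hEU : E ≤ N / U := by
    rw [le_div_iff₀ (by linarith)]; rw [le_div_iff₀ hE] at h2; linarith
  have hNU : (N:ℝ) / E ≤ N / U := by gcongr
  have hmain : (2 * (M:ℝ) + 4 * R ^ 2) * (2 * N' + 4 * R ^ 2) ≤ 16 * (N + 2 * R ^ 2 * (N / U) + R ^ 4) := by
    have : (R:ℝ)^2 * (M + N') ≤ R^2 * (4 * (N / U)) := by gcongr; linarith
    nlinarith
  have hfin : (R * ∑ r ∈ P, |∑ m ∈ range M, ∑ n ∈ range N', α m * l n * kk r (m * n)|) ^ 2 ≤ B ^ 2 := by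
    refine hb.trans (le_trans ?_ hBB)
    calc _ ≤ (4 * (2 * (M:ℝ) + 4 * (R:ℝ) ^ 2) * (M * A ^ 2)) * (4 * (2 * (N':ℝ) + 4 * (R:ℝ) ^ 2) * (N' * A ^ 2)) := by
          gcongr
      _ = 16 * A ^ 4 * (M * N') * ((2 * (M:ℝ) + 4 * R ^ 2) * (2 * N' + 4 * R ^ 2)) := by ring
      _ ≤ 16 * A ^ 4 * (4 * N) * (16 * (N + 2 * R ^ 2 * (N / U) + R ^ 4)) := by gcongr
      _ = _ := by ring
  exact le_of_sq_le_sq hfin hB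

end CarmFrob

end Part7

section Part8

open Finset

namespace CarmFrob

noncomputable def FF (P : Finset ℕ) (k : ℕ) : ℝ := ∑ r ∈ P, kk r k

noncomputable def jj (H m : ℕ) : ℕ := ⌊(H:ℝ) * Real.log m⌋₊

noncomputable def Ej (H j : ℕ) : ℝ := Real.exp ((j + 1) / H)

lemma Ej_pos (H j : ℕ) : 0 < Ej H j := Real.exp_pos _

lemma lt_Ej (H m : ℕ) (hH : 0 < H) (hm : 0 < m) : (m:ℝ) < Ej H (jj H m) := by
  have h := Nat.lt_floor_add_one ((H:ℝ) * Real.log m)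
  have hH' : (0:ℝ) < H := by exact_mod_cast hH
  rw [Ej, ← Real.log_lt_iff_lt_exp (by exact_mod_cast hm), lt_div_iff₀ hH', jj]
  linarith

lemma Ej_le (H m : ℕ) (hH : 0 < H) (hm : 0 < m) : Ej H (jj H m) * (1 - 1 / H) ≤ m := by
  have hH' : (0:ℝ) < H := by exact_mod_cast hH
  have hm' : (1:ℝ) ≤ m := by exact_mod_cast hm
  have h := Nat.floor_le (a := (H:ℝ) * Real.log m) (mul_nonneg hH'.le (Real.log_nonneg hm'))
  have h1 : 1 - 1 / (H:ℝ) ≤ Real.exp (-(1 / H)) := by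
    have := Real.add_one_le_exp (-(1/(H:ℝ))); linarith
  calc Ej H (jj H m) * (1 - 1 / H) ≤ Ej H (jj H m) * Real.exp (-(1 / H)) := by
        have := Ej_pos H (jj H m); gcongr
    _ = Real.exp ((jj H m : ℝ) / H) := by rw [Ej, ← Real.exp_add]; congr 1; ring
    _ ≤ Real.exp (Real.log m) := by
        rw [Real.exp_le_exp, div_le_iff₀ hH', jj]; linarith
    _ = m := Real.exp_log (by linarith)

lemma one_le_Ej (H j : ℕ) : 1 ≤ Ej H j := Real.one_le_exp (by positivity)

lemma typeII_main (R : ℕ) (hR : 0 < R) (P : Finset ℕ) (hP : ∀ r ∈ P, r.Prime ∧ R < r ∧ r ≤ 2 * R)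
    (β l : ℕ → ℝ) (A B : ℝ) (U N H : ℕ) (hU : 1 ≤ U) (hH : 0 < H) (hA : 0 ≤ A) (hB : 0 ≤ B)
    (hβ : ∀ m ∈ Ioc 0 N, |β m| ≤ A) (hl : ∀ n ∈ Ioc 0 N, |l n| ≤ A)
    (hβU : ∀ m ≤ U, β m = 0) (hlU : ∀ n ≤ U, l n = 0)
    (hBB : 1024 * N * A ^ 4 * (N + 2 * R ^ 2 * (N / U) + R ^ 4) ≤ B ^ 2) :
    R * |∑ m ∈ Ioc 0 N, ∑ n ∈ Ioc 0 ⌊N / Ej H (jj H m)⌋₊, β m * l n * FF P (m * n)| ≤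
      (jj H N + 1 : ℕ) * B := by
  set J := jj H N + 1
  set α : ℕ → ℕ → ℝ := fun j m => if m ∈ Ioc 0 N ∧ jj H m = j then β m else 0 with hα
  set l' : ℕ → ℝ := fun n => if n ∈ Ioc 0 N then l n else 0 with hl'
  have hR' : (0:ℝ) < R := by exact_mod_cast hR
  have key : ∑ m ∈ Ioc 0 N, ∑ n ∈ Ioc 0 ⌊N / Ej H (jj H m)⌋₊, β m * l n * FF P (m * n) =
      ∑ j ∈ range J, ∑ r ∈ P, ∑ m ∈ range ⌈Ej H j⌉₊, ∑ n ∈ range (⌊N / Ej H j⌋₊ + 1),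
        α j m * l' n * kk r (m * n) := by
    have hmaps : ∀ m ∈ Ioc 0 N, jj H m ∈ range J := by
      intro m hm
      rw [mem_Ioc] at hm
      simp only [J, mem_range]
      refine Nat.lt_succ_of_le (Nat.floor_le_floor ?_)
      have : (0:ℝ) < m := by exact_mod_cast hm.1
      have : (m:ℝ) ≤ N := by exact_mod_cast hm.2
      gcongr
    rw [← sum_fiberwise_of_maps_to hmaps]
    refine sum_congr rfl fun j _ => ?_
    -- swap sums
    rw [sum_comm]
    have e1 : ∀ m, ∑ r ∈ P, ∑ n ∈ range (⌊N / Ej H j⌋₊ + 1), α j m * l' n * kk r (m * n) =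
        ∑ n ∈ range (⌊N / Ej H j⌋₊ + 1), α j m * l' n * FF P (m * n) := by
      intro m
      rw [sum_comm]
      refine sum_congr rfl fun n _ => ?_
      rw [FF, mul_sum]
    simp_rw [e1]
    have e2 : ∀ m ∈ Ioc 0 N, jj H m = j → ∑ n ∈ Ioc 0 ⌊N / Ej H (jj H m)⌋₊, β m * l n * FF P (m * n) =
        ∑ n ∈ range (⌊N / Ej H j⌋₊ + 1), α j m * l' n * FF P (m * n) := by
      intro m hm hj
      rw [hj]
      have ha : α j m = β m := by simp only [hα]; rw [if_pos ⟨hm, hj⟩]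
      rw [ha]
      have hle : ⌊N / Ej H j⌋₊ ≤ N := by
        have : (N:ℝ) / Ej H j ≤ N := div_le_self (by positivity) (one_le_Ej H j)
        calc ⌊N / Ej H j⌋₊ ≤ ⌊(N:ℝ)⌋₊ := Nat.floor_le_floor this
          _ = N := Nat.floor_natCast N
      calc _ = ∑ n ∈ Ioc 0 ⌊N / Ej H j⌋₊, β m * l' n * FF P (m * n) := by
            refine sum_congr rfl fun n hn => ?_
            have : n ∈ Ioc 0 N := by rw [mem_Ioc] at hn ⊢; omega
            simp only [hl']; rw [if_pos this]
        _ = _ := by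
            refine sum_subset (fun n hn => ?_) (fun n hn hn' => ?_)
            · simp only [mem_Ioc, mem_range] at hn ⊢; omega
            · have : n = 0 := by simp only [mem_Ioc, mem_range] at hn hn'; omega
              subst this; simp [hl']
    rw [sum_congr rfl (fun m hm => e2 m (mem_filter.1 hm).1 (mem_filter.1 hm).2)]
    refine sum_subset_zero_on_sdiff ?_ ?_ (fun _ _ => rfl)
    · intro m hm
      rw [mem_filter] at hm
      rw [mem_range, Nat.lt_ceil, ← hm.2]
      exact lt_Ej H m hH (mem_Ioc.1 hm.1).1
    · intro m hm
      rw [mem_sdiff] at hm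
      have : α j m = 0 := by
        simp only [hα]; rw [if_neg]; intro h; exact hm.2 (mem_filter.2 h)
      simp [this]
  rw [key]
  have hcell : ∀ j ∈ range J, R * ∑ r ∈ P, |∑ m ∈ range ⌈Ej H j⌉₊, ∑ n ∈ range (⌊N / Ej H j⌋₊ + 1),
        α j m * l' n * kk r (m * n)| ≤ B := by
    intro j _
    refine typeII_cell R hR P hP (α j) l' A B (Ej H j) U N hU (Ej_pos H j) hA hB ?_ ?_ ?_ ?_ hBB
    · intro m; simp only [hα]; split_ifs with h
      · exact hβ m h.1
      · simpa using hA
    · intro m; simp only [hl']; split_ifs with h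
      · exact hl m h
      · simpa using hA
    · intro m hm; simp only [hα]; rw [hβU m hm]; simp
    · intro m hm; simp only [hl']; rw [hlU m hm]; simp
  calc R * |∑ j ∈ range J, ∑ r ∈ P, ∑ m ∈ range ⌈Ej H j⌉₊, ∑ n ∈ range (⌊N / Ej H j⌋₊ + 1),
        α j m * l' n * kk r (m * n)|
      ≤ R * ∑ j ∈ range J, ∑ r ∈ P, |∑ m ∈ range ⌈Ej H j⌉₊, ∑ n ∈ range (⌊N / Ej H j⌋₊ + 1),
        α j m * l' n * kk r (m * n)| := by
        refine mul_le_mul_of_nonneg_left ?_ hR'.le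
        exact (abs_sum_le_sum_abs _ _).trans (sum_le_sum fun j _ => abs_sum_le_sum_abs _ _)
    _ = ∑ j ∈ range J, R * ∑ r ∈ P, |∑ m ∈ range ⌈Ej H j⌉₊, ∑ n ∈ range (⌊N / Ej H j⌋₊ + 1),
        α j m * l' n * kk r (m * n)| := by rw [mul_sum]
    _ ≤ ∑ j ∈ range J, B := sum_le_sum hcell
    _ = J * B := by simp

lemma zeta_mul_zeta_apply (k : ℕ) : ((ArithmeticFunction.zeta : ArithmeticFunction ℝ) *
    (ArithmeticFunction.zeta : ArithmeticFunction ℝ)) k = k.divisors.card := by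
  rw [ArithmeticFunction.coe_mul_zeta_apply]
  rw [sum_congr rfl (fun i hi => ?_), sum_const, nsmul_eq_mul, mul_one]
  have : i ≠ 0 := (Nat.pos_of_mem_divisors hi).ne'
  simp [ArithmeticFunction.zeta_apply, this]

lemma typeII_boundary (P : Finset ℕ)
    (β l : ℕ → ℝ) (A D G : ℝ) (N H : ℕ) (hH : 0 < H) (hA : 0 ≤ A) (hG : 0 ≤ G) (hD : 0 ≤ D)
    (hβ : ∀ m ∈ Ioc 0 N, |β m| ≤ A) (hl : ∀ n ∈ Ioc 0 N, |l n| ≤ A)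
    (hF : ∀ k ∈ Ioc 0 N, (N:ℝ) * (1 - 1 / H) < k → |FF P k| ≤ G)
    (hd : ∀ k ∈ Ioc 0 N, (k.divisors.card : ℝ) ≤ D) :
    |∑ m ∈ Ioc 0 N, ∑ n ∈ Ioc ⌊N / Ej H (jj H m)⌋₊ (N / m), β m * l n * FF P (m * n)| ≤
      (N / H + 1) * (D * (A ^ 2 * G)) := by
  set I : ℕ → ℝ := fun k => if (N:ℝ) * (1 - 1 / H) < k then 1 else 0 with hI
  have h1 : ∀ m ∈ Ioc 0 N, |∑ n ∈ Ioc ⌊N / Ej H (jj H m)⌋₊ (N / m), β m * l n * FF P (m * n)| ≤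
      ∑ n ∈ Ioc 0 (N / m), (ArithmeticFunction.zeta : ArithmeticFunction ℝ) m *
        (ArithmeticFunction.zeta : ArithmeticFunction ℝ) n * (I (m * n) * (A ^ 2 * G)) := by
    intro m hm
    have hm' := mem_Ioc.1 hm
    have hmne : m ≠ 0 := by omega
    refine (abs_sum_le_sum_abs _ _).trans ?_
    refine (sum_le_sum (f := fun n => |β m * l n * FF P (m * n)|) (g := fun n =>
      (ArithmeticFunction.zeta : ArithmeticFunction ℝ) m *
        (ArithmeticFunction.zeta : ArithmeticFunction ℝ) n * (I (m * n) * (A ^ 2 * G))) ?_).trans ?_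
    · intro n hn
      rw [mem_Ioc] at hn
      have hn0 : n ≠ 0 := by omega
      have hmn : m * n ≤ N := by
        have := (Nat.le_div_iff_mul_le hm'.1).1 hn.2; linarith
      have hmnI : m * n ∈ Ioc 0 N := mem_Ioc.2 ⟨by positivity, hmn⟩
      have hnN : n ∈ Ioc 0 N := mem_Ioc.2 ⟨by omega, hn.2.trans (Nat.div_le_self _ _)⟩
      have hE := Ej_pos H (jj H m)
      have hgt : (N:ℝ) * (1 - 1 / H) < (m * n : ℕ) := by
        have h2 : (N:ℝ) / Ej H (jj H m) < n := (Nat.floor_lt (by positivity)).1 hn.1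
        rw [div_lt_iff₀ hE] at h2
        have h3 := Ej_le H m hH hm'.1
        have hn1 : (0:ℝ) < n := by exact_mod_cast Nat.pos_of_ne_zero hn0
        by_cases hH1 : H = 1
        · subst hH1
          have : (0:ℝ) < m * n := by have : (0:ℝ) < m := by exact_mod_cast hm'.1
                                     positivity
          simpa using this
        have hH2 : (2:ℝ) ≤ H := by exact_mod_cast (by omega : 2 ≤ H)
        have h4 : 0 < 1 - 1 / (H:ℝ) := by
          rw [sub_pos, div_lt_one (by linarith)]; linarith
        push_cast
        calc (N:ℝ) * (1 - 1 / H) < n * Ej H (jj H m) * (1 - 1 / H) := by gcongr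
          _ = n * (Ej H (jj H m) * (1 - 1 / H)) := by ring
          _ ≤ n * m := by gcongr
          _ = m * n := by ring
      have hIv : I (m * n) = 1 := by simp only [hI]; rw [if_pos hgt]
      rw [hIv, abs_mul, abs_mul]
      simp only [ArithmeticFunction.natCoe_apply, ArithmeticFunction.zeta_apply, hmne, hn0, if_false]
      push_cast
      calc |β m| * |l n| * |FF P (m * n)| ≤ A * A * G := by
            gcongr
            · exact hβ m hm
            · exact hl n hnN
            · exact hF _ hmnI hgt
        _ = _ := by ring
    · refine sum_le_sum_of_subset_of_nonneg ?_ ?_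
      · intro n hn; rw [mem_Ioc] at hn ⊢; omega
      · intro n _ _
        have : 0 ≤ I (m * n) := by simp only [hI]; split_ifs <;> norm_num
        have : ∀ k, 0 ≤ (ArithmeticFunction.zeta : ArithmeticFunction ℝ) k := by
          intro k; rw [ArithmeticFunction.natCoe_apply]; positivity
        have h8 := this m; have h9 := this n
        positivity
  refine (abs_sum_le_sum_abs _ _).trans ((sum_le_sum h1).trans ?_)
  rw [← sum_conv _ _ (fun k => I k * (A ^ 2 * G))]
  have h2 : ∀ k ∈ Ioc 0 N, ((ArithmeticFunction.zeta : ArithmeticFunction ℝ) *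
    (ArithmeticFunction.zeta : ArithmeticFunction ℝ)) k * (I k * (A ^ 2 * G)) ≤
      I k * (D * (A ^ 2 * G)) := by
    intro k hk
    rw [zeta_mul_zeta_apply]
    have : 0 ≤ I k := by simp only [hI]; split_ifs <;> norm_num
    have := hd k hk
    calc (k.divisors.card : ℝ) * (I k * (A ^ 2 * G)) ≤ D * (I k * (A ^ 2 * G)) := by gcongr
      _ = _ := by ring
  refine (sum_le_sum h2).trans ?_
  rw [← sum_mul]
  refine mul_le_mul_of_nonneg_right ?_ (by positivity)
  simp only [hI]
  rw [← sum_filter, sum_const, nsmul_eq_mul, mul_one]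
  have hsub : filter (fun k : ℕ => (N:ℝ) * (1 - 1 / H) < k) (Ioc 0 N) ⊆ Ioc (N - (N / H + 1)) N := by
    intro k hk
    rw [mem_filter, mem_Ioc] at hk
    rw [mem_Ioc]
    refine ⟨?_, hk.1.2⟩
    by_contra hcon
    push Not at hcon
    have h5 : k + (N / H + 1) ≤ N := by omega
    have h6 : (k:ℝ) + ((N / H : ℕ) + 1) ≤ N := by exact_mod_cast h5
    have h7 : (N:ℝ) / H < (N / H : ℕ) + 1 := by
      have := Nat.lt_div_mul_add (a := N) hH
      have h8 : N < (N / H + 1) * H := by nlinarith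
      rw [div_lt_iff₀ (by exact_mod_cast hH)]
      exact_mod_cast h8
    have h9 : (N:ℝ) * (1 - 1 / H) = N - N / H := by ring
    linarith [hk.2]
  have hc := card_le_card hsub
  rw [Nat.card_Ioc] at hc
  have : (#(filter (fun k : ℕ => (N:ℝ) * (1 - 1 / H) < k) (Ioc 0 N)) : ℝ) ≤ (N / H : ℕ) + 1 := by
    have : #(filter (fun k : ℕ => (N:ℝ) * (1 - 1 / H) < k) (Ioc 0 N)) ≤ N / H + 1 := by
      generalize N / H = q at hc ⊢
      omega
    exact_mod_cast this
  refine this.trans ?_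
  gcongr
  exact Nat.cast_div_le

lemma typeII (R : ℕ) (hR : 0 < R) (P : Finset ℕ) (hP : ∀ r ∈ P, r.Prime ∧ R < r ∧ r ≤ 2 * R)
    (β l : ℕ → ℝ) (A B D G : ℝ) (U N H : ℕ) (hU : 1 ≤ U) (hH : 0 < H) (hA : 0 ≤ A) (hB : 0 ≤ B)
    (hG : 0 ≤ G) (hD : 0 ≤ D)
    (hβ : ∀ m ∈ Ioc 0 N, |β m| ≤ A) (hl : ∀ n ∈ Ioc 0 N, |l n| ≤ A)
    (hβU : ∀ m ≤ U, β m = 0) (hlU : ∀ n ≤ U, l n = 0)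
    (hBB : 1024 * N * A ^ 4 * (N + 2 * R ^ 2 * (N / U) + R ^ 4) ≤ B ^ 2)
    (hF : ∀ k ∈ Ioc 0 N, (N:ℝ) * (1 - 1 / H) < k → |FF P k| ≤ G)
    (hd : ∀ k ∈ Ioc 0 N, (k.divisors.card : ℝ) ≤ D) :
    |∑ m ∈ Ioc 0 N, ∑ n ∈ Ioc 0 (N / m), β m * l n * FF P (m * n)| ≤
      (jj H N + 1 : ℕ) * B / R + (N / H + 1) * (D * (A ^ 2 * G)) := by
  have hR' : (0:ℝ) < R := by exact_mod_cast hR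
  have h1 := typeII_main R hR P hP β l A B U N H hU hH hA hB hβ hl hβU hlU hBB
  have h2 := typeII_boundary P β l A D G N H hH hA hG hD hβ hl hF hd
  have h3 : ∑ m ∈ Ioc 0 N, ∑ n ∈ Ioc 0 (N / m), β m * l n * FF P (m * n) =
      ∑ m ∈ Ioc 0 N, ∑ n ∈ Ioc 0 ⌊N / Ej H (jj H m)⌋₊, β m * l n * FF P (m * n) +
      ∑ m ∈ Ioc 0 N, ∑ n ∈ Ioc ⌊N / Ej H (jj H m)⌋₊ (N / m), β m * l n * FF P (m * n) := by
    rw [← sum_add_distrib]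
    refine sum_congr rfl fun m hm => ?_
    rw [mem_Ioc] at hm
    rw [← sum_Ioc_consecutive _ (Nat.zero_le _)]
    have hm0 : (0:ℝ) < m := by exact_mod_cast hm.1
    have := (lt_Ej H m hH hm.1).le
    rw [show N / m = ⌊(N:ℝ) / m⌋₊ by rw [Nat.floor_div_natCast, Nat.floor_natCast]]
    refine Nat.floor_le_floor ?_
    gcongr
  rw [h3]
  refine (abs_add_le _ _).trans (add_le_add ?_ h2)
  rw [le_div_iff₀ hR']
  linarith

end CarmFrob

end Part8

section Part9

open Finset

namespace CarmFrob

lemma card_P_le (R : ℕ) (P : Finset ℕ) (hP : ∀ r ∈ P, r.Prime ∧ R < r ∧ r ≤ 2 * R) : (#P : ℝ) ≤ R := by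
  have : #P ≤ #(Ioc R (2 * R)) := card_le_card fun r hr => by
    have := hP r hr; rw [mem_Ioc]; exact this.2
  rw [Nat.card_Ioc] at this
  exact_mod_cast (by omega : #P ≤ R)

lemma sum_inv_le (R : ℕ) (hR : 0 < R) (P : Finset ℕ) (hP : ∀ r ∈ P, r.Prime ∧ R < r ∧ r ≤ 2 * R) :
    ∑ r ∈ P, 1 / ((r:ℝ) - 1) ≤ 1 := by
  have hR' : (0:ℝ) < R := by exact_mod_cast hR
  calc ∑ r ∈ P, 1 / ((r:ℝ) - 1) ≤ ∑ r ∈ P, 1 / (R:ℝ) := by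
        refine sum_le_sum fun r hr => ?_
        have : (R:ℝ) + 1 ≤ r := by exact_mod_cast (hP r hr).2.1
        apply one_div_le_one_div_of_le hR'; linarith
    _ = #P / R := by rw [sum_const, nsmul_eq_mul]; ring
    _ ≤ 1 := by rw [div_le_one hR']; exact card_P_le R P hP

lemma abs_kk_le (r k : ℕ) (hr : r.Prime) :
    |kk r k| ≤ (if (k : ZMod r) = 1 then 1 else 0) + 1 / ((r:ℝ) - 1) := by
  have hr2 : (2:ℝ) ≤ r := by exact_mod_cast hr.two_le
  have h0 : 0 ≤ 1 / ((r:ℝ) - 1) := one_div_nonneg.2 (by linarith)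
  unfold kk
  refine (abs_sub _ _).trans (add_le_add (le_of_eq ?_) ?_)
  · split_ifs <;> simp
  · split_ifs
    · simpa using h0
    · rw [abs_of_nonneg h0]

lemma abs_FF_le (R : ℕ) (hR : 0 < R) (P : Finset ℕ) (hP : ∀ r ∈ P, r.Prime ∧ R < r ∧ r ≤ 2 * R) (k : ℕ) :
    |FF P k| ≤ #(P.filter fun r : ℕ => (k : ZMod r) = 1) + 1 := by
  unfold FF
  refine (abs_sum_le_sum_abs _ _).trans ((sum_le_sum fun r hr => abs_kk_le r k (hP r hr).1).trans ?_)
  rw [sum_add_distrib]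
  refine add_le_add ?_ (sum_inv_le R hR P hP)
  rw [sum_ite, sum_const, sum_const_zero]; simp

lemma card_dvd_le (P : Finset ℕ) (k : ℕ) (hk : 1 < k) :
    #(P.filter fun r : ℕ => (k : ZMod r) = 1) ≤ #(k - 1).divisors := by
  refine card_le_card fun r hr => ?_
  rw [mem_filter] at hr
  rw [Nat.mem_divisors]
  refine ⟨?_, by omega⟩
  rw [← ZMod.natCast_eq_zero_iff, Nat.cast_sub hk.le, hr.2]; simp

lemma ite_sum_div_le (a b : ArithmeticFunction ℝ) (A B : ℝ) (m : ℕ) (hA : 0 ≤ A)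
    (ha : ∀ d ∈ m.divisors, |a d| ≤ A) (hb : ∀ d ∈ m.divisors, |b d| ≤ B) :
    |(a * b) m| ≤ #m.divisors * (A * B) := by
  rw [ArithmeticFunction.mul_apply]
  refine (abs_sum_le_sum_abs _ _).trans ?_
  calc _ ≤ ∑ x ∈ m.divisorsAntidiagonal, A * B := by
        refine sum_le_sum fun x hx => ?_
        rw [abs_mul]
        exact mul_le_mul (ha _ (Nat.fst_mem_divisors_of_mem_antidiagonal hx))
          (hb _ (Nat.snd_mem_divisors_of_mem_antidiagonal hx)) (abs_nonneg _) hA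
    _ = _ := by
        rw [sum_const, nsmul_eq_mul]
        congr 2
        rw [← Nat.map_div_right_divisors, card_map]

open ArithmeticFunction in
lemma S_bound (T τ R N : ℕ) (hT : 1200 ≤ T) (hτ : 1 ≤ τ) (hN : N = T ^ 900 * τ ^ 3)
    (hR1 : T ^ 300 * τ ≤ R) (hR2 : R ≤ 4 * (T ^ 300 * τ))
    (P : Finset ℕ) (hP : ∀ r ∈ P, r.Prime ∧ R < r ∧ r ≤ 2 * R)
    (hd : ∀ k ∈ Ioc 0 N, (#k.divisors : ℝ) ≤ T) (hlog : Real.log N ≤ T) :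
    |∑ n ∈ Ioc 0 N, vonMangoldt n * FF P n| ≤ (T:ℝ) ^ 885 * (τ:ℝ) ^ 3 := by
  have hT0 : (1200:ℝ) ≤ T := by exact_mod_cast hT
  have hTpos : (0:ℝ) < T := by linarith
  have hT1 : (1:ℝ) ≤ T := by linarith
  have hτ1 : (1:ℝ) ≤ τ := by exact_mod_cast hτ
  have hRpos : 0 < R := lt_of_lt_of_le (by positivity) hR1
  have hRr : (0:ℝ) < R := by exact_mod_cast hRpos
  have hR1r : (T:ℝ) ^ 300 * τ ≤ R := by exact_mod_cast hR1
  have hR2r : (R:ℝ) ≤ 4 * ((T:ℝ) ^ 300 * τ) := by exact_mod_cast hR2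
  have hNr : (N:ℝ) = (T:ℝ) ^ 900 * (τ:ℝ) ^ 3 := by rw [hN]; push_cast; ring
  have hcardP := card_P_le R P hP
  set U := T ^ 100 with hU
  have hUr : (U:ℝ) = (T:ℝ) ^ 100 := by rw [hU]; push_cast; rfl
  have hU1 : 1 ≤ U := Nat.one_le_pow _ _ (by omega)
  have hUU : U * U < R := by
    refine lt_of_lt_of_le ?_ hR1
    calc U * U = T ^ 200 := by rw [hU]; ring
      _ < T ^ 300 := Nat.pow_lt_pow_right (by omega) (by norm_num)
      _ ≤ T ^ 300 * τ := Nat.le_mul_of_pos_right _ (by omega)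
  have hU' : U < R := lt_of_le_of_lt (Nat.le_mul_of_pos_left U (by omega)) hUU
  have hUN : U ≤ N := by
    rw [hN, hU]
    calc T ^ 100 ≤ T ^ 900 := Nat.pow_le_pow_right (by omega) (by norm_num)
      _ ≤ T ^ 900 * τ ^ 3 := Nat.le_mul_of_pos_right _ (by positivity)
  have hN2 : 2 ≤ N := le_trans (le_trans (by omega : 2 ≤ T) (Nat.le_self_pow (by norm_num) T)) hUN
  have hΛ : ∀ n ∈ Ioc 0 N, |vonMangoldt n| ≤ T := by
    intro n hn
    rw [abs_of_nonneg vonMangoldt_nonneg]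
    refine vonMangoldt_le_log.trans (le_trans ?_ hlog)
    rw [mem_Ioc] at hn
    have h1 : (0:ℝ) < n := by exact_mod_cast hn.1
    have h2 : (n:ℝ) ≤ N := by exact_mod_cast hn.2
    exact Real.log_le_log h1 h2
  have hμ : ∀ n, |(moebius : ArithmeticFunction ℝ) n| ≤ 1 := by
    intro n; rw [intCoe_apply, ← Int.cast_abs]; exact_mod_cast abs_moebius_le_one
  set M1 := trunc (moebius : ArithmeticFunction ℝ) U with hM1
  set L1 := trunc vonMangoldt U with hL1
  have hM1b : ∀ n, |M1 n| ≤ 1 := by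
    intro n; rw [hM1, trunc_apply]; split_ifs
    · exact hμ n
    · simp
  have hL1b : ∀ n ∈ Ioc 0 N, |L1 n| ≤ T := by
    intro n hn; rw [hL1, trunc_apply]; split_ifs
    · exact hΛ n hn
    · simp
  have hdivI : ∀ m ∈ Ioc 0 N, ∀ d ∈ m.divisors, d ∈ Ioc 0 N := by
    intro m hm d hd
    rw [mem_Ioc] at hm ⊢
    exact ⟨Nat.pos_of_mem_divisors hd, (Nat.divisor_le hd).trans hm.2⟩
  -- decomposition
  have hdec : ∑ n ∈ Ioc 0 N, vonMangoldt n * FF P n =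
      ∑ n ∈ Ioc 0 N, L1 n * FF P n + ∑ n ∈ Ioc 0 N, (M1 * log) n * FF P n
      - ∑ n ∈ Ioc 0 N, ((M1 * L1) * (zeta : ArithmeticFunction ℝ)) n * FF P n
      + ∑ n ∈ Ioc 0 N, ((((moebius : ArithmeticFunction ℝ) - M1) * (zeta : ArithmeticFunction ℝ)) *
        (vonMangoldt - L1)) n * FF P n := by
    rw [← sum_add_distrib, ← sum_sub_distrib, ← sum_add_distrib]
    refine sum_congr rfl fun n _ => ?_
    have hv := congrArg (fun g : ArithmeticFunction ℝ => g n) (vaughan U U)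
    simp only [sub_eq_add_neg, ArithmeticFunction.add_apply] at hv
    have hneg : ∀ g : ArithmeticFunction ℝ, (-g) n = - g n := fun g => rfl
    rw [hneg] at hv
    rw [hv]
    simp only [sub_eq_add_neg]
    ring
  -- T0
  have h0 : |∑ n ∈ Ioc 0 N, L1 n * FF P n| ≤ 8 * (T:ℝ) ^ 402 * τ := by
    have hFtriv : ∀ k, |FF P k| ≤ R + 1 := fun k => (abs_FF_le R hRpos P hP k).trans (by
      have : (#(P.filter fun r : ℕ => (k : ZMod r) = 1) : ℝ) ≤ #P := by exact_mod_cast card_filter_le _ _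
      linarith)
    have : ∀ n ∈ Ioc 0 N, |L1 n * FF P n| ≤ if n ∈ Ioc 0 U then (T:ℝ) * (R + 1) else 0 := by
      intro n hn
      split_ifs with h
      · rw [abs_mul]
        exact mul_le_mul (hL1b n hn) (hFtriv n) (abs_nonneg _) hTpos.le
      · have : ¬ n ≤ U := by rw [mem_Ioc] at h hn; omega
        rw [hL1, trunc_apply, if_neg this]; simp
    refine (abs_sum_le_sum_abs _ _).trans ((sum_le_sum this).trans ?_)
    rw [← sum_filter, sum_const, nsmul_eq_mul]
    have hc : (#(filter (fun m => m ∈ Ioc 0 U) (Ioc 0 N)) : ℝ) ≤ U := by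
      have : #(filter (fun m => m ∈ Ioc 0 U) (Ioc 0 N)) ≤ #(Ioc 0 U) :=
        card_le_card (fun m hm => (mem_filter.1 hm).2)
      simpa using (Nat.cast_le (α := ℝ)).2 this
    have hR1' : (1:ℝ) ≤ R := by exact_mod_cast hRpos
    calc _ ≤ (U:ℝ) * (T * (R + 1)) := by gcongr
      _ ≤ (T:ℝ) ^ 100 * (T * (2 * (4 * ((T:ℝ) ^ 300 * τ)))) := by rw [hUr]; gcongr; linarith
      _ = 8 * (T:ℝ) ^ 401 * τ := by ring
      _ ≤ _ := by gcongr <;> first | exact hT1 | norm_num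
  -- generic type I
  have hI : ∀ (a b : ArithmeticFunction ℝ) (A B : ℝ) (W : ℕ), 0 ≤ A → W < R →
      (∀ m ∈ Ioc 0 N, |a m| ≤ A) → (∀ m, W < m → a m = 0) → Monotone b → b N ≤ B →
      |∑ n ∈ Ioc 0 N, (a * b) n * FF P n| ≤ R * (W * A * (4 * B)) := by
    intro a b A B W hA hW ha haW hb hB
    have hB0 : 0 ≤ B := le_trans (by have := hb (Nat.zero_le N); simpa using this) hB
    rw [sum_conv]
    have e : ∑ m ∈ Ioc 0 N, ∑ n ∈ Ioc 0 (N / m), a m * b n * FF P (m * n) =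
        ∑ r ∈ P, ∑ m ∈ Ioc 0 N, ∑ n ∈ Ioc 0 (N / m), a m * b n * kk r (m * n) := by
      rw [sum_comm]
      refine sum_congr rfl fun m _ => ?_
      rw [sum_comm]
      refine sum_congr rfl fun n _ => ?_
      rw [FF, mul_sum]
    rw [e]
    refine (abs_sum_le_sum_abs _ _).trans ?_
    calc _ ≤ ∑ r ∈ P, (W * A * (4 * B)) := by
          refine sum_le_sum fun r hr => ?_
          exact typeI a b A B hA W N r (hP r hr).1 (hW.trans (hP r hr).2.1) ha haW hb (by simp) hB
      _ = #P * (W * A * (4 * B)) := by simp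
      _ ≤ _ := by gcongr
  have h1 : |∑ n ∈ Ioc 0 N, (M1 * log) n * FF P n| ≤ 16 * (T:ℝ) ^ 402 * τ := by
    refine (hI M1 log 1 T U (by norm_num) hU' (fun m _ => hM1b m) ?_ ?_ ?_).trans ?_
    · intro m hm; rw [hM1, trunc_apply, if_neg (by omega)]
    · intro m n hmn
      rw [log_apply, log_apply]
      rcases Nat.eq_zero_or_pos m with rfl | hm
      · simpa using Real.log_natCast_nonneg n
      · exact Real.log_le_log (by exact_mod_cast hm) (by exact_mod_cast hmn)
    · rw [log_apply]; exact hlog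
    · rw [hUr]
      calc (R:ℝ) * ((T:ℝ) ^ 100 * 1 * (4 * T)) ≤ (4 * ((T:ℝ) ^ 300 * τ)) * ((T:ℝ) ^ 100 * 1 * (4 * T)) := by gcongr
        _ = 16 * (T:ℝ) ^ 401 * τ := by ring
        _ ≤ _ := by gcongr <;> first | exact hT1 | norm_num
  have h2 : |∑ n ∈ Ioc 0 N, ((M1 * L1) * (zeta : ArithmeticFunction ℝ)) n * FF P n| ≤ 16 * (T:ℝ) ^ 502 * τ := by
    refine (hI (M1 * L1) zeta (T ^ 2) 1 (U * U) (by positivity) hUU ?_ ?_ ?_ ?_).trans ?_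
    · intro m hm
      refine (ite_sum_div_le M1 L1 1 T m (by norm_num) (fun d _ => hM1b d)
        (fun d hd => hL1b d (hdivI m hm d hd))).trans ?_
      have := hd m hm
      calc (#m.divisors : ℝ) * (1 * T) ≤ T * (1 * T) := by gcongr
        _ = _ := by ring
    · intro m hm
      rw [mul_apply]
      refine sum_eq_zero fun x hx => ?_
      rw [Nat.mem_divisorsAntidiagonal] at hx
      by_cases hx1 : x.1 ≤ U
      · have hx2 : ¬ x.2 ≤ U := fun h => by
          have := Nat.mul_le_mul hx1 h; omega
        rw [hL1, trunc_apply _ _ x.2, if_neg hx2, mul_zero]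
      · rw [hM1, trunc_apply _ _ x.1, if_neg hx1, zero_mul]
    · intro m n hmn
      simp only [natCoe_apply, zeta_apply]
      split_ifs <;> first | omega | simp
    · simp only [natCoe_apply, zeta_apply]; split_ifs <;> simp
    · push_cast
      rw [hUr]
      calc (R:ℝ) * ((T:ℝ) ^ 100 * (T:ℝ) ^ 100 * T ^ 2 * (4 * 1)) ≤ (4 * ((T:ℝ) ^ 300 * τ)) * ((T:ℝ) ^ 100 * (T:ℝ) ^ 100 * T ^ 2 * (4 * 1)) := by gcongr
        _ = 16 * (T:ℝ) ^ 502 * τ := by ring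
        _ ≤ _ := le_refl _
  have h3 : |∑ n ∈ Ioc 0 N, ((((moebius : ArithmeticFunction ℝ) - M1) * (zeta : ArithmeticFunction ℝ)) *
        (vonMangoldt - L1)) n * FF P n| ≤ 1088 * (T:ℝ) ^ 873 * τ ^ 3 + 4 * (T:ℝ) ^ 884 * τ ^ 3 := by
    rw [sum_conv]
    have hH : 0 < T ^ 20 := by positivity
    have hHr : (((T ^ 20 : ℕ)) : ℝ) = (T:ℝ) ^ 20 := by push_cast; rfl
    have hμ2 : ∀ n, ((moebius : ArithmeticFunction ℝ) - M1) n = if n ≤ U then 0 else (moebius : ArithmeticFunction ℝ) n :=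
      fun n => sub_trunc_apply _ U n
    have hL2 : ∀ n, (vonMangoldt - L1) n = if n ≤ U then 0 else vonMangoldt n := fun n => sub_trunc_apply _ U n
    have := typeII R hRpos P hP (fun m => (((moebius : ArithmeticFunction ℝ) - M1) * (zeta : ArithmeticFunction ℝ)) m)
      (fun n => (vonMangoldt - L1) n) T (544 * (T:ℝ) ^ 1152 * τ ^ 4) T (2 * T) U N (T ^ 20) hU1 hH hTpos.le (by positivity)
      (by positivity) hTpos.le ?_ ?_ ?_ ?_ ?_ ?_ hd
    · refine this.trans (add_le_add ?_ ?_)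
      · rw [div_le_iff₀ hRr]
        have hj : ((jj (T ^ 20) N + 1 : ℕ) : ℝ) ≤ 2 * (T:ℝ) ^ 21 := by
          have hf := Nat.floor_le (a := ((T ^ 20 : ℕ) : ℝ) * Real.log N)
            (mul_nonneg (by positivity) (Real.log_natCast_nonneg N))
          have : ((T ^ 20 : ℕ) : ℝ) * Real.log N ≤ (T:ℝ) ^ 20 * T := by rw [hHr]; gcongr
          have h21 : (1:ℝ) ≤ (T:ℝ) ^ 21 := one_le_pow₀ hT1
          push_cast
          unfold jj
          have : (T:ℝ) ^ 20 * T = (T:ℝ) ^ 21 := by ring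
          linarith
        calc _ ≤ 2 * (T:ℝ) ^ 21 * (544 * (T:ℝ) ^ 1152 * τ ^ 4) := by gcongr
          _ = 1088 * (T:ℝ) ^ 873 * τ ^ 3 * ((T:ℝ) ^ 300 * τ) := by ring
          _ ≤ _ := by gcongr
      · rw [hHr, hNr]
        have : (T:ℝ) ^ 900 * τ ^ 3 / (T:ℝ) ^ 20 = (T:ℝ) ^ 880 * τ ^ 3 := by field_simp
        rw [this]
        have h1 : (1:ℝ) ≤ (T:ℝ) ^ 880 * τ ^ 3 := by
          have : (1:ℝ) ≤ (T:ℝ) ^ 880 := one_le_pow₀ hT1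
          have : (1:ℝ) ≤ (τ:ℝ) ^ 3 := one_le_pow₀ hτ1
          nlinarith
        calc _ ≤ ((T:ℝ) ^ 880 * τ ^ 3 + (T:ℝ) ^ 880 * τ ^ 3) * (T * ((T:ℝ) ^ 2 * (2 * T))) := by gcongr
          _ = _ := by ring
    · intro m hm
      refine (ite_sum_div_le _ _ 1 1 m (by norm_num) ?_ ?_).trans ?_
      · intro d _; rw [hμ2]; split_ifs
        · simp
        · exact hμ d
      · intro d _; simp only [natCoe_apply, zeta_apply]; split_ifs <;> simp
      · have := hd m hm; linarith
    · intro m hm; rw [hL2]; split_ifs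
      · simpa using hTpos.le
      · exact hΛ m hm
    · intro m hm
      rw [coe_mul_zeta_apply]
      refine sum_eq_zero fun d hd => ?_
      rw [hμ2, if_pos ((Nat.divisor_le hd).trans hm)]
    · intro n hn; rw [hL2, if_pos hn]
    · rw [hNr, hUr]
      have e1 : (T:ℝ) ^ 900 * τ ^ 3 / (T:ℝ) ^ 100 = (T:ℝ) ^ 800 * τ ^ 3 := by field_simp
      rw [e1]
      have hR2' : (R:ℝ) ^ 2 ≤ (4 * ((T:ℝ) ^ 300 * τ)) ^ 2 := by gcongr
      have hR4' : (R:ℝ) ^ 4 ≤ (4 * ((T:ℝ) ^ 300 * τ)) ^ 4 := by gcongr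
      calc _ ≤ 1024 * ((T:ℝ) ^ 900 * τ ^ 3) * T ^ 4 * ((T:ℝ) ^ 900 * τ ^ 3 +
            2 * (4 * ((T:ℝ) ^ 300 * τ)) ^ 2 * ((T:ℝ) ^ 800 * τ ^ 3) + (4 * ((T:ℝ) ^ 300 * τ)) ^ 4) := by gcongr
        _ = 1024 * ((T:ℝ) ^ 900 * τ ^ 3) * T ^ 4 * ((T:ℝ) ^ 900 * τ ^ 3 +
            32 * (T:ℝ) ^ 1400 * τ ^ 5 + 256 * (T:ℝ) ^ 1200 * τ ^ 4) := by ring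
        _ ≤ 1024 * ((T:ℝ) ^ 900 * τ ^ 3) * T ^ 4 * ((T:ℝ) ^ 1400 * τ ^ 5 +
            32 * (T:ℝ) ^ 1400 * τ ^ 5 + 256 * (T:ℝ) ^ 1400 * τ ^ 5) := by
            gcongr <;> first | exact hT1 | exact hτ1 | norm_num
        _ = _ := by ring
    · intro k hk hk2
      have hk1 : 1 < k := by
        have h20 : (2:ℝ) ≤ (T:ℝ) ^ 20 := by
          calc (2:ℝ) ≤ T := by linarith
            _ ≤ (T:ℝ) ^ 20 := le_self_pow₀ hT1 (by norm_num)
        have hN2r : (2:ℝ) ≤ N := by exact_mod_cast hN2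
        rw [hHr] at hk2
        have : 1 / (T:ℝ) ^ 20 ≤ 1 / 2 := one_div_le_one_div_of_le (by norm_num) h20
        have : (1:ℝ) < k := by nlinarith
        exact_mod_cast this
      refine (abs_FF_le R hRpos P hP k).trans ?_
      have h4 : (#(P.filter fun r : ℕ => (k : ZMod r) = 1) : ℝ) ≤ #(k - 1).divisors := by
        exact_mod_cast card_dvd_le P k hk1
      have h5 := hd (k - 1) (by rw [mem_Ioc] at hk ⊢; omega)
      linarith
  rw [hdec]
  have hfin : |∑ n ∈ Ioc 0 N, L1 n * FF P n + ∑ n ∈ Ioc 0 N, (M1 * log) n * FF P n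
      - ∑ n ∈ Ioc 0 N, ((M1 * L1) * (zeta : ArithmeticFunction ℝ)) n * FF P n
      + ∑ n ∈ Ioc 0 N, ((((moebius : ArithmeticFunction ℝ) - M1) * (zeta : ArithmeticFunction ℝ)) *
        (vonMangoldt - L1)) n * FF P n| ≤ 8 * (T:ℝ) ^ 402 * τ + 16 * (T:ℝ) ^ 402 * τ + 16 * (T:ℝ) ^ 502 * τ
        + (1088 * (T:ℝ) ^ 873 * τ ^ 3 + 4 * (T:ℝ) ^ 884 * τ ^ 3) := by
    rw [abs_le] at *
    constructor <;> linarith [h0.1, h0.2, h1.1, h1.2, h2.1, h2.2, h3.1, h3.2]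
  refine hfin.trans ?_
  have hττ : (τ:ℝ) ≤ τ ^ 3 := le_self_pow₀ hτ1 (by norm_num)
  calc _ ≤ 8 * (T:ℝ) ^ 884 * τ ^ 3 + 16 * (T:ℝ) ^ 884 * τ ^ 3 + 16 * (T:ℝ) ^ 884 * τ ^ 3
        + (1088 * (T:ℝ) ^ 884 * τ ^ 3 + 4 * (T:ℝ) ^ 884 * τ ^ 3) := by
        gcongr <;> first | exact hT1 | norm_num
    _ = 1132 * ((T:ℝ) ^ 884 * τ ^ 3) := by ring
    _ ≤ T * ((T:ℝ) ^ 884 * τ ^ 3) := by gcongr; linarith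
    _ = _ := by ring

end CarmFrob

end Part9

section Part10

open Finset

namespace CarmFrob

lemma log_le_four_mul (s : ℝ) (hs : 0 < s) : Real.log (s ^ 4) ≤ 4 * s := by
  rw [Real.log_pow]; push_cast
  have := Real.log_le_sub_one_of_pos hs
  linarith

lemma theta_lower (y : ℕ) (hy : 400000000 ≤ y) :
    (y:ℝ) * Real.log 2 - y / 8 ≤ Chebyshev.theta y := by
  have h := Chebyshev.theta_ge y
  have hy' : (400000000:ℝ) ≤ y := by exact_mod_cast hy
  set s := Real.sqrt (Real.sqrt y) with hs
  have hs2 : s ^ 2 = Real.sqrt y := Real.sq_sqrt (Real.sqrt_nonneg _)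
  have hs4 : s ^ 4 = y := by
    calc s ^ 4 = (s ^ 2) ^ 2 := by ring
      _ = _ := by rw [hs2, Real.sq_sqrt (by positivity)]
  have hs0 : 0 ≤ s := Real.sqrt_nonneg _
  have hs140 : 140 ≤ s := by
    by_contra hc
    push Not at hc
    have : s ^ 4 ≤ 140 ^ 4 := by gcongr
    rw [hs4] at this
    norm_num at this; linarith
  have hl := log_le_four_mul s (by linarith)
  rw [hs4] at hl
  have hl2 : Real.log (y + 1) ≤ 4 * s + 1 := by
    have h1 : Real.log ((y:ℝ) + 1) ≤ Real.log (y * 2) := Real.log_le_log (by positivity) (by linarith)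
    rw [Real.log_mul (by positivity) (by norm_num)] at h1
    have := Real.log_two_lt_d9
    linarith
  rw [← hs2] at h
  have h3 : 2 * s ^ 2 * Real.log y ≤ 2 * s ^ 2 * (4 * s) := by gcongr
  have h4 : 8 * s ^ 3 + 4 * s + 1 ≤ s ^ 4 / 8 := by
    have : 140 * s ^ 3 ≤ s * s ^ 3 := by gcongr
    have e : s * s ^ 3 = s ^ 4 := by ring
    have : s * 1 ≤ s * s ^ 2 := by gcongr; nlinarith
    have : s * s ^ 2 = s ^ 3 := by ring
    nlinarith
  rw [← hs4]
  rw [hs4]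
  nlinarith

lemma psi_lower (y : ℕ) (hy : 400000000 ≤ y) : (y:ℝ) / 2 ≤ Chebyshev.psi y := by
  have h1 := theta_lower y hy
  have h2 := Chebyshev.theta_le_psi y
  have := Real.log_two_gt_d9
  have : (0:ℝ) ≤ y := by positivity
  nlinarith

lemma theta_diff (A : ℕ) : Chebyshev.theta (2 * A : ℕ) - Chebyshev.theta A ≤
    #((Ioc A (2 * A)).filter Nat.Prime) * Real.log (2 * A) := by
  have h : Chebyshev.theta (2 * A : ℕ) = Chebyshev.theta A + ∑ p ∈ (Ioc A (2 * A)).filter Nat.Prime, Real.log p := by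
    unfold Chebyshev.theta
    simp only [Nat.floor_natCast]
    rw [sum_filter, sum_filter, sum_filter, sum_Ioc_consecutive _ (Nat.zero_le _) (by omega)]
  rw [h, add_sub_cancel_left]
  calc _ ≤ ∑ p ∈ (Ioc A (2 * A)).filter Nat.Prime, Real.log (2 * A) := by
        refine sum_le_sum fun p hp => ?_
        rw [mem_filter, mem_Ioc] at hp
        refine Real.log_le_log (by exact_mod_cast hp.2.pos) (by exact_mod_cast hp.1.2)
    _ = _ := by rw [sum_const, nsmul_eq_mul]

lemma dyadic (A : ℕ) (hA : 400000000 ≤ A) : ∃ R, A ≤ R ∧ R ≤ 4 * A ∧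
    (A:ℝ) ≤ #((Ioc R (2 * R)).filter Nat.Prime) * Real.log (8 * A) := by
  have hA' : (400000000:ℝ) ≤ A := by exact_mod_cast hA
  have h8 := theta_lower (8 * A) (by omega)
  have h1 := Chebyshev.theta_le_log4_mul_x (x := A) (by positivity)
  have hl4 : Real.log 4 = 2 * Real.log 2 := by
    rw [show (4:ℝ) = 2 ^ 2 by norm_num, Real.log_pow]; norm_num
  have hl := Real.log_two_gt_d9
  rw [hl4] at h1
  by_contra hcon
  push Not at hcon
  have key : ∀ R, A ≤ R → R ≤ 4 * A → Chebyshev.theta (2 * R : ℕ) - Chebyshev.theta R < A := by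
    intro R h1 h2
    refine (theta_diff R).trans_lt (lt_of_le_of_lt ?_ (hcon R h1 h2))
    have h3 : (0:ℝ) < R := by exact_mod_cast (by omega : 0 < R)
    have h4 : (R:ℝ) ≤ 4 * A := by exact_mod_cast h2
    exact mul_le_mul_of_nonneg_left (Real.log_le_log (by push_cast; linarith) (by push_cast; linarith)) (by positivity)
  have k1 := key A le_rfl (by omega)
  have k2 := key (2 * A) (by omega) (by omega)
  have k3 := key (2 * (2 * A)) (by omega) (by omega)
  have e : 2 * (2 * (2 * A)) = 8 * A := by ring
  rw [e] at k3
  push_cast at h8 k1 k2 k3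
  nlinarith

lemma FF_eq (P : Finset ℕ) (n : ℕ) : FF P n = (#(P.filter fun r : ℕ => (n : ZMod r) = 1) : ℝ) -
    ∑ r ∈ P, (if (n : ZMod r) = 0 then 0 else 1 / ((r:ℝ) - 1)) := by
  unfold FF kk
  rw [sum_sub_distrib]
  congr 1
  rw [sum_ite, sum_const, sum_const_zero]; simp

open ArithmeticFunction in
lemma shifted_primes_det (T τ N : ℕ) (hT : 400000000 ≤ T) (hτ : 1 ≤ τ) (hN : N = T ^ 900 * τ ^ 3)
    (hd : ∀ k ∈ Ioc 0 N, (#k.divisors : ℝ) ≤ T) (hlog : Real.log N ≤ T) :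
    ∃ Q : Finset ℕ, (∀ q ∈ Q, q.Prime ∧ T ^ 890 * τ ^ 3 < q ∧ q ≤ T ^ 900 * τ ^ 3 ∧
      (q - 1) ∣ (8 * (T ^ 600 * τ ^ 2)).factorial ^ 2) ∧ T ^ 893 * τ ^ 3 ≤ #Q := by
  have hT0 : (400000000:ℝ) ≤ T := by exact_mod_cast hT
  have hTpos : (0:ℝ) < T := by linarith
  have hT1 : (1:ℝ) ≤ T := by linarith
  have hτ1 : (1:ℝ) ≤ τ := by exact_mod_cast hτ
  have hNr : (N:ℝ) = (T:ℝ) ^ 900 * (τ:ℝ) ^ 3 := by rw [hN]; push_cast; ring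
  have hTA : T ≤ T ^ 300 * τ := by
    calc T ≤ T ^ 300 := Nat.le_self_pow (by norm_num) T
      _ ≤ _ := Nat.le_mul_of_pos_right _ (by omega)
  have hTN : T ≤ N := by
    rw [hN]
    calc T ≤ T ^ 900 := Nat.le_self_pow (by norm_num) T
      _ ≤ _ := Nat.le_mul_of_pos_right _ (by positivity)
  obtain ⟨R, hR1, hR2, hPc⟩ := dyadic (T ^ 300 * τ) (by omega)
  have hRpos : 0 < R := by omega
  have hRr : (0:ℝ) < R := by exact_mod_cast hRpos
  have hR1r : (T:ℝ) ^ 300 * τ ≤ R := by exact_mod_cast hR1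
  have hR2r : (R:ℝ) ≤ 4 * ((T:ℝ) ^ 300 * τ) := by exact_mod_cast hR2
  set P := (Ioc R (2 * R)).filter Nat.Prime with hPdef
  have hP : ∀ r ∈ P, r.Prime ∧ R < r ∧ r ≤ 2 * R := by
    intro r hr; rw [hPdef, mem_filter, mem_Ioc] at hr; exact ⟨hr.2, hr.1⟩
  have hS := S_bound T τ R N (by omega) hτ hN hR1 hR2 P hP hd hlog
  have hPT : (R:ℝ) / (4 * T) ≤ #P := by
    have hl : Real.log (8 * (T ^ 300 * τ : ℕ)) ≤ T := by
      refine le_trans (Real.log_le_log (by push_cast; positivity) ?_) hlog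
      rw [hNr]; push_cast
      calc 8 * ((T:ℝ) ^ 300 * τ) ≤ T * ((T:ℝ) ^ 300 * τ) := by gcongr; linarith
        _ = (T:ℝ) ^ 301 * τ ^ 1 := by ring
        _ ≤ (T:ℝ) ^ 900 * τ ^ 3 := by gcongr <;> first | exact hT1 | exact hτ1 | norm_num
    rw [div_le_iff₀ (by positivity)]
    have : ((T ^ 300 * τ : ℕ) : ℝ) ≤ #P * T := hPc.trans (by gcongr)
    push_cast at this
    linarith
  have hΛ : ∀ n ∈ Ioc 0 N, vonMangoldt n ≤ T := by
    intro n hn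
    refine vonMangoldt_le_log.trans (le_trans ?_ hlog)
    rw [mem_Ioc] at hn
    have h1 : (0:ℝ) < n := by exact_mod_cast hn.1
    have h2 : (n:ℝ) ≤ N := by exact_mod_cast hn.2
    exact Real.log_le_log h1 h2
  set G : ℕ → ℝ := fun n => (#(P.filter fun r : ℕ => (n : ZMod r) = 1) : ℝ) with hG
  have hG0 : ∀ n, 0 ≤ G n := fun n => by simp only [hG]; positivity
  have hGT : ∀ n ∈ Ioc 0 N, 1 < n → G n ≤ T := by
    intro n hn h1
    have h4 : G n ≤ #(n - 1).divisors := by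
      simp only [hG]
      exact_mod_cast card_dvd_le P n h1
    exact h4.trans (hd (n - 1) (by rw [mem_Ioc] at hn ⊢; omega))
  -- lower bound for the main term
  have hmain : (N:ℝ) / (32 * T) ≤ ∑ n ∈ Ioc 0 N, vonMangoldt n *
      ∑ r ∈ P, (if (n : ZMod r) = 0 then 0 else 1 / ((r:ℝ) - 1)) := by
    have hψ := psi_lower N (by omega)
    have hψ' : Chebyshev.psi N = ∑ n ∈ Ioc 0 N, vonMangoldt n := by
      unfold Chebyshev.psi; rw [Nat.floor_natCast]
    have hr : ∀ r ∈ P, 1 / (2 * (R:ℝ)) * (N / 4) ≤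
        ∑ n ∈ Ioc 0 N, vonMangoldt n * (if (n : ZMod r) = 0 then 0 else 1 / ((r:ℝ) - 1)) := by
      intro r hr
      obtain ⟨hrp, hrR, hr2⟩ := hP r hr
      have hrR' : (R:ℝ) < r := by exact_mod_cast hrR
      have hr2' : (r:ℝ) ≤ 2 * R := by exact_mod_cast hr2
      have hrge : (2:ℝ) ≤ r := by exact_mod_cast hrp.two_le
      have hin : 1 / (2 * (R:ℝ)) ≤ 1 / ((r:ℝ) - 1) :=
        one_div_le_one_div_of_le (by linarith) (by linarith)
      have hdv : ∑ n ∈ Ioc 0 N, (if r ∣ n then vonMangoldt n else 0) ≤ N / 4 := by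
        rw [← sum_filter]
        calc _ ≤ ∑ n ∈ (Ioc 0 N).filter (fun n => r ∣ n), (T:ℝ) :=
              sum_le_sum fun n hn => hΛ n (mem_filter.1 hn).1
          _ = ((N / r : ℕ) : ℝ) * T := by
              rw [sum_const, nsmul_eq_mul, Nat.Ioc_filter_dvd_card_eq_div]
          _ ≤ (N / R) * T := by
              gcongr
              refine Nat.cast_div_le.trans ?_
              gcongr
          _ ≤ N / 4 := by
              rw [div_mul_eq_mul_div, div_le_div_iff₀ hRr (by norm_num)]
              have : (T:ℝ) * 4 ≤ R := by
                calc (T:ℝ) * 4 ≤ T * T := by gcongr; linarith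
                  _ = (T:ℝ) ^ 2 * 1 := by ring
                  _ ≤ (T:ℝ) ^ 300 * τ := by gcongr <;> first | exact hT1 | norm_num
                  _ ≤ R := hR1r
              have hN0 : (0:ℝ) ≤ N := by positivity
              nlinarith
      calc 1 / (2 * (R:ℝ)) * (N / 4) ≤ 1 / (2 * (R:ℝ)) * (∑ n ∈ Ioc 0 N, vonMangoldt n
            - ∑ n ∈ Ioc 0 N, (if r ∣ n then vonMangoldt n else 0)) := by
            gcongr; rw [← hψ']; linarith
        _ ≤ 1 / ((r:ℝ) - 1) * (∑ n ∈ Ioc 0 N, vonMangoldt n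
            - ∑ n ∈ Ioc 0 N, (if r ∣ n then vonMangoldt n else 0)) := by
            gcongr
            rw [← hψ']
            have : (0:ℝ) ≤ N := by positivity
            linarith
        _ = _ := by
            rw [← sum_sub_distrib, mul_sum]
            refine sum_congr rfl fun n _ => ?_
            have hiff := ZMod.natCast_eq_zero_iff n r
            by_cases h : r ∣ n
            · have h2 := hiff.2 h
              rw [if_pos h, if_pos h2]; ring
            · have h2 : ¬ (n : ZMod r) = 0 := fun h' => h (hiff.1 h')
              rw [if_neg h, if_neg h2]; ring
    have e : ∑ n ∈ Ioc 0 N, vonMangoldt n * ∑ r ∈ P, (if (n : ZMod r) = 0 then 0 else 1 / ((r:ℝ) - 1)) =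
        ∑ r ∈ P, ∑ n ∈ Ioc 0 N, vonMangoldt n * (if (n : ZMod r) = 0 then 0 else 1 / ((r:ℝ) - 1)) := by
      rw [sum_comm]
      simp_rw [mul_sum]
    rw [e]
    refine le_trans ?_ (sum_le_sum hr)
    rw [sum_const, nsmul_eq_mul]
    calc (N:ℝ) / (32 * T) = R / (4 * T) * (1 / (2 * R) * (N / 4)) := by field_simp; ring
      _ ≤ _ := by gcongr
  have hlow : (N:ℝ) / (32 * T) - (T:ℝ) ^ 885 * τ ^ 3 ≤ ∑ n ∈ Ioc 0 N, vonMangoldt n * G n := by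
    have e : ∑ n ∈ Ioc 0 N, vonMangoldt n * G n = ∑ n ∈ Ioc 0 N, vonMangoldt n * FF P n +
        ∑ n ∈ Ioc 0 N, vonMangoldt n * ∑ r ∈ P, (if (n : ZMod r) = 0 then 0 else 1 / ((r:ℝ) - 1)) := by
      rw [← sum_add_distrib]
      refine sum_congr rfl fun n _ => ?_
      rw [FF_eq]; simp only [hG]; ring
    rw [e]
    have := (abs_le.1 hS).1
    linarith
  set Q := (Ioc (T ^ 890 * τ ^ 3) N).filter (fun q => q.Prime ∧ 0 < G q) with hQ
  refine ⟨Q, ?_, ?_⟩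
  · intro q hq
    rw [hQ, mem_filter, mem_Ioc] at hq
    obtain ⟨⟨hq1, hq2⟩, hqp, hqG⟩ := hq
    refine ⟨hqp, hq1, hN ▸ hq2, ?_⟩
    simp only [hG] at hqG
    have hqG' : 0 < #(P.filter fun r : ℕ => (q : ZMod r) = 1) := by exact_mod_cast hqG
    obtain ⟨r, hr⟩ := card_pos.1 hqG'
    rw [mem_filter] at hr
    obtain ⟨hrp, hrR, hr2⟩ := hP r hr.1
    have hdvd : r ∣ q - 1 := by
      rw [← ZMod.natCast_eq_zero_iff, Nat.cast_sub hqp.one_le, hr.2]; simp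
    obtain ⟨c, hc⟩ := hdvd
    have hq2' := hqp.two_le
    have hc0 : 0 < c := Nat.pos_of_ne_zero (by rintro rfl; omega)
    rw [hc, sq]
    refine mul_dvd_mul (Nat.dvd_factorial hrp.pos ?_) (Nat.dvd_factorial hc0 ?_)
    · calc r ≤ 2 * R := hr2
        _ ≤ 8 * (T ^ 300 * τ) := by omega
        _ ≤ 8 * (T ^ 600 * τ ^ 2) := by
          gcongr
          · omega
          · norm_num
          · exact Nat.le_self_pow (by norm_num) τ
    · have h1 : (T ^ 300 * τ) * c ≤ (T ^ 300 * τ) * (T ^ 600 * τ ^ 2) := by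
        calc (T ^ 300 * τ) * c ≤ r * c := by gcongr; omega
          _ ≤ N := by omega
          _ = _ := by rw [hN]; ring
      have := Nat.le_of_mul_le_mul_left h1 (by positivity)
      omega
  · have hsplit : ∀ n ∈ Ioc 0 N, vonMangoldt n * G n ≤
        (if n ∈ Q then (T:ℝ) ^ 2 else 0) + (if n ∈ Ioc 0 (T ^ 890 * τ ^ 3) then (T:ℝ) ^ 2 else 0)
          + (if ¬ n.Prime then vonMangoldt n * T else 0) := by
      intro n hn
      have hv0 : 0 ≤ vonMangoldt n := vonMangoldt_nonneg
      have t1 : (0:ℝ) ≤ (if n ∈ Q then (T:ℝ) ^ 2 else 0) := by positivity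
      have t2 : (0:ℝ) ≤ (if n ∈ Ioc 0 (T ^ 890 * τ ^ 3) then (T:ℝ) ^ 2 else 0) := by positivity
      have t3 : (0:ℝ) ≤ (if ¬ n.Prime then vonMangoldt n * T else 0) := by positivity
      by_cases h1 : n = 1
      · subst h1
        have : vonMangoldt (1:ℕ) * G 1 = 0 := by rw [vonMangoldt_apply_one, zero_mul]
        linarith
      have hn1 : 1 < n := by rw [mem_Ioc] at hn; omega
      have hgt := hGT n hn hn1
      by_cases hp : n.Prime
      · have hT2 : vonMangoldt n * G n ≤ (T:ℝ) ^ 2 := by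
          rw [sq]; exact mul_le_mul (hΛ n hn) hgt (hG0 n) hTpos.le
        by_cases hsm : n ∈ Ioc 0 (T ^ 890 * τ ^ 3)
        · rw [if_pos hsm] at t2 ⊢; linarith
        · by_cases hgz : 0 < G n
          · have : n ∈ Q := by
              rw [hQ, mem_filter, mem_Ioc]; rw [mem_Ioc] at hsm hn
              exact ⟨⟨by omega, hn.2⟩, hp, hgz⟩
            rw [if_pos this]; linarith
          · have : G n = 0 := le_antisymm (not_lt.1 hgz) (hG0 n)
            rw [this]; linarith
      · rw [if_pos hp]
        have : vonMangoldt n * G n ≤ vonMangoldt n * T := by gcongr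
        linarith
    have hup : ∑ n ∈ Ioc 0 N, vonMangoldt n * G n ≤ #Q * (T:ℝ) ^ 2 + (T:ℝ) ^ 892 * τ ^ 3
        + 2 * (T:ℝ) ^ 452 * τ ^ 2 := by
      refine (sum_le_sum hsplit).trans ?_
      rw [sum_add_distrib, sum_add_distrib]
      refine add_le_add (add_le_add ?_ ?_) ?_
      · rw [← sum_filter, sum_const, nsmul_eq_mul]
        gcongr
        intro n hn; exact (mem_filter.1 hn).2
      · rw [← sum_filter, sum_const, nsmul_eq_mul]
        have : #(filter (fun n => n ∈ Ioc 0 (T ^ 890 * τ ^ 3)) (Ioc 0 N)) ≤ #(Ioc 0 (T ^ 890 * τ ^ 3)) :=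
          card_le_card (fun m hm => (mem_filter.1 hm).2)
        rw [Nat.card_Ioc, Nat.sub_zero] at this
        have h' : (#(filter (fun n => n ∈ Ioc 0 (T ^ 890 * τ ^ 3)) (Ioc 0 N)) : ℝ) ≤ (T:ℝ) ^ 890 * τ ^ 3 := by
          exact_mod_cast this
        calc _ ≤ (T:ℝ) ^ 890 * τ ^ 3 * T ^ 2 := by gcongr
          _ = _ := by ring
      · have h1 := Chebyshev.psi_sub_theta_eq_sum_not_prime (N:ℝ)
        have h2 := Chebyshev.psi_sub_theta_le (x := (N:ℝ)) (by exact_mod_cast (by omega : 1 ≤ N))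
        rw [Nat.floor_natCast] at h1
        have hsq : Real.sqrt N ≤ (T:ℝ) ^ 450 * τ ^ 2 := by
          rw [Real.sqrt_le_left (by positivity), hNr]
          calc (T:ℝ) ^ 900 * τ ^ 3 ≤ (T:ℝ) ^ 900 * τ ^ 4 := by gcongr <;> first | exact hτ1 | norm_num
            _ = _ := by ring
        calc _ = (∑ n ∈ (Ioc 0 N).filter (fun n => ¬ n.Prime), vonMangoldt n) * T := by
              rw [← sum_filter, sum_mul]
          _ ≤ (2 * Real.sqrt N * Real.log N) * T := by
              gcongr
              refine le_trans (le_of_eq ?_) h2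
              rw [h1]
          _ ≤ (2 * ((T:ℝ) ^ 450 * τ ^ 2) * T) * T := by gcongr
          _ = _ := by ring
    have hNT : (N:ℝ) / (32 * T) = (T:ℝ) ^ 899 * τ ^ 3 / 32 := by
      rw [hNr]; field_simp
    have hcomb : (T:ℝ) ^ 899 * τ ^ 3 / 32 ≤ #Q * (T:ℝ) ^ 2 + 4 * ((T:ℝ) ^ 892 * τ ^ 3) := by
      have a1 : (T:ℝ) ^ 885 * τ ^ 3 ≤ (T:ℝ) ^ 892 * τ ^ 3 := by gcongr <;> first | exact hT1 | norm_num
      have a2 : 2 * (T:ℝ) ^ 452 * τ ^ 2 ≤ 2 * (T:ℝ) ^ 892 * τ ^ 3 := by gcongr <;> first | exact hT1 | exact hτ1 | norm_num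
      linarith
    have hfin : ((T:ℝ) ^ 893 * τ ^ 3) * T ^ 2 ≤ #Q * (T:ℝ) ^ 2 := by
      have b1 : (T:ℝ) ^ 899 * τ ^ 3 = T ^ 4 * ((T:ℝ) ^ 895 * τ ^ 3) := by ring
      have b2 : ((T:ℝ) ^ 893 * τ ^ 3) * T ^ 2 = (T:ℝ) ^ 895 * τ ^ 3 := by ring
      have b3 : (T:ℝ) ^ 892 * τ ^ 3 ≤ (T:ℝ) ^ 895 * τ ^ 3 := by gcongr <;> first | exact hT1 | norm_num
      have b4 : (400000000:ℝ) ≤ (T:ℝ) ^ 4 := hT0.trans (le_self_pow₀ hT1 (by norm_num))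
      rw [b2]
      rw [b1] at hcomb
      have b5 : 0 ≤ (T:ℝ) ^ 895 * τ ^ 3 := by positivity
      have b6 : 400000000 * ((T:ℝ) ^ 895 * τ ^ 3) ≤ T ^ 4 * ((T:ℝ) ^ 895 * τ ^ 3) := by gcongr
      linarith
    have := le_of_mul_le_mul_right hfin (by positivity)
    exact_mod_cast this

end CarmFrob

end Part10

section Part11

open Finset
namespace CarmFrob

lemma lemmaQ (e : ℕ) : ∃ T0 : ℕ, ∀ T : ℕ, T0 ≤ T → ∃ Q : Finset ℕ,
    (∀ q ∈ Q, q.Prime ∧ T ^ (890 + 3 * e) < q ∧ q ≤ T ^ (900 + 3 * e) ∧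
      (q - 1) ∣ (8 * T ^ (600 + 2 * e)).factorial ^ 2) ∧ T ^ (893 + 3 * e) ≤ #Q := by
  obtain ⟨C, hC1, hC⟩ := divisor_pow_le (2 * (900 + 3 * e))
  have hlog : ∀ᶠ T : ℕ in Filter.atTop, Real.log (T:ℝ) ≤ 1 / (900 + 3 * e : ℝ) * (T:ℝ) := by
    have h := (Real.isLittleO_log_id_atTop.comp_tendsto tendsto_natCast_atTop_atTop).bound
      (show (0:ℝ) < 1 / (900 + 3 * e : ℝ) by positivity)
    filter_upwards [h, Filter.eventually_ge_atTop 1] with T hT hT1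
    simp only [Function.comp, id, Real.norm_eq_abs] at hT
    rw [abs_of_nonneg (by positivity : (0:ℝ) ≤ (T:ℝ))] at hT
    exact (le_abs_self _).trans hT
  obtain ⟨T1, hT1⟩ := Filter.eventually_atTop.1 hlog
  obtain ⟨T2, hT2⟩ := exists_nat_ge (C:ℝ)
  refine ⟨max T1 (max T2 400000000), fun T hT => ?_⟩
  have h1 : T1 ≤ T := le_trans (le_max_left _ _) hT
  have h2 : T2 ≤ T := le_trans ((le_max_left _ _).trans (le_max_right _ _)) hT
  have h3 : 400000000 ≤ T := le_trans ((le_max_right _ _).trans (le_max_right _ _)) hT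
  have hTpos : 0 < T := by omega
  have hCT : (C:ℝ) ≤ T := hT2.trans (by exact_mod_cast h2)
  have hd : ∀ k ∈ Ioc 0 (T ^ 900 * (T ^ e) ^ 3), (#k.divisors : ℝ) ≤ T := by
    intro k hk
    rw [mem_Ioc] at hk
    have h := hC k (by omega)
    have hM : (0:ℕ) ≠ 2 * (900 + 3 * e) := by omega
    refine le_of_pow_le_pow_left₀ hM.symm (by positivity) ?_
    have hk' : (k:ℝ) ≤ (T:ℝ) ^ (900 + 3 * e) := by
      have : (k:ℝ) ≤ ((T ^ 900 * (T ^ e) ^ 3 : ℕ) : ℝ) := by exact_mod_cast hk.2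
      refine this.trans (le_of_eq ?_)
      push_cast; ring
    have hT1' : (1:ℝ) ≤ T := by exact_mod_cast hTpos
    calc ((#k.divisors : ℝ)) ^ (2 * (900 + 3 * e)) ≤ C * k := by exact_mod_cast h
      _ ≤ (T:ℝ) * (T:ℝ) ^ (900 + 3 * e) := by gcongr
      _ ≤ (T:ℝ) ^ (900 + 3 * e) * (T:ℝ) ^ (900 + 3 * e) := by
          gcongr; exact le_self_pow₀ hT1' (by omega)
      _ = _ := by rw [← pow_add]; congr 1; ring
  have hl : Real.log ((T ^ 900 * (T ^ e) ^ 3 : ℕ) : ℝ) ≤ T := by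
    have : (((T ^ 900 * (T ^ e) ^ 3 : ℕ)) : ℝ) = (T:ℝ) ^ (900 + 3 * e) := by push_cast; ring
    rw [this, Real.log_pow]
    have := hT1 T h1
    push_cast
    calc (900 + 3 * (e:ℝ)) * Real.log T ≤ (900 + 3 * (e:ℝ)) * (1 / (900 + 3 * e : ℝ) * (T:ℝ)) := by gcongr
      _ = T := by field_simp
  obtain ⟨Q, hQ, hQc⟩ := shifted_primes_det T (T ^ e) (T ^ 900 * (T ^ e) ^ 3) h3
    (Nat.one_le_pow _ _ hTpos) rfl hd hl
  · refine ⟨Q, fun q hq => ?_, ?_⟩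
    · obtain ⟨a, b, c, d⟩ := hQ q hq
      refine ⟨a, ?_, ?_, ?_⟩
      · exact lt_of_eq_of_lt (by ring) b
      · exact c.trans_eq (by ring)
      · have e1 : 8 * T ^ (600 + 2 * e) = 8 * (T ^ 600 * (T ^ e) ^ 2) := by ring
        rw [e1]; exact d
    · exact le_of_eq_of_le (by ring) hQc

end CarmFrob

end Part11

section Part12

open Finset
namespace CarmFrob

lemma greedy {A ι : Type*} [AddCommGroup A] [Fintype A] [DecidableEq ι] (m : ℕ) (hm : 1 ≤ m)
    (g : ι → A) (P : Finset ι) (hg : ∀ i ∈ P, m • g i = 0) :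
    ∃ a : ι → ℂ, (∀ i, a i ≠ 0) ∧
      ((#{χ : AddChar A ℂ | ∏ i ∈ P, (χ (g i) + a i) ≠ 0} : ℕ) : ℝ) ≤
        Fintype.card A * (1 - 1 / (m:ℝ)) ^ #P := by
  induction P using Finset.induction_on with
  | empty =>
    refine ⟨fun _ => 1, fun _ => one_ne_zero, ?_⟩
    simp only [prod_empty, ne_eq, one_ne_zero, not_false_eq_true, filter_true, card_empty, pow_zero,
      mul_one, card_univ]
    exact_mod_cast AddChar.card_addChar_le A ℂ
  | insert j P hj ih =>
    obtain ⟨a, ha, hc⟩ := ih fun i hi => hg i (mem_insert_of_mem hi)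
    set B : Finset (AddChar A ℂ) := {χ : AddChar A ℂ | ∏ i ∈ P, (χ (g i) + a i) ≠ 0} with hB
    have hmR : (0:ℝ) < m := by exact_mod_cast hm
    have hmaps : ∀ χ ∈ B, χ (g j) ∈ Polynomial.nthRootsFinset m (1:ℂ) := by
      intro χ _
      rw [Polynomial.mem_nthRootsFinset (by omega), ← AddChar.map_nsmul_eq_pow,
        hg j (mem_insert_self _ _), AddChar.map_zero_eq_one]
    have hne : (Polynomial.nthRootsFinset m (1:ℂ)).Nonempty :=
      ⟨1, by rw [Polynomial.mem_nthRootsFinset (by omega)]; simp⟩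
    have hcard : #(Polynomial.nthRootsFinset m (1:ℂ)) ≤ m := by
      rw [Polynomial.nthRootsFinset]
      exact (Multiset.toFinset_card_le _).trans (Polynomial.card_nthRoots m 1)
    obtain ⟨y, hy, hyc⟩ := exists_le_card_fiber_of_nsmul_le_card_of_maps_to
      (b := (#B : ℝ) / m) hmaps hne (by
        rw [nsmul_eq_mul]
        calc ((#(Polynomial.nthRootsFinset m (1:ℂ)) : ℕ):ℝ) * ((#B : ℝ) / m) ≤ m * ((#B : ℝ) / m) := by
              gcongr
          _ = _ := by field_simp)
    have hy0 : y ≠ 0 := by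
      rw [Polynomial.mem_nthRootsFinset (by omega)] at hy
      rintro rfl
      rw [zero_pow (by omega)] at hy
      exact zero_ne_one hy
    refine ⟨Function.update a j (-y), fun i => ?_, ?_⟩
    · by_cases h : i = j
      · subst h; simpa using hy0
      · simpa [Function.update_of_ne h] using ha i
    have hsub : ({χ : AddChar A ℂ | ∏ i ∈ insert j P, (χ (g i) + Function.update a j (-y) i) ≠ 0} :
        Finset (AddChar A ℂ)) ⊆ B \ {χ ∈ B | χ (g j) = y} := by
      intro χ hχ
      rw [mem_filter, prod_insert hj, mul_ne_zero_iff] at hχ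
      have h2 : ∏ i ∈ P, (χ (g i) + Function.update a j (-y) i) = ∏ i ∈ P, (χ (g i) + a i) := by
        refine prod_congr rfl fun i hi => ?_
        rw [Function.update_of_ne (ne_of_mem_of_not_mem hi hj)]
      rw [h2, Function.update_self] at hχ
      rw [mem_sdiff, hB, mem_filter, mem_filter, mem_filter]
      refine ⟨⟨mem_univ _, hχ.2.2⟩, fun h => hχ.2.1 ?_⟩
      rw [h.2]; ring
    have h3 := card_le_card hsub
    have h4 := card_sdiff_add_card_eq_card (filter_subset (fun χ : AddChar A ℂ => χ (g j) = y) B)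
    have h3' : ((#{χ : AddChar A ℂ | ∏ i ∈ insert j P, (χ (g i) + Function.update a j (-y) i) ≠ 0} : ℕ) : ℝ)
      ≤ (#(B \ {χ ∈ B | χ (g j) = y}) : ℝ) := by exact_mod_cast h3
    have h4' : (#(B \ {χ ∈ B | χ (g j) = y}) : ℝ) + (#{χ ∈ B | χ (g j) = y} : ℝ) = #B := by exact_mod_cast h4
    rw [card_insert_of_notMem hj, pow_succ, ← mul_assoc]
    have h5 : (0:ℝ) ≤ 1 - 1 / (m:ℝ) := by
      rw [sub_nonneg, div_le_one hmR]; exact_mod_cast hm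
    refine le_trans ?_ (mul_le_mul_of_nonneg_right hc h5)
    have : (#B:ℝ) * (1 - 1 / (m:ℝ)) = #B - (#B : ℝ) / m := by ring
    rw [this]
    linarith

lemma zero_sum_add {A ι : Type*} [AddCommGroup A] [Fintype A] [DecidableEq ι] (m : ℕ) (hm : 1 ≤ m)
    (g : ι → A) (P : Finset ι) (hg : ∀ i ∈ P, m • g i = 0)
    (h : (Fintype.card A : ℝ) * (1 - 1 / (m:ℝ)) ^ #P < 1) :
    ∃ S ⊆ P, S.Nonempty ∧ ∑ i ∈ S, g i = 0 := by
  classical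
  obtain ⟨a, ha, hc⟩ := greedy m hm g P hg
  by_contra hcon
  push Not at hcon
  have h0 : #{χ : AddChar A ℂ | ∏ i ∈ P, (χ (g i) + a i) ≠ 0} = 0 := by
    have := hc.trans_lt h
    have h' : #{χ : AddChar A ℂ | ∏ i ∈ P, (χ (g i) + a i) ≠ 0} < 1 := by exact_mod_cast this
    omega
  rw [card_eq_zero, filter_eq_empty_iff] at h0
  have h1 : ∑ χ : AddChar A ℂ, ∏ i ∈ P, (χ (g i) + a i) = 0 :=
    sum_eq_zero fun χ hχ => by simpa using h0 hχ
  simp_rw [prod_add] at h1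
  rw [sum_comm] at h1
  have h2 : ∀ t ∈ P.powerset, ∑ χ : AddChar A ℂ, (∏ i ∈ t, χ (g i)) * ∏ i ∈ P \ t, a i =
      if t = ∅ then (Fintype.card A : ℂ) * ∏ i ∈ P, a i else 0 := by
    intro t ht
    rw [← sum_mul]
    have hms : ∀ χ : AddChar A ℂ, ∏ i ∈ t, χ (g i) = χ (∑ i ∈ t, g i) := by
      intro χ
      clear ht
      induction t using Finset.induction_on with
      | empty => simp
      | insert j t hj ih => rw [prod_insert hj, sum_insert hj, AddChar.map_add_eq_mul, ih]
    simp_rw [hms]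
    rw [AddChar.sum_apply_eq_ite]
    by_cases h : t = ∅
    · subst h; simp
    · rw [if_neg h, if_neg (hcon t (mem_powerset.1 ht) (nonempty_iff_ne_empty.2 h)), zero_mul]
  rw [sum_congr rfl h2, sum_ite_eq' , if_pos (empty_mem_powerset _)] at h1
  rcases mul_eq_zero.1 h1 with h | h
  · exact Fintype.card_ne_zero (by exact_mod_cast h)
  · exact prod_ne_zero_iff.2 (fun i _ => ha i) h

lemma zero_sum {G ι : Type*} [CommGroup G] [Fintype G] [DecidableEq ι] (m : ℕ) (hm : 1 ≤ m)
    (g : ι → G) (P : Finset ι) (hg : ∀ i ∈ P, g i ^ m = 1)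
    (h : (Fintype.card G : ℝ) * (1 - 1 / (m:ℝ)) ^ #P < 1) :
    ∃ S ⊆ P, S.Nonempty ∧ ∏ i ∈ S, g i = 1 := by
  obtain ⟨S, h1, h2, h3⟩ := zero_sum_add (A := Additive G) m hm (fun i => Additive.ofMul (g i)) P
    (fun i hi => by
      rw [← ofMul_pow, hg i hi, ofMul_one]) (by simpa using h)
  refine ⟨S, h1, h2, ?_⟩
  rw [← ofMul_prod] at h3
  exact h3

/-- usable version -/
lemma zero_sum' {G ι : Type*} [CommGroup G] [Fintype G] [DecidableEq ι] (m : ℕ) (hm : 1 ≤ m)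
    (g : ι → G) (P : Finset ι) (hg : ∀ i ∈ P, g i ^ m = 1) 
    (h : (m:ℝ) * Real.log (Fintype.card G) < #P) :
    ∃ S ⊆ P, S.Nonempty ∧ ∏ i ∈ S, g i = 1 := by
  refine zero_sum m hm g P hg ?_
  have hmR : (0:ℝ) < m := by exact_mod_cast hm
  have h5 : (0:ℝ) ≤ 1 - 1 / (m:ℝ) := by
    rw [sub_nonneg, div_le_one hmR]; exact_mod_cast hm
  have hG : (0:ℝ) < Fintype.card G := by exact_mod_cast Fintype.card_pos
  have h6 : (1 - 1 / (m:ℝ)) ≤ Real.exp (-(1 / (m:ℝ))) := by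
    have := Real.add_one_le_exp (-(1 / (m:ℝ))); linarith
  calc (Fintype.card G : ℝ) * (1 - 1 / (m:ℝ)) ^ #P ≤ Real.exp (Real.log (Fintype.card G)) *
      Real.exp (-(1 / (m:ℝ))) ^ #P := by rw [Real.exp_log hG]; gcongr
    _ = Real.exp (Real.log (Fintype.card G) - #P / m) := by
      rw [← Real.exp_nat_mul, ← Real.exp_add]; congr 1; ring
    _ < 1 := by
      rw [Real.exp_lt_one_iff, sub_neg, lt_div_iff₀ hmR]; linarith

lemma card_small (ι : Type*) [DecidableEq ι] (P : Finset ι) (t0 : ℕ) :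
    #{U ∈ P.powerset | #U < t0} ≤ (#P + 1) ^ t0 := by
  have h : {U ∈ P.powerset | #U < t0} ⊆ (range t0).biUnion fun j => P.powersetCard j := by
    intro U hU
    rw [mem_filter, mem_powerset] at hU
    rw [mem_biUnion]
    exact ⟨#U, mem_range.2 hU.2, mem_powersetCard.2 ⟨hU.1, rfl⟩⟩
  refine (card_le_card h).trans (card_biUnion_le.trans ?_)
  rw [add_pow]
  calc ∑ j ∈ range t0, #(P.powersetCard j) ≤ ∑ j ∈ range t0, #P ^ j * 1 ^ (t0 - j) * (t0.choose j) := by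
        refine sum_le_sum fun j hj => ?_
        rw [mem_range] at hj
        rw [card_powersetCard, one_pow, mul_one]
        exact (Nat.choose_le_pow _ _).trans (Nat.le_mul_of_pos_right _ (Nat.choose_pos hj.le))
    _ ≤ _ := sum_le_sum_of_subset (range_subset_range.2 (by omega))

lemma zero_sum_count {G ι : Type*} [CommGroup G] [DecidableEq G] [DecidableEq ι] (g : ι → G)
    (P : Finset ι) (t t0 : ℕ)
    (hz : ∀ R ⊆ P, t0 ≤ #R → ∃ S ⊆ R, S.Nonempty ∧ ∏ i ∈ S, g i = 1) :
    (#P).choose t ≤ #{S ∈ P.powerset | ∏ i ∈ S, g i = 1 ∧ t < #S + t0 ∧ #S ≤ t} * (#P + 1) ^ t0 := by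
  have hmax : ∀ T : Finset ι, ∃ S ⊆ T, ∏ i ∈ S, g i = 1 ∧
      ∀ S' ⊆ T, ∏ i ∈ S', g i = 1 → #S' ≤ #S := by
    intro T
    obtain ⟨S, hS, hm⟩ := exists_max_image {S ∈ T.powerset | ∏ i ∈ S, g i = 1} card
      ⟨∅, by simp⟩
    rw [mem_filter, mem_powerset] at hS
    exact ⟨S, hS.1, hS.2, fun S' h1 h2 => hm S' (by rw [mem_filter, mem_powerset]; exact ⟨h1, h2⟩)⟩
  choose F hF1 hF2 hF3 using hmax
  have hsm : ∀ T ⊆ P, #(T \ F T) < t0 := by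
    intro T hT
    by_contra hcon
    obtain ⟨S, h1, h2, h3⟩ := hz (T \ F T) (sdiff_subset.trans hT) (by omega)
    have hdis : Disjoint (F T) S := (disjoint_sdiff).mono_right h1
    have := hF3 T (F T ∪ S) (union_subset (hF1 T) (h1.trans sdiff_subset)) (by
      rw [prod_union hdis, hF2, h3, one_mul])
    rw [card_union_of_disjoint hdis] at this
    have := h2.card_pos
    omega
  rw [← card_powersetCard]
  refine le_trans ?_ (Nat.mul_le_mul_left _ (card_small ι P t0))
  rw [← card_product]
  refine card_le_card_of_injOn (fun T => (F T, T \ F T)) ?_ ?_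
  · intro T hT
    rw [mem_coe, mem_powersetCard] at hT
    have h1 := hsm T hT.1
    have h2 := card_sdiff_add_card_eq_card (hF1 T)
    simp only [mem_coe, mem_product, mem_filter, mem_powerset]
    exact ⟨⟨(hF1 T).trans hT.1, hF2 T, by omega, by omega⟩, sdiff_subset.trans hT.1, h1⟩
  · intro T _ T' _ hTT
    simp only [Prod.mk.injEq] at hTT
    calc T = F T ∪ T \ F T := (union_sdiff_of_subset (hF1 T)).symm
      _ = F T' ∪ T' \ F T' := by rw [hTT.2, hTT.1]
      _ = T' := union_sdiff_of_subset (hF1 T')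

end CarmFrob

end Part12

section Part13

open Finset
namespace CarmFrob

lemma carm_of {L k : ℕ} (S : Finset ℕ) (hS : ∀ p ∈ S, p.Prime ∧ (p - 1) ∣ k * L)
    (h2 : 2 ≤ #S) (hmod : ∏ p ∈ S, p ≡ 1 [MOD k * L]) : IsCarmichael (∏ p ∈ S, p) := by
  obtain ⟨p, hp, q, hq, hpq⟩ := one_lt_card.1 h2
  have hpd : p ∣ ∏ p ∈ S, p := dvd_prod_of_mem _ hp
  have hqd : q ∣ ∏ p ∈ S, p := dvd_prod_of_mem _ hq
  have hpos : 0 < ∏ p ∈ S, p := prod_pos fun p hp => (hS p hp).1.pos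
  refine ⟨(hS p hp).1.one_lt.trans_le (Nat.le_of_dvd hpos hpd), fun h => ?_, fun a ha => ?_⟩
  · have h1 := (Nat.prime_dvd_prime_iff_eq (hS p hp).1 h).1 hpd
    have h3 := (Nat.prime_dvd_prime_iff_eq (hS q hq).1 h).1 hqd
    exact hpq (h1.trans h3.symm)
  · have hkL : k * L ∣ ∏ p ∈ S, p - 1 := (Nat.modEq_iff_dvd' hpos).1 hmod.symm
    set m := ∏ p ∈ S, p with hm
    refine Int.ModEq.symm ?_
    rw [Int.modEq_iff_dvd]
    conv_lhs => rw [hm]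
    push_cast
    refine Finset.prod_dvd_of_coprime (fun r hr s hs hrs => ?_) fun r hr => ?_
    · simp only [Function.onFun]
      rw [Nat.isCoprime_iff_coprime]
      exact (Nat.coprime_primes (hS r hr).1 (hS s hs).1).2 hrs
    · have hra : IsCoprime a (r:ℤ) := by
        refine ha.of_isCoprime_of_dvd_right ?_
        exact_mod_cast dvd_prod_of_mem (fun p => p) hr
      have h4 := Int.ModEq.pow_card_sub_one_eq_one (hS r hr).1 hra
      obtain ⟨j, hj⟩ := (hS r hr).2.trans hkL
      rw [← Int.modEq_iff_dvd, hj, pow_mul]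
      simpa using (h4.pow j).symm

lemma order_mod {k Λ p : ℕ} (Q : Finset ℕ) (hQ : ∀ q ∈ Q, q.Prime ∧ (q - 1) ∣ Λ)
    (hp : p.Prime) (hpQ : p ∉ Q) (hpk : p ≡ 1 [MOD k]) :
    p ^ (Λ * ∏ q ∈ Q with q ∣ k, q) ≡ 1 [MOD k * ∏ q ∈ Q, q] := by
  set g := ∏ q ∈ Q with q ∣ k, q with hg
  have hgk : g ∣ k := by
    refine prod_primes_dvd k (fun q hq => ?_) fun q hq => ?_
    · rw [mem_filter] at hq; exact (hQ q hq.1).1.prime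
    · rw [mem_filter] at hq; exact hq.2
  have hsplit : ∏ q ∈ Q, q = g * ∏ q ∈ Q with ¬ q ∣ k, q := (prod_filter_mul_prod_filter_not Q _ _).symm
  rw [hsplit, ← mul_assoc]
  have hcop : Nat.Coprime (k * g) (∏ q ∈ Q with ¬ q ∣ k, q) := by
    have : Nat.Coprime k (∏ q ∈ Q with ¬ q ∣ k, q) := by
      refine Nat.Coprime.prod_right fun q hq => ?_
      rw [mem_filter] at hq
      exact ((Nat.Prime.coprime_iff_not_dvd (hQ q hq.1).1).2 hq.2).symm
    exact this.mul_left (this.coprime_dvd_left hgk)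
  rw [← Nat.modEq_and_modEq_iff_modEq_mul hcop]
  constructor
  · rw [mul_comm Λ, pow_mul]
    have h1 : p ^ g ≡ 1 [MOD k * g] := by
      rw [Nat.ModEq.comm, Nat.modEq_iff_dvd]
      push_cast
      have hgeom := geom_sum_mul (p:ℤ) g
      rw [← hgeom, mul_comm (k:ℤ)]
      refine mul_dvd_mul ?_ ?_
      · have h2 : (p:ℤ) ≡ 1 [ZMOD g] := by
          have := hpk.of_dvd hgk
          exact_mod_cast (Int.natCast_modEq_iff.2 this)
        have h3 : ∑ i ∈ range g, (p:ℤ) ^ i ≡ ∑ i ∈ range g, 1 [ZMOD g] := by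
          refine Int.ModEq.sum fun i _ => ?_
          simpa using h2.pow i
        rw [sum_const, card_range, nsmul_eq_mul, mul_one] at h3
        exact (Int.modEq_zero_iff_dvd.1 (h3.trans (by simp [Int.ModEq])))
      · have := hpk.symm
        rw [Nat.modEq_iff_dvd] at this
        exact_mod_cast this
    simpa using h1.pow Λ
  · rw [Nat.ModEq.comm, Nat.modEq_iff_dvd]
    push_cast
    refine Finset.prod_dvd_of_coprime (fun r hr s hs hrs => ?_) fun r hr => ?_
    · simp only [Function.onFun]
      rw [coe_filter] at hr hs
      rw [Nat.isCoprime_iff_coprime]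
      exact (Nat.coprime_primes (hQ r hr.1).1 (hQ s hs.1).1).2 hrs
    · rw [mem_filter] at hr
      have hrp := (hQ r hr.1).1
      have hne : p ≠ r := fun h => hpQ (h ▸ hr.1)
      have hra : IsCoprime (p:ℤ) (r:ℤ) := by
        rw [Nat.isCoprime_iff_coprime]
        exact (Nat.coprime_primes hp hrp).2 hne
      have h4 := Int.ModEq.pow_card_sub_one_eq_one hrp hra
      obtain ⟨j, hj⟩ := (hQ r hr.1).2
      rw [← Int.modEq_iff_dvd, hj, mul_assoc, pow_mul]
      simpa using (h4.pow _).symm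

lemma carm_count {k Λ z s t t0 : ℕ} {x : ℝ} (hk : 1 ≤ k) (hΛ : 1 ≤ Λ) (Q P : Finset ℕ)
    (hQ : ∀ q ∈ Q, q.Prime ∧ (q - 1) ∣ Λ ∧ q ≤ z) (hz : 1 ≤ z)
    (hs : #{q ∈ Q | q ∣ k} ≤ s)
    (hP : ∀ p ∈ P, p.Prime ∧ p ∉ Q ∧ p ≡ 1 [MOD k] ∧ (p - 1) ∣ k * ∏ q ∈ Q, q)
    (hx : 1 ≤ x) (hPx : ∀ p ∈ P, (p:ℝ) ≤ x)
    (ht0 : (Λ * z ^ s : ℝ) * Real.log (k * ∏ q ∈ Q, q : ℕ) < t0) (ht : t0 + 1 ≤ t) :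
    ∃ M : Finset ℕ, (∀ m ∈ M, IsCarmichael m ∧ (m:ℝ) ≤ x ^ t ∧ ∀ p, p.Prime → p ∣ m → p ∈ P) ∧
      (#P).choose t ≤ #M * (#P + 1) ^ t0 := by
  set L := ∏ q ∈ Q, q with hL
  have hLpos : 0 < L := prod_pos fun q hq => (hQ q hq).1.pos
  have hkL : 0 < k * L := by positivity
  haveI : NeZero (k * L) := ⟨hkL.ne'⟩
  have hcop : ∀ p ∈ P, Nat.Coprime p (k * L) := by
    intro p hp
    obtain ⟨h1, h2, h3, h4⟩ := hP p hp
    refine Nat.Coprime.mul_right ?_ ?_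
    · have := h3.gcd_eq
      rw [Nat.gcd_one_left] at this
      exact this
    · refine Nat.Coprime.prod_right fun q hq => ?_
      exact (Nat.coprime_primes h1 (hQ q hq).1).2 fun h => h2 (h ▸ hq)
  let g : ℕ → (ZMod (k * L))ˣ := fun p =>
    if h : Nat.Coprime p (k * L) then ZMod.unitOfCoprime p h else 1
  have hgval : ∀ p ∈ P, ((g p : (ZMod (k * L))ˣ) : ZMod (k * L)) = (p : ZMod (k * L)) := by
    intro p hp
    simp only [g, dif_pos (hcop p hp), ZMod.coe_unitOfCoprime]
  set gg := ∏ q ∈ Q with q ∣ k, q with hgg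
  have hggz : gg ≤ z ^ s := by
    calc gg ≤ z ^ #{q ∈ Q | q ∣ k} := prod_le_pow_card _ _ _ fun q hq => (hQ q (mem_filter.1 hq).1).2.2
      _ ≤ z ^ s := Nat.pow_le_pow_right hz hs
  have hggpos : 0 < gg := prod_pos fun q hq => (hQ q (mem_filter.1 hq).1).1.pos
  have hgpow : ∀ p ∈ P, g p ^ (Λ * gg) = 1 := by
    intro p hp
    obtain ⟨h1, h2, h3, h4⟩ := hP p hp
    apply Units.ext
    rw [Units.val_pow_eq_pow_val, hgval p hp, Units.val_one]
    have := order_mod (Λ := Λ) Q (fun q hq => ⟨(hQ q hq).1, (hQ q hq).2.1⟩) h1 h2 h3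
    exact_mod_cast (ZMod.natCast_eq_natCast_iff _ _ _).2 this
  have hzero : ∀ R ⊆ P, t0 ≤ #R → ∃ S ⊆ R, S.Nonempty ∧ ∏ i ∈ S, g i = 1 := by
    intro R hR hRc
    refine zero_sum' (Λ * gg) (Nat.mul_pos hΛ hggpos) g R (fun i hi => hgpow i (hR hi)) ?_
    have hcard : (Fintype.card (ZMod (k * L))ˣ) ≤ k * L := by
      rw [ZMod.card_units_eq_totient]; exact Nat.totient_le _
    have h1 : Real.log (Fintype.card (ZMod (k * L))ˣ) ≤ Real.log (k * L : ℕ) := by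
      refine Real.log_le_log (by exact_mod_cast Fintype.card_pos) (by exact_mod_cast hcard)
    have h2 : (t0:ℝ) ≤ #R := by exact_mod_cast hRc
    refine lt_of_le_of_lt ?_ (ht0.trans_le h2)
    have h3 : (gg:ℝ) ≤ (z:ℝ) ^ s := by exact_mod_cast hggz
    have h4 : 0 ≤ Real.log (Fintype.card (ZMod (k * L))ˣ) := Real.log_natCast_nonneg _
    push_cast at h1 ⊢
    gcongr
  have hcount := zero_sum_count g P t t0 hzero
  set F := {S ∈ P.powerset | ∏ i ∈ S, g i = 1 ∧ t < #S + t0 ∧ #S ≤ t} with hF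
  refine ⟨F.image fun S => ∏ p ∈ S, p, fun m hm => ?_, ?_⟩
  · rw [mem_image] at hm
    obtain ⟨S, hS, rfl⟩ := hm
    rw [hF, mem_filter, mem_powerset] at hS
    obtain ⟨hSP, hS1, hS2, hS3⟩ := hS
    refine ⟨carm_of (L := L) (k := k) S (fun p hp => ⟨(hP p (hSP hp)).1, (hP p (hSP hp)).2.2.2⟩)
      (by omega) ?_, ?_, ?_⟩
    · rw [← ZMod.natCast_eq_natCast_iff]
      have := congrArg (Units.val) hS1
      rw [Units.coe_prod, Units.val_one] at this
      push_cast
      rw [← this]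
      exact prod_congr rfl fun p hp => (hgval p (hSP hp)).symm
    · push_cast
      calc ∏ p ∈ S, (p:ℝ) ≤ ∏ p ∈ S, x := prod_le_prod (fun _ _ => by positivity) fun p hp => hPx p (hSP hp)
        _ = x ^ #S := by rw [prod_const]
        _ ≤ x ^ t := pow_le_pow_right₀ hx hS3
    · intro p hp hpd
      obtain ⟨q, hq, hpq⟩ := (hp.prime.dvd_finset_prod_iff _).1 hpd
      rw [(Nat.prime_dvd_prime_iff_eq hp (hP q (hSP hq)).1).1 hpq]
      exact hSP hq
  · rw [card_image_of_injOn]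
    · exact hcount
    · intro S hS S' hS' h
      rw [mem_coe, hF, mem_filter, mem_powerset] at hS hS'
      simp only at h
      rw [← Nat.primeFactors_prod (s := S) (fun p hp => (hP p (hS.1 hp)).1),
        ← Nat.primeFactors_prod (s := S') (fun p hp => (hP p (hS'.1 hp)).1)]
      exact congrArg _ h

end CarmFrob

end Part13

section Part14

open Finset
namespace CarmFrob

lemma primePi_lower (y : ℝ) (hy : 400000001 ≤ y) : y / 4 ≤ primePi y * Real.log y := by
  have hfl : 400000000 ≤ ⌊y⌋₊ := Nat.le_floor (by push_cast; linarith)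
  have h1 := theta_lower ⌊y⌋₊ hfl
  have h2 : y < ⌊y⌋₊ + 1 := Nat.lt_floor_add_one y
  have hl := Real.log_two_gt_d9
  have h3 : Chebyshev.theta (⌊y⌋₊ : ℝ) ≤ primePi y * Real.log y := by
    unfold Chebyshev.theta
    rw [Nat.floor_natCast]
    have hpi : primePi y = #((Ioc 0 ⌊y⌋₊).filter Nat.Prime) := by
      unfold primePi
      rw [← Set.ncard_coe_finset]
      congr 1
      ext p
      simp only [Set.mem_setOf_eq, coe_filter, mem_Ioc]
      constructor
      · rintro ⟨h, h'⟩; exact ⟨⟨h.pos, Nat.le_floor h'⟩, h⟩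
      · rintro ⟨⟨_, h'⟩, h⟩; exact ⟨h, (Nat.le_floor_iff (by linarith)).1 h'⟩
    rw [hpi]
    calc _ ≤ ∑ p ∈ (Ioc 0 ⌊y⌋₊).filter Nat.Prime, Real.log y := by
          refine sum_le_sum fun p hp => ?_
          rw [mem_filter, mem_Ioc] at hp
          refine Real.log_le_log (by exact_mod_cast hp.2.pos) ?_
          exact (Nat.le_floor_iff (by linarith)).1 hp.1.2
      _ = _ := by rw [sum_const, nsmul_eq_mul]
  have h4 : (400000000:ℝ) ≤ ⌊y⌋₊ := by exact_mod_cast hfl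
  nlinarith

lemma bad_k (Q : Finset ℕ) (K n zm H : ℕ) (hQ : ∀ q ∈ Q, q.Prime ∧ zm ≤ q) (hzm : 0 < zm)
    (hH : 0 < H) (hQc : #Q ≤ H * zm) (hn : (2 * H) ^ 2 ≤ n) :
    #{k ∈ Ioc 0 K | 2 * n ≤ #{q ∈ Q | q ∣ k}} * 2 ^ (2 * n) ≤ K := by
  set s := 2 * n with hs
  have hsub : {k ∈ Ioc 0 K | s ≤ #{q ∈ Q | q ∣ k}} ⊆
      (Q.powersetCard s).biUnion fun S => {k ∈ Ioc 0 K | ∏ q ∈ S, q ∣ k} := by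
    intro k hk
    rw [mem_filter] at hk
    obtain ⟨S, hS, hSc⟩ := exists_subset_card_eq hk.2
    rw [mem_biUnion]
    refine ⟨S, mem_powersetCard.2 ⟨hS.trans (filter_subset _ _), hSc⟩, ?_⟩
    rw [mem_filter]
    refine ⟨hk.1, prod_primes_dvd k (fun q hq => (hQ q (mem_filter.1 (hS hq)).1).1.prime)
      fun q hq => (mem_filter.1 (hS hq)).2⟩
  have h1 : #{k ∈ Ioc 0 K | s ≤ #{q ∈ Q | q ∣ k}} * zm ^ s ≤ (#Q).choose s * K := by
    calc _ ≤ (∑ S ∈ Q.powersetCard s, #{k ∈ Ioc 0 K | ∏ q ∈ S, q ∣ k}) * zm ^ s :=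
          Nat.mul_le_mul_right _ ((card_le_card hsub).trans card_biUnion_le)
      _ = ∑ S ∈ Q.powersetCard s, #{k ∈ Ioc 0 K | ∏ q ∈ S, q ∣ k} * zm ^ s := by rw [sum_mul]
      _ ≤ ∑ S ∈ Q.powersetCard s, K := by
          refine sum_le_sum fun S hS => ?_
          rw [mem_powersetCard] at hS
          rw [Nat.Ioc_filter_dvd_card_eq_div]
          have : zm ^ s ≤ ∏ q ∈ S, q := by
            rw [← hS.2, ← prod_const]
            exact prod_le_prod' fun q hq => (hQ q (hS.1 hq)).2
          exact (Nat.mul_le_mul_left _ this).trans (Nat.div_mul_le_self _ _)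
      _ = _ := by rw [sum_const, card_powersetCard, smul_eq_mul]
  have h2 : s.factorial * (#Q).choose s ≤ (#Q) ^ s := by
    rw [← Nat.descFactorial_eq_factorial_mul_choose]; exact Nat.descFactorial_le_pow _ _
  have h3 : (2 * H) ^ s ≤ s.factorial := by
    calc (2 * H) ^ s = ((2 * H) ^ 2) ^ n := by rw [← pow_mul]
      _ ≤ n ^ n := Nat.pow_le_pow_left hn n
      _ ≤ n.factorial * n ^ (s - n) := by
          rw [show s - n = n by omega]; exact Nat.le_mul_of_pos_left _ n.factorial_pos
      _ ≤ s.factorial := Nat.factorial_mul_pow_sub_le_factorial (by omega)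
  set B := #{k ∈ Ioc 0 K | s ≤ #{q ∈ Q | q ∣ k}}
  have h4 : B * 2 ^ s * (H ^ s * zm ^ s) ≤ K * (H ^ s * zm ^ s) := by
    calc B * 2 ^ s * (H ^ s * zm ^ s) = (2 * H) ^ s * (B * zm ^ s) := by rw [mul_pow]; ring
      _ ≤ s.factorial * ((#Q).choose s * K) := Nat.mul_le_mul h3 h1
      _ = (s.factorial * (#Q).choose s) * K := by ring
      _ ≤ (#Q) ^ s * K := Nat.mul_le_mul_right _ h2
      _ ≤ (H * zm) ^ s * K := Nat.mul_le_mul_right _ (Nat.pow_le_pow_left hQc s)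
      _ = _ := by rw [mul_pow]; ring
  exact Nat.le_of_mul_le_mul_right h4 (by positivity)

lemma choose_k (good : ℕ → Prop) (D Q : Finset ℕ) (hD : ∀ d ∈ D, 0 < d) (Kr N0 B : ℝ) (s : ℕ)
    (hKr : 0 ≤ Kr)
    (hA : ∀ d ∈ D, N0 ≤ ({p : ℕ | p.Prime ∧ (p:ℝ) < d * Kr ∧ (p:ℤ) ≡ 1 [ZMOD d] ∧ good p}.ncard : ℝ))
    (hB : (#{k ∈ Ioc 0 ⌊Kr⌋₊ | s ≤ #{q ∈ Q | q ∣ k}} : ℝ) ≤ B)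
    (hpos : 0 < #D * (N0 - B - #Q)) :
    ∃ k ∈ Ioc 0 ⌊Kr⌋₊, #{q ∈ Q | q ∣ k} < s ∧ ∃ D' ⊆ D,
      (∀ d ∈ D', (d * k + 1).Prime ∧ ((d * k + 1 : ℕ) : ℝ) < d * Kr ∧ good (d * k + 1) ∧ d * k + 1 ∉ Q) ∧
      #D * (N0 - B - #Q) ≤ Kr * #D' := by
  classical
  let W : ℕ → ℕ → Prop := fun d k => (d * k + 1).Prime ∧ ((d * k + 1 : ℕ) : ℝ) < d * Kr ∧ good (d * k + 1) ∧ d * k + 1 ∉ Q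
  set Bad := {k ∈ Ioc 0 ⌊Kr⌋₊ | s ≤ #{q ∈ Q | q ∣ k}} with hBad
  set Gd := {k ∈ Ioc 0 ⌊Kr⌋₊ | ¬ s ≤ #{q ∈ Q | q ∣ k}} with hGd
  have h1 : ∀ d ∈ D, N0 - B - #Q ≤ (#{k ∈ Gd | W d k} : ℝ) := by
    intro d hd
    have hdpos : (0:ℝ) < d := by exact_mod_cast hD d hd
    have hsub : {p : ℕ | p.Prime ∧ (p:ℝ) < d * Kr ∧ (p:ℤ) ≡ 1 [ZMOD d] ∧ good p} ⊆
        ↑(({k ∈ Gd | W d k} ∪ Bad).image (fun k => d * k + 1) ∪ Q) := by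
      rintro p ⟨hp, hpy, hpd, hpg⟩
      have hpd' : (d:ℤ) ∣ ((p - 1 : ℕ) : ℤ) := by
        rw [Nat.cast_sub hp.one_le]
        have := (Int.modEq_iff_dvd.1 hpd.symm)
        simpa using this
      obtain ⟨k, hk⟩ := Int.natCast_dvd_natCast.1 hpd'
      have hpk : p = d * k + 1 := by have := hp.one_le; omega
      have hk0 : 0 < k := by
        rcases Nat.eq_zero_or_pos k with h | h
        · subst h; have := hp.two_le; omega
        · exact h
      have hkK : k ≤ ⌊Kr⌋₊ := by
        refine Nat.le_floor ?_
        have hpy2 := hpy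
        rw [hpk] at hpy2; push_cast at hpy2
        have : (d:ℝ) * k < d * Kr := by linarith
        exact (lt_of_mul_lt_mul_left this hdpos.le).le
      rw [mem_coe, mem_union]
      by_cases hpQ : p ∈ Q
      · right; exact hpQ
      left
      rw [mem_image]
      refine ⟨k, ?_, hpk.symm⟩
      rw [mem_union]
      by_cases hb : s ≤ #{q ∈ Q | q ∣ k}
      · right; rw [hBad, mem_filter, mem_Ioc]; exact ⟨⟨hk0, hkK⟩, hb⟩
      · left; rw [mem_filter, hGd, mem_filter, mem_Ioc]
        refine ⟨⟨⟨hk0, hkK⟩, hb⟩, ?_⟩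
        simp only [W]
        rw [← hpk]; exact ⟨hp, hpy, hpg, hpQ⟩
    have h2 := Set.ncard_le_ncard hsub (finite_toSet _)
    rw [Set.ncard_coe_finset] at h2
    have h3 : #(({k ∈ Gd | W d k} ∪ Bad).image (fun k => d * k + 1) ∪ Q) ≤
        #{k ∈ Gd | W d k} + #Bad + #Q :=
      (card_union_le _ _).trans (Nat.add_le_add_right (card_image_le.trans (card_union_le _ _)) _)
    have h4 : ({p : ℕ | p.Prime ∧ (p:ℝ) < d * Kr ∧ (p:ℤ) ≡ 1 [ZMOD d] ∧ good p}.ncard : ℝ) ≤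
        #{k ∈ Gd | W d k} + #Bad + #Q := by exact_mod_cast h2.trans h3
    have := hA d hd
    linarith
  set c := #D * (N0 - B - #Q) with hc
  have hsum : c ≤ ∑ k ∈ Gd, (#{d ∈ D | W d k} : ℝ) := by
    have h5 : ∑ k ∈ Gd, (#{d ∈ D | W d k} : ℝ) = ∑ d ∈ D, (#{k ∈ Gd | W d k} : ℝ) := by
      have := sum_card_bipartiteAbove_eq_sum_card_bipartiteBelow (s := D) (t := Gd) W
      simp only [bipartiteAbove, bipartiteBelow] at this
      exact_mod_cast this.symm
    rw [h5, hc, ← nsmul_eq_mul]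
    exact card_nsmul_le_sum _ _ _ h1
  by_contra hcon
  push Not at hcon
  have h6 : ∀ k ∈ Gd, Kr * (#{d ∈ D | W d k} : ℝ) < c := by
    intro k hk
    rw [hGd, mem_filter] at hk
    exact hcon k hk.1 (not_le.1 hk.2) _ (filter_subset _ _) fun d hd => (mem_filter.1 hd).2
  rcases Gd.eq_empty_or_nonempty with h | h
  · rw [h, sum_empty] at hsum; linarith
  · have h7 := sum_lt_sum_of_nonempty h h6
    rw [← mul_sum, sum_const, nsmul_eq_mul] at h7
    have h8 : (#Gd : ℝ) ≤ Kr := by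
      have : #Gd ≤ ⌊Kr⌋₊ := (card_filter_le _ _).trans (by simp)
      exact (Nat.cast_le.2 this).trans (Nat.floor_le hKr)
    nlinarith

end CarmFrob

end Part14

section Part15

open Finset
namespace CarmFrob

lemma exists_D (Q : Finset ℕ) (z u : ℕ) (hQ : ∀ q ∈ Q, q.Prime ∧ q ≤ z) :
    ∃ D : Finset ℕ, #D = (#Q).choose u ∧ ∀ d ∈ D, 0 < d ∧ d ∣ ∏ q ∈ Q, q ∧ d ≤ z ^ u ∧
      ∀ p, p.Prime → p ∣ d → p ∈ Q := by
  refine ⟨(Q.powersetCard u).image fun S => ∏ q ∈ S, q, ?_, ?_⟩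
  · rw [card_image_of_injOn, card_powersetCard]
    intro S hS S' hS' h
    rw [mem_coe, mem_powersetCard] at hS hS'
    simp only at h
    rw [← Nat.primeFactors_prod (s := S) (fun p hp => (hQ p (hS.1 hp)).1),
      ← Nat.primeFactors_prod (s := S') (fun p hp => (hQ p (hS'.1 hp)).1)]
    exact congrArg _ h
  · intro d hd
    rw [mem_image] at hd
    obtain ⟨S, hS, rfl⟩ := hd
    rw [mem_powersetCard] at hS
    refine ⟨prod_pos fun q hq => (hQ q (hS.1 hq)).1.pos, prod_dvd_prod_of_subset _ _ _ hS.1, ?_, ?_⟩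
    · rw [← hS.2]; exact prod_le_pow_card _ _ _ fun q hq => (hQ q (hS.1 hq)).2
    · intro p hp hpd
      obtain ⟨q, hq, hpq⟩ := (hp.prime.dvd_finset_prod_iff _).1 hpd
      rw [(Nat.prime_dvd_prime_iff_eq hp (hQ q (hS.1 hq)).1).1 hpq]
      exact hS.1 hq

lemma choose_lower (N u a b : ℕ) (hu : u ≤ b) (h : a * b + u ≤ N + 1) : a ^ u ≤ N.choose u := by
  have h1 : (N + 1 - u) ^ u ≤ u.factorial * N.choose u := by
    rw [← Nat.descFactorial_eq_factorial_mul_choose]; exact Nat.pow_sub_le_descFactorial N u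
  have h2 : u.factorial ≤ b ^ u := (Nat.factorial_le_pow u).trans (Nat.pow_le_pow_left hu u)
  rcases Nat.eq_zero_or_pos u with h0 | h0
  · subst h0; simp
  have h3 : (a * b) ^ u ≤ b ^ u * N.choose u :=
    (Nat.pow_le_pow_left (by omega) u).trans (h1.trans (Nat.mul_le_mul_right _ h2))
  rw [mul_pow, mul_comm] at h3
  exact Nat.le_of_mul_le_mul_left h3 (by have : 0 < b := by omega
                                         positivity)

/-- eventual conditions on `T` -/
lemma log_event (A B c : ℝ) (hc : 0 < c) :
    ∀ᶠ T : ℕ in Filter.atTop, A * Real.log (T:ℝ) + B ≤ c * T := by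
  have h := (Real.isLittleO_log_id_atTop.comp_tendsto tendsto_natCast_atTop_atTop).bound
      (show (0:ℝ) < c / 2 / (|A| + 1) by positivity)
  have h2 : ∀ᶠ T : ℕ in Filter.atTop, B / (c / 2) ≤ (T:ℝ) :=
    tendsto_natCast_atTop_atTop.eventually_ge_atTop _
  filter_upwards [h, h2] with T hT hT2
  simp only [Function.comp, id, Real.norm_eq_abs] at hT
  rw [abs_of_nonneg (by positivity : (0:ℝ) ≤ (T:ℝ))] at hT
  have h3 : A * Real.log T ≤ c / 2 * T := by
    calc A * Real.log T ≤ |A * Real.log T| := le_abs_self _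
      _ = |A| * |Real.log T| := abs_mul _ _
      _ ≤ (|A| + 1) * (c / 2 / (|A| + 1) * T) := by gcongr; linarith
      _ = c / 2 * T := by field_simp
  rw [div_le_iff₀ (by positivity)] at hT2
  linarith

end CarmFrob

end Part15

section Part16

open Finset
namespace CarmFrob

set_option maxHeartbeats 2000000 in
lemma step1 (f : Polynomial ℤ) (n : ℕ) (hn : 1 ≤ n) (η : ℝ) (hη0 : 0 < η) (hη1 : η < 1 / 16)
    (x₀ : ℝ) (qstar : ℝ → ℕ) (hq : ∀ x : ℝ, x₀ ≤ x → Real.log x < (qstar x : ℝ))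
    (hAP : ∀ x : ℝ, x₀ ≤ x → ∀ y : ℝ, x ^ ((1 : ℝ) / 2) < y → y ≤ x →
        ∀ q : ℕ, 0 < q → (q : ℝ) ≤ x ^ η → ¬ (qstar x ∣ q) →
          ∀ a : ℤ, Int.gcd a (q : ℤ) = 1 →
            (primePi y : ℝ) / (2 * (n : ℝ) * (Nat.totient q : ℝ)) ≤
              ({p : ℕ | p.Prime ∧ (p : ℝ) < y ∧ (p : ℤ) ≡ a [ZMOD (q : ℤ)] ∧
                SplitsModLinear f p}.ncard : ℝ)) (e : ℕ) :
    ∃ T0 : ℕ, ∀ T : ℕ, T0 ≤ T → ∃ (Q P : Finset ℕ) (k : ℕ),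
      1 ≤ k ∧ (k:ℝ) ≤ Real.exp ((T:ℝ) ^ (606 + 2 * e)) ∧
      (∀ q ∈ Q, q.Prime ∧ (q - 1) ∣ (8 * T ^ (600 + 2 * e)).factorial ^ 2 ∧ q ≤ T ^ (900 + 3 * e)) ∧
      #Q ≤ T ^ (900 + 3 * e) ∧ #{q ∈ Q | q ∣ k} ≤ 2 * T ^ (600 + 2 * e) ∧
      (∀ p ∈ P, p.Prime ∧ p ∉ Q ∧ p ≡ 1 [MOD k] ∧ (p - 1) ∣ k * ∏ q ∈ Q, q) ∧
      (∀ p ∈ P, (p:ℝ) ≤ Real.exp ((T:ℝ) ^ (606 + 2 * e))) ∧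
      (∀ p ∈ P, SplitsModLinear f p) ∧
      Real.exp (η * ((284 + e) / (900 + 3 * e)) * (T:ℝ) ^ (606 + 2 * e)) ≤ #P := by
  obtain ⟨TQ, hTQ⟩ := lemmaQ e
  have hnR : (1:ℝ) ≤ n := by exact_mod_cast hn
  -- eventual conditions
  have ev1 := log_event (606 + 2 * e + (900 + 3 * e)) (Real.log (32 * n)) 1 one_pos
  have ev2 := log_event ((286 + e) + (606 + 2 * e)) (Real.log (16 * n)) (2 * η / (900 + 3 * e))
    (by positivity)
  have ev3 : ∀ᶠ T : ℕ in Filter.atTop, max x₀ 800000002 ≤ (T:ℝ) :=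
    tendsto_natCast_atTop_atTop.eventually_ge_atTop _
  obtain ⟨T1, hT1⟩ := Filter.eventually_atTop.1 (ev1.and (ev2.and ev3))
  refine ⟨max TQ T1, fun T hT => ?_⟩
  obtain ⟨E1, E2, E3⟩ := hT1 T ((le_max_right _ _).trans hT)
  obtain ⟨Q0, hQ0, hQ0c⟩ := hTQ T ((le_max_left _ _).trans hT)
  have E3a : x₀ ≤ T := (le_max_left _ _).trans E3
  have E3b : (800000002:ℝ) ≤ T := (le_max_right _ _).trans E3
  have hTn : 800000002 ≤ T := by exact_mod_cast E3b
  have hT0 : 0 < T := by omega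
  have hT1' : (1:ℝ) ≤ T := by linarith
  set w : ℝ := (T:ℝ) ^ (606 + 2 * e) with hw
  set M : ℝ := 900 + 3 * (e:ℝ) with hM
  have hM0 : 900 ≤ M := by rw [hM]; have : (0:ℝ) ≤ e := by positivity
                           linarith
  have hwT2 : 2 * (T:ℝ) ≤ w := by
    calc 2 * (T:ℝ) ≤ T * T := by gcongr; linarith
      _ = (T:ℝ) ^ 2 := by ring
      _ ≤ w := pow_le_pow_right₀ hT1' (by omega)
  have hw0 : 0 < w := by linarith
  have hlogT : 1 ≤ Real.log T := by
    rw [Real.le_log_iff_exp_le (by linarith)]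
    have := Real.exp_one_lt_d9; linarith
  have hlogw : Real.log w = (606 + 2 * e) * Real.log T := by
    rw [hw, Real.log_pow]; push_cast; ring
  set x := Real.exp w with hx
  have hxx0 : x₀ ≤ x := by
    have := Real.add_one_le_exp w
    linarith
  have hlogx : Real.log x = w := Real.log_exp w
  have hxη : x ^ η = Real.exp (w * η) := by rw [hx, Real.exp_mul]
  set Kr := Real.exp (w * (1 - η)) with hKr
  have hKr0 : 0 < Kr := Real.exp_pos _
  -- exp T bound
  have hE1 : 32 * n * w * (T:ℝ) ^ (900 + 3 * e) ≤ Real.exp T := by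
    rw [← Real.log_le_iff_le_exp (by positivity), Real.log_mul (by positivity) (by positivity),
      Real.log_mul (by positivity) (by positivity), hlogw, Real.log_pow]
    push_cast
    linarith
  have hKrT : Real.exp T ≤ Kr := by
    rw [hKr]; apply Real.exp_le_exp.2; nlinarith
  have hTM1 : (1:ℝ) ≤ (T:ℝ) ^ (900 + 3 * e) := one_le_pow₀ hT1'
  set q0 := (qstar x).minFac with hq0
  set Q := Q0.erase q0 with hQ
  have hQprop : ∀ q ∈ Q, q.Prime ∧ T ^ (890 + 3 * e) < q ∧ q ≤ T ^ (900 + 3 * e) ∧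
      (q - 1) ∣ (8 * T ^ (600 + 2 * e)).factorial ^ 2 := fun q hq => hQ0 q (mem_of_mem_erase hq)
  have hQcard : T ^ (893 + 3 * e) ≤ #Q + 1 := by
    have := pred_card_le_card_erase (s := Q0) (a := q0)
    rw [← hQ] at this
    omega
  have hQcard2 : #Q ≤ T ^ (900 + 3 * e) := by
    have : Q ⊆ Ioc 0 (T ^ (900 + 3 * e)) := fun q hq => by
      rw [mem_Ioc]; exact ⟨(hQprop q hq).1.pos, (hQprop q hq).2.2.1⟩
    simpa using card_le_card this
  -- u
  set u := ⌊η * w / (M * Real.log T)⌋₊ with hu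
  have hden : 0 < M * Real.log T := by positivity
  have hu1 : (u:ℝ) * (M * Real.log T) ≤ η * w := by
    rw [← le_div_iff₀ hden]; exact Nat.floor_le (by positivity)
  have hu2 : η * w < (u + 1) * (M * Real.log T) := by
    rw [← div_lt_iff₀ hden]; exact Nat.lt_floor_add_one _
  have huw : u ≤ T ^ (606 + 2 * e) := by
    have : (u:ℝ) ≤ w := by
      have h1 : (1:ℝ) ≤ M * Real.log T := by nlinarith
      have h2 : (u:ℝ) * 1 ≤ u * (M * Real.log T) := by gcongr
      nlinarith
    rw [hw] at this; exact_mod_cast this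
  obtain ⟨D, hDc, hD⟩ := exists_D Q (T ^ (900 + 3 * e)) u fun q hq => ⟨(hQprop q hq).1, (hQprop q hq).2.2.1⟩
  have hDlow : (T ^ (286 + e)) ^ u ≤ #D := by
    rw [hDc]
    refine choose_lower _ u _ (T ^ (606 + 2 * e)) huw ?_
    have e1 : T ^ (286 + e) * T ^ (606 + 2 * e) = T ^ (892 + 3 * e) := by
      rw [← pow_add]; congr 1; ring
    have e2 : T ^ (606 + 2 * e) ≤ T ^ (892 + 3 * e) := Nat.pow_le_pow_right hT0 (by omega)
    have e3 : T ^ (892 + 3 * e) * 2 ≤ T ^ (893 + 3 * e) := by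
      rw [show 893 + 3 * e = (892 + 3 * e) + 1 by ring, pow_succ]
      exact Nat.mul_le_mul_left _ (by omega)
    omega
  have hDη : ∀ d ∈ D, (d:ℝ) ≤ Real.exp (w * η) := by
    intro d hd
    have h1 : (d:ℝ) ≤ ((T:ℝ) ^ (900 + 3 * e)) ^ u := by exact_mod_cast (hD d hd).2.2.1
    refine h1.trans ?_
    rw [← Real.log_le_iff_le_exp (by positivity), Real.log_pow, Real.log_pow]
    push_cast
    linarith
  -- number of primes
  set N0 := Kr / (8 * n * w) with hN0
  have hA : ∀ d ∈ D, N0 ≤ ({p : ℕ | p.Prime ∧ (p:ℝ) < d * Kr ∧ (p:ℤ) ≡ 1 [ZMOD d] ∧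
      SplitsModLinear f p}.ncard : ℝ) := by
    intro d hd
    have hd0 : 0 < d := (hD d hd).1
    have hd1 : (1:ℝ) ≤ d := by exact_mod_cast hd0
    have hdKr : d * Kr ≤ x := by
      calc d * Kr ≤ Real.exp (w * η) * Real.exp (w * (1 - η)) := by gcongr; exact hDη d hd
        _ = x := by rw [← Real.exp_add, hx]; congr 1; ring
    have hnd : ¬ qstar x ∣ d := by
      intro h
      have h1 : (1:ℝ) < qstar x := by have := hq x hxx0; linarith
      have h2 : qstar x ≠ 1 := by rintro h; rw [h] at h1; norm_num at h1
      have h3 := (hD d hd).2.2.2 q0 (Nat.minFac_prime h2) ((Nat.minFac_dvd _).trans h)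
      exact (mem_erase.1 h3).1 rfl
    have hKrd : Kr ≤ d * Kr := le_mul_of_one_le_left hKr0.le hd1
    refine le_trans ?_ (hAP x hxx0 (d * Kr) ?_ hdKr d hd0 ?_ hnd 1 (by simp))
    · have h4 : (400000001:ℝ) ≤ d * Kr := by
        have := Real.add_one_le_exp (T:ℝ)
        linarith
      have h5 := primePi_lower (d * Kr) h4
      have h6 : Real.log (d * Kr) ≤ w := by
        rw [← hlogx]; exact Real.log_le_log (by linarith) hdKr
      have h7 : d * Kr / 4 ≤ primePi (d * Kr) * w := h5.trans (by gcongr)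
      have h8 : (0:ℝ) < d.totient := by exact_mod_cast Nat.totient_pos.2 hd0
      have h9 : (d.totient:ℝ) ≤ d := by exact_mod_cast Nat.totient_le d
      rw [hN0, div_le_div_iff₀ (by positivity) (by positivity)]
      calc Kr * (2 * n * d.totient) ≤ Kr * (2 * n * d) := by gcongr
        _ = (d * Kr / 4) * (8 * n) := by ring
        _ ≤ (primePi (d * Kr) * w) * (8 * n) := by gcongr
        _ = _ := by ring
    · refine lt_of_lt_of_le ?_ hKrd
      rw [hx, ← Real.exp_mul, hKr]
      apply Real.exp_lt_exp.2
      nlinarith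
    · rw [hxη]; exact hDη d hd
  -- bad k
  have hbad := bad_k Q ⌊Kr⌋₊ (T ^ (600 + 2 * e)) (T ^ (890 + 3 * e)) (T ^ 10)
    (fun q hq => ⟨(hQprop q hq).1, (hQprop q hq).2.1.le⟩) (by positivity) (by positivity)
    (hQcard2.trans (le_of_eq (by ring))) (by
      calc (2 * T ^ 10) ^ 2 = 2 * 2 * T ^ 20 := by ring
        _ ≤ T * T * T ^ 20 := by gcongr <;> omega
        _ = T ^ 22 := by ring
        _ ≤ _ := Nat.pow_le_pow_right hT0 (by omega))
  set s := 2 * T ^ (600 + 2 * e) with hs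
  have hB : (#{k ∈ Ioc 0 ⌊Kr⌋₊ | s ≤ #{q ∈ Q | q ∣ k}} : ℝ) ≤ Kr / (32 * n * w) := by
    have h1 : (#{k ∈ Ioc 0 ⌊Kr⌋₊ | s ≤ #{q ∈ Q | q ∣ k}} : ℝ) * 2 ^ s ≤ Kr := by
      refine le_trans ?_ (Nat.floor_le hKr0.le)
      exact_mod_cast hbad
    rw [le_div_iff₀ (by positivity)]
    refine le_trans ?_ h1
    gcongr
    have h2 : Real.exp T ≤ 2 ^ s := by
      rw [hs, pow_mul]
      have h3 : Real.exp 1 ≤ 2 ^ 2 := by have := Real.exp_one_lt_d9; norm_num; linarith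
      calc Real.exp T = Real.exp 1 ^ T := by rw [← Real.exp_nat_mul, mul_one]
        _ ≤ (2 ^ 2) ^ T := by gcongr
        _ ≤ (2 ^ 2) ^ (T ^ (600 + 2 * e)) := by
          refine pow_le_pow_right₀ (by norm_num) ?_
          exact Nat.le_self_pow (by omega) T
    refine le_trans ?_ (hE1.trans h2)
    exact le_mul_of_one_le_right (by positivity) hTM1
  have hQs : (#Q : ℝ) ≤ Kr / (32 * n * w) := by
    rw [le_div_iff₀ (by positivity)]
    have h1 : (#Q:ℝ) ≤ (T:ℝ) ^ (900 + 3 * e) := by exact_mod_cast hQcard2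
    calc (#Q:ℝ) * (32 * n * w) ≤ (T:ℝ) ^ (900 + 3 * e) * (32 * n * w) := by gcongr
      _ = 32 * n * w * (T:ℝ) ^ (900 + 3 * e) := by ring
      _ ≤ Kr := hE1.trans hKrT
  have hc : Kr / (16 * n * w) ≤ N0 - Kr / (32 * n * w) - #Q := by
    have h1 : N0 = Kr / (16 * n * w) + Kr / (32 * n * w) + Kr / (32 * n * w) := by
      rw [hN0]; field_simp; norm_num
    linarith
  have hDpos : (0:ℝ) < #D := by
    have : 0 < #D := lt_of_lt_of_le (by positivity) hDlow
    exact_mod_cast this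
  have hc0 : 0 < Kr / (16 * n * w) := by positivity
  obtain ⟨k, hk, hks, D', hD', hD'1, hD'2⟩ := choose_k (SplitsModLinear f) D Q (fun d hd => (hD d hd).1) Kr N0
    (Kr / (32 * n * w)) s hKr0.le hA hB (mul_pos hDpos (hc0.trans_le hc))
  rw [mem_Ioc] at hk
  refine ⟨Q, D'.image fun d => d * k + 1, k, hk.1, ?_, fun q hq => ⟨(hQprop q hq).1, (hQprop q hq).2.2.2,
    (hQprop q hq).2.2.1⟩, hQcard2, hks.le, ?_, ?_, ?_, ?_⟩
  · have h1 : (k:ℝ) ≤ Kr := (Nat.cast_le.2 hk.2).trans (Nat.floor_le hKr0.le)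
    refine h1.trans (Real.exp_le_exp.2 ?_)
    nlinarith
  · intro p hp
    rw [mem_image] at hp
    obtain ⟨d, hd, rfl⟩ := hp
    obtain ⟨h1, h2, h3, h4⟩ := hD'1 d hd
    refine ⟨h1, h4, ?_, ?_⟩
    · simp [Nat.ModEq]
    · rw [Nat.add_sub_cancel, mul_comm]
      exact mul_dvd_mul_left _ (hD d (hD' hd)).2.1
  · intro p hp
    rw [mem_image] at hp
    obtain ⟨d, hd, rfl⟩ := hp
    obtain ⟨h1, h2, h3, h4⟩ := hD'1 d hd
    refine h2.le.trans ?_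
    calc d * Kr ≤ Real.exp (w * η) * Real.exp (w * (1 - η)) := by gcongr; exact hDη d (hD' hd)
        _ = x := by rw [← Real.exp_add, hx]; congr 1; ring
  · intro p hp
    rw [mem_image] at hp
    obtain ⟨d, hd, rfl⟩ := hp
    exact (hD'1 d hd).2.2.1
  · rw [card_image_of_injective _ (fun a b h => by
      simp only [Nat.add_right_cancel_iff] at h
      exact Nat.eq_of_mul_eq_mul_right hk.1 h)]
    have h1 : (#D:ℝ) ≤ (16 * n * w) * #D' := by
      have h2 : (#D:ℝ) * (Kr / (16 * n * w)) ≤ Kr * #D' := (by gcongr : _ ≤ _).trans hD'2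
      rw [mul_div_assoc', div_le_iff₀ (by positivity)] at h2
      have h3 : Kr * #D ≤ Kr * ((16 * n * w) * #D') := by linarith
      exact le_of_mul_le_mul_left h3 hKr0
    have h2 : Real.exp ((286 + e) * (η * w / M - Real.log T)) ≤ #D := by
      have h3 : (((T:ℝ) ^ (286 + e)) ^ u) ≤ #D := by exact_mod_cast hDlow
      refine le_trans ?_ h3
      rw [← Real.le_log_iff_exp_le (by positivity), Real.log_pow, Real.log_pow]
      push_cast
      have h4 : η * w / M - Real.log T ≤ u * Real.log T := by
        rw [sub_le_iff_le_add, div_le_iff₀ (by positivity)]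
        linarith
      calc (286 + (e:ℝ)) * (η * w / M - Real.log T) ≤ (286 + e) * (u * Real.log T) := by gcongr
        _ = _ := by ring
    have h5 : (16 * n * w) = Real.exp (Real.log (16 * n) + (606 + 2 * e) * Real.log T) := by
      rw [← hlogw, Real.exp_add, Real.exp_log (by positivity), Real.exp_log hw0]
    have h6 : Real.exp (η * ((284 + e) / M) * w) * (16 * n * w) ≤ #D := by
      rw [h5, ← Real.exp_add]
      refine le_trans (Real.exp_le_exp.2 ?_) h2
      have h7 : 2 * η / M * T ≤ 2 * η / M * w := by gcongr; linarith
      have h8 : (286 + (e:ℝ)) * (η * w / M - Real.log T) =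
        η * ((284 + e) / M) * w + 2 * η / M * w - (286 + e) * Real.log T := by ring
      rw [h8]
      linarith
    have h9 : (0:ℝ) < 16 * n * w := by positivity
    refine le_of_mul_le_mul_right ?_ h9
    linarith

end CarmFrob

end Part16

section Part17

open Finset
namespace CarmFrob

lemma t0_bound (e : ℕ) : ∃ T0 : ℕ, ∀ T : ℕ, T0 ≤ T → ∀ (Q : Finset ℕ) (k : ℕ), 1 ≤ k →
    (k:ℝ) ≤ Real.exp ((T:ℝ) ^ (606 + 2 * e)) → (∀ q ∈ Q, 0 < q ∧ q ≤ T ^ (900 + 3 * e)) →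
    #Q ≤ T ^ (900 + 3 * e) →
    ((((8 * T ^ (600 + 2 * e)).factorial ^ 2 : ℕ) : ℝ) * ((T ^ (900 + 3 * e) : ℕ) : ℝ) ^ (2 * T ^ (600 + 2 * e))) *
      Real.log (k * ∏ q ∈ Q, q : ℕ) < (⌈Real.exp ((T:ℝ) ^ (603 + 2 * e))⌉₊ : ℝ) := by
  have ev1 := log_event (600 + 2 * e) (Real.log 8) 1 one_pos
  have ev2 := log_event (902 + 3 * e) 0 1 one_pos
  obtain ⟨T1, hT1⟩ := Filter.eventually_atTop.1 (ev1.and ev2)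
  refine ⟨max 20 T1, fun T hT Q k hk hkw hQ hQc => ?_⟩
  obtain ⟨E1, E2⟩ := hT1 T ((le_max_right _ _).trans hT)
  have hTn : 20 ≤ T := (le_max_left _ _).trans hT
  have hT0 : 0 < T := by omega
  have hTR : (20:ℝ) ≤ T := by exact_mod_cast hTn
  have hTR1 : (1:ℝ) ≤ T := by linarith
  have hlogT : 0 ≤ Real.log T := Real.log_nonneg hTR1
  refine lt_of_lt_of_le ?_ (Nat.le_ceil _)
  set a : ℝ := (T:ℝ) ^ (600 + 2 * e) with ha
  have ha1 : 1 ≤ a := one_le_pow₀ hTR1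
  have h1 : (((8 * T ^ (600 + 2 * e)).factorial ^ 2 : ℕ) : ℝ) ≤ Real.exp (16 * a * T) := by
    have h2 : (((8 * T ^ (600 + 2 * e)).factorial : ℕ) : ℝ) ≤ Real.exp (8 * a * T) := by
      have h3 : (((8 * T ^ (600 + 2 * e)).factorial : ℕ) : ℝ) ≤
          (8 * a) ^ (8 * T ^ (600 + 2 * e)) := by
        have := Nat.factorial_le_pow (8 * T ^ (600 + 2 * e))
        rw [ha]; exact_mod_cast this
      refine h3.trans ?_
      rw [← Real.log_le_iff_le_exp (by positivity), Real.log_pow, Real.log_mul (by norm_num) (by positivity)]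
      have h4 : Real.log a = (600 + 2 * e) * Real.log T := by rw [ha, Real.log_pow]; push_cast; ring
      rw [h4]; push_cast; rw [← ha]
      gcongr
      linarith
    push_cast
    calc _ ≤ (Real.exp (8 * a * T)) ^ 2 := by gcongr
      _ = _ := by rw [← Real.exp_nat_mul]; congr 1; push_cast; ring
  have h2 : ((T ^ (900 + 3 * e) : ℕ) : ℝ) ^ (2 * T ^ (600 + 2 * e)) ≤ Real.exp (2 * a * T) := by
    rw [← Real.log_le_iff_le_exp (by positivity), Real.log_pow]
    push_cast
    rw [Real.log_pow, ← ha]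
    push_cast
    gcongr
    nlinarith
  have h3 : Real.log (k * ∏ q ∈ Q, q : ℕ) ≤ Real.exp T := by
    have hprod : ((∏ q ∈ Q, q : ℕ) : ℝ) ≤ Real.exp ((T:ℝ) ^ (900 + 3 * e) * T) := by
      have h5 : ∏ q ∈ Q, q ≤ (T ^ (900 + 3 * e)) ^ (T ^ (900 + 3 * e)) :=
        (prod_le_pow_card _ _ _ fun q hq => (hQ q hq).2).trans (Nat.pow_le_pow_right (by positivity) hQc)
      have h6 : ((∏ q ∈ Q, q : ℕ) : ℝ) ≤ ((T:ℝ) ^ (900 + 3 * e)) ^ (T ^ (900 + 3 * e)) := by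
        exact_mod_cast h5
      refine h6.trans ?_
      rw [← Real.log_le_iff_le_exp (by positivity), Real.log_pow, Real.log_pow]
      push_cast
      gcongr
      nlinarith
    have hpos : 0 < ∏ q ∈ Q, q := prod_pos fun q hq => (hQ q hq).1
    rw [Nat.cast_mul, Real.log_mul (by positivity) (by positivity)]
    have h7 : Real.log k ≤ (T:ℝ) ^ (606 + 2 * e) := (Real.log_le_iff_le_exp (by positivity)).2 hkw
    have h8 : Real.log ((∏ q ∈ Q, q : ℕ) : ℝ) ≤ (T:ℝ) ^ (900 + 3 * e) * T :=
      (Real.log_le_iff_le_exp (by positivity)).2 hprod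
    have h9 : (T:ℝ) ^ (606 + 2 * e) ≤ (T:ℝ) ^ (901 + 3 * e) := pow_le_pow_right₀ hTR1 (by omega)
    have h10 : (T:ℝ) ^ (900 + 3 * e) * T = (T:ℝ) ^ (901 + 3 * e) := by ring
    have h11 : (T:ℝ) ^ (901 + 3 * e) * 2 ≤ (T:ℝ) ^ (902 + 3 * e) := by
      rw [show 902 + 3 * e = (901 + 3 * e) + 1 by ring, pow_succ]
      gcongr; linarith
    have h12 : (T:ℝ) ^ (902 + 3 * e) ≤ Real.exp T := by
      rw [← Real.log_le_iff_le_exp (by positivity), Real.log_pow]; push_cast; linarith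
    linarith
  have hlog0 : 0 ≤ Real.log (k * ∏ q ∈ Q, q : ℕ) := Real.log_natCast_nonneg _
  calc _ ≤ (Real.exp (16 * a * T) * Real.exp (2 * a * T)) * Real.exp T := by gcongr
    _ = Real.exp (18 * a * T + T) := by rw [← Real.exp_add, ← Real.exp_add]; congr 1; ring
    _ < _ := by
      apply Real.exp_lt_exp.2
      have : (T:ℝ) ^ (603 + 2 * e) = a * T * (T * T) := by rw [ha]; ring
      rw [this]
      have h5 : T ≤ a * T := le_mul_of_one_le_left (by linarith) ha1
      have h6 : (20:ℝ) ≤ T * T := by nlinarith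
      nlinarith

lemma step2 (f : Polynomial ℤ) (n : ℕ) (hn : 1 ≤ n) (η : ℝ) (hη0 : 0 < η) (hη1 : η < 1 / 16)
    (x₀ : ℝ) (qstar : ℝ → ℕ) (hq : ∀ x : ℝ, x₀ ≤ x → Real.log x < (qstar x : ℝ))
    (hAP : ∀ x : ℝ, x₀ ≤ x → ∀ y : ℝ, x ^ ((1 : ℝ) / 2) < y → y ≤ x →
        ∀ q : ℕ, 0 < q → (q : ℝ) ≤ x ^ η → ¬ (qstar x ∣ q) →
          ∀ a : ℤ, Int.gcd a (q : ℤ) = 1 →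
            (primePi y : ℝ) / (2 * (n : ℝ) * (Nat.totient q : ℝ)) ≤
              ({p : ℕ | p.Prime ∧ (p : ℝ) < y ∧ (p : ℤ) ≡ a [ZMOD (q : ℤ)] ∧
                SplitsModLinear f p}.ncard : ℝ)) (e : ℕ) :
    ∃ T0 : ℕ, ∀ T : ℕ, T0 ≤ T → ∃ P : Finset ℕ, (∀ p ∈ P, SplitsModLinear f p) ∧
      Real.exp (η * ((284 + e) / (900 + 3 * e)) * (T:ℝ) ^ (606 + 2 * e)) ≤ #P ∧
      (#P : ℝ) ≤ Real.exp ((T:ℝ) ^ (606 + 2 * e)) ∧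
      ∀ t : ℕ, ⌈Real.exp ((T:ℝ) ^ (603 + 2 * e))⌉₊ + 1 ≤ t → ∃ M : Finset ℕ,
        (∀ m ∈ M, IsCarmichael m ∧ (m:ℝ) ≤ Real.exp ((T:ℝ) ^ (606 + 2 * e)) ^ t ∧
          ∀ p, p.Prime → p ∣ m → p ∈ P) ∧
        (#P).choose t ≤ #M * (#P + 1) ^ ⌈Real.exp ((T:ℝ) ^ (603 + 2 * e))⌉₊ := by
  obtain ⟨T1, hT1⟩ := step1 f n hn η hη0 hη1 x₀ qstar hq hAP e
  obtain ⟨T2, hT2⟩ := t0_bound e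
  refine ⟨max (max T1 T2) 1, fun T hT => ?_⟩
  have hT0 : 0 < T := (le_max_right _ _).trans hT
  obtain ⟨Q, P, k, h1, h2, h3, h4, h5, h6, h7, h8, h9⟩ :=
    hT1 T ((le_max_left _ _).trans ((le_max_left _ _).trans hT))
  have h10 := hT2 T ((le_max_right _ _).trans ((le_max_left _ _).trans hT)) Q k h1 h2
    (fun q hq => ⟨(h3 q hq).1.pos, (h3 q hq).2.2⟩) h4
  refine ⟨P, h8, h9, ?_, fun t ht => ?_⟩
  · have : P ⊆ Ioc 0 ⌊Real.exp ((T:ℝ) ^ (606 + 2 * e))⌋₊ := by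
      intro p hp
      rw [mem_Ioc]
      exact ⟨(h6 p hp).1.pos, Nat.le_floor (h7 p hp)⟩
    have h := card_le_card this
    rw [Nat.card_Ioc, Nat.sub_zero] at h
    exact (Nat.cast_le.2 h).trans (Nat.floor_le (Real.exp_pos _).le)
  · exact carm_count (z := T ^ (900 + 3 * e)) h1 (Nat.one_le_pow _ _ (Nat.factorial_pos _)) Q P h3
      (Nat.one_le_pow _ _ hT0) h5 h6 (Real.one_le_exp (by positivity)) h7 h10 ht

end CarmFrob

end Part17

section Part18

open Finset
namespace CarmFrob

lemma exists_T (N T0 : ℕ) (hN : N ≠ 0) (l : ℝ) (hl : (T0:ℝ) ^ N ≤ l) :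
    ∃ T : ℕ, T0 ≤ T ∧ (T:ℝ) ^ N ≤ l ∧ l < ((T:ℝ) + 1) ^ N := by
  have hl0 : 0 ≤ l := le_trans (by positivity) hl
  have hr0 : 0 ≤ l ^ ((N:ℝ)⁻¹) := Real.rpow_nonneg hl0 _
  have hr : (l ^ ((N:ℝ)⁻¹)) ^ N = l := Real.rpow_inv_natCast_pow hl0 hN
  refine ⟨⌊l ^ ((N:ℝ)⁻¹)⌋₊, ?_, ?_, ?_⟩
  · refine Nat.le_floor ?_
    refine le_of_pow_le_pow_left₀ hN hr0 ?_
    rw [hr]; exact hl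
  · conv_rhs => rw [← hr]
    exact pow_le_pow_left₀ (by positivity) (Nat.floor_le hr0) N
  · conv_lhs => rw [← hr]
    exact pow_lt_pow_left₀ (Nat.lt_floor_add_one _) hr0 hN

set_option maxHeartbeats 2000000 in
lemma main_count (f : Polynomial ℤ) (n : ℕ) (hn : 1 ≤ n) (η : ℝ) (hη0 : 0 < η) (hη1 : η < 1 / 16)
    (x₀ : ℝ) (qstar : ℝ → ℕ) (hq : ∀ x : ℝ, x₀ ≤ x → Real.log x < (qstar x : ℝ))
    (hAP : ∀ x : ℝ, x₀ ≤ x → ∀ y : ℝ, x ^ ((1 : ℝ) / 2) < y → y ≤ x →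
        ∀ q : ℕ, 0 < q → (q : ℝ) ≤ x ^ η → ¬ (qstar x ∣ q) →
          ∀ a : ℤ, Int.gcd a (q : ℤ) = 1 →
            (primePi y : ℝ) / (2 * (n : ℝ) * (Nat.totient q : ℝ)) ≤
              ({p : ℕ | p.Prime ∧ (p : ℝ) < y ∧ (p : ℤ) ≡ a [ZMOD (q : ℤ)] ∧
                SplitsModLinear f p}.ncard : ℝ)) (ε : ℝ) (hε : 0 < ε) :
    ∃ X₀ : ℝ, ∀ X : ℝ, X₀ ≤ X → ∃ M : Finset ℕ,
      (∀ m ∈ M, (m:ℝ) ≤ X ∧ IsCarmichael m ∧ ∀ p : ℕ, p.Prime → p ∣ m → SplitsModLinear f p) ∧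
      X ^ (η / 3 - ε) ≤ #M := by
  obtain ⟨e, he⟩ := exists_nat_ge (32 / ε)
  set κ : ℝ := (284 + e) / (900 + 3 * e) with hκ
  have heR : (0:ℝ) ≤ e := by positivity
  have hκ0 : 0 < κ := by positivity
  have hκ1 : κ ≤ 1 := by rw [hκ, div_le_one (by positivity)]; linarith
  have hκ3 : 1 / 3 - ε / 2 ≤ κ := by
    rw [hκ, le_div_iff₀ (by positivity)]
    rw [div_le_iff₀ hε] at he
    nlinarith
  obtain ⟨T1, hT1⟩ := step2 f n hn η hη0 hη1 x₀ qstar hq hAP e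
  have ev1 := log_event (607 + 2 * e) (Real.log 5) 1 one_pos
  have ev2 : ∀ᶠ T : ℕ in Filter.atTop, max (max (4 / ε) (1 / (η * κ))) (2 ^ (604 + 2 * e)) ≤ (T:ℝ) :=
    tendsto_natCast_atTop_atTop.eventually_ge_atTop _
  obtain ⟨T2, hT2⟩ := Filter.eventually_atTop.1 (ev1.and ev2)
  refine ⟨Real.exp (Real.exp (((max T1 T2 : ℕ) : ℝ) ^ (604 + 2 * e))), fun X hX => ?_⟩
  have hX0 : 0 < X := (Real.exp_pos _).trans_le hX
  set Y := Real.log X with hY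
  have hYX : Real.exp Y = X := Real.exp_log hX0
  have hY1 : Real.exp (((max T1 T2 : ℕ) : ℝ) ^ (604 + 2 * e)) ≤ Y :=
    (Real.le_log_iff_exp_le hX0).2 hX
  have hY0 : 0 < Y := (Real.exp_pos _).trans_le hY1
  set l := Real.log Y with hl
  have hlY : Real.exp l = Y := Real.exp_log hY0
  have hl1 : ((max T1 T2 : ℕ) : ℝ) ^ (604 + 2 * e) ≤ l := (Real.le_log_iff_exp_le hY0).2 hY1
  obtain ⟨T, hTm, hTl, hTu⟩ := exists_T (604 + 2 * e) _ (by omega) l hl1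
  obtain ⟨E1, E2⟩ := hT2 T ((le_max_right _ _).trans hTm)
  obtain ⟨P, hPs, hPl, hPu, hPM⟩ := hT1 T ((le_max_left _ _).trans hTm)
  have E2a : 4 / ε ≤ T := (le_max_left _ _).trans ((le_max_left _ _).trans E2)
  have E2b : 1 / (η * κ) ≤ T := (le_max_right _ _).trans ((le_max_left _ _).trans E2)
  have E2c : 2 ^ (604 + 2 * e) ≤ (T:ℝ) := (le_max_right _ _).trans E2
  have hT4 : (16:ℝ) ≤ T := by
    refine le_trans ?_ E2c
    calc (16:ℝ) = 2 ^ 4 := by norm_num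
      _ ≤ _ := pow_le_pow_right₀ (by norm_num) (by omega)
  have hT0 : (0:ℝ) < T := by linarith
  have hT1R : (1:ℝ) ≤ T := by linarith
  set w : ℝ := (T:ℝ) ^ (606 + 2 * e) with hw
  set E : ℝ := Real.exp ((T:ℝ) ^ (603 + 2 * e)) with hE
  set t0 := ⌈E⌉₊ with ht0
  have hw0 : 0 < w := by positivity
  have hw3 : 3 ≤ w := by
    calc (3:ℝ) ≤ T := by linarith
      _ ≤ w := le_self_pow₀ hT1R (by omega)
  -- upper bound for l
  have hlw : l ≤ w / T := by
    rw [le_div_iff₀ hT0]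
    have h1 : l ≤ (2 * (T:ℝ)) ^ (604 + 2 * e) := hTu.le.trans (by gcongr; linarith)
    rw [mul_pow] at h1
    calc l * T ≤ (2 ^ (604 + 2 * e) * (T:ℝ) ^ (604 + 2 * e)) * T := by gcongr
      _ ≤ (T * (T:ℝ) ^ (604 + 2 * e)) * T := by gcongr
      _ = w := by rw [hw]; ring
  have hE1 : 1 ≤ E := Real.one_le_exp (by positivity)
  have ht0E : (t0:ℝ) ≤ 2 * E := by
    have := Nat.ceil_lt_add_one (a := E) (by positivity)
    rw [← ht0] at this
    linarith
  have hC : 5 * E * w * T ≤ Y := by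
    rw [← hlY, ← Real.log_le_iff_le_exp (by positivity), Real.log_mul (by positivity) (by positivity),
      Real.log_mul (by positivity) (by positivity), Real.log_mul (by positivity) (by positivity),
      hE, Real.log_exp, hw, Real.log_pow]
    push_cast
    refine le_trans ?_ hTl
    have h1 : (T:ℝ) ≤ (T:ℝ) ^ (603 + 2 * e) := le_self_pow₀ hT1R (by omega)
    have h2 : (T:ℝ) ^ (604 + 2 * e) = (T:ℝ) ^ (603 + 2 * e) * T := by
      rw [show 604 + 2 * e = (603 + 2 * e) + 1 by ring, pow_succ]
    rw [h2]
    have h3 : (T:ℝ) ^ (603 + 2 * e) * 2 ≤ (T:ℝ) ^ (603 + 2 * e) * T := by gcongr; linarith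
    linarith
  clear_value w E
  have hEw : 0 < E * w := by positivity
  set t := ⌊Y / w⌋₊ with ht
  have ht1 : (t:ℝ) * w ≤ Y := by
    rw [← le_div_iff₀ hw0]; exact Nat.floor_le (by positivity)
  have ht2 : Y < (t + 1) * w := by
    rw [← div_lt_iff₀ hw0]; exact Nat.lt_floor_add_one _
  have htt : t0 + 1 ≤ t := by
    refine Nat.le_floor ?_
    push_cast
    rw [le_div_iff₀ hw0]
    have h1 : ((t0:ℝ) + 1) * w ≤ (5 * E) * w := by gcongr; linarith
    have h2 : 5 * E * w * 1 ≤ 5 * E * w * T := by gcongr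
    linarith
  obtain ⟨M, hM1, hM2⟩ := hPM t htt
  refine ⟨M, fun m hm => ?_, ?_⟩
  · obtain ⟨h1, h2, h3⟩ := hM1 m hm
    refine ⟨h2.trans ?_, h1, fun p hp hpm => hPs p (h3 p hp hpm)⟩
    rw [← Real.exp_nat_mul, ← hYX]
    exact Real.exp_le_exp.2 ht1
  set c := η * κ - 1 / T with hc
  have hc0 : 0 ≤ c := by
    rw [hc, sub_nonneg, div_le_iff₀ hT0]
    rwa [div_le_iff₀ (by positivity), mul_comm] at E2b
  have hc1 : c ≤ 1 := by
    have : 0 < 1 / (T:ℝ) := by positivity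
    have h1 : η * κ ≤ 1 * 1 := by gcongr; linarith
    rw [hc]; linarith
  set A := Real.exp (c * w) with hA
  have hA1 : 1 ≤ A := Real.one_le_exp (by positivity)
  have hchoose : ⌈A⌉₊ ^ t ≤ (#P).choose t := by
    refine choose_lower _ t _ t le_rfl ?_
    have h1 : ((⌈A⌉₊ * t + t : ℕ) : ℝ) ≤ #P := by
      push_cast
      have h2 := Nat.ceil_lt_add_one (a := A) (by positivity)
      have h3 : (t:ℝ) * 3 ≤ Real.exp (w / T) := by
        have : (t:ℝ) * 3 ≤ t * w := by gcongr
        refine (this.trans ht1).trans ?_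
        rw [← hlY]; exact Real.exp_le_exp.2 hlw
      have ht0' : (0:ℝ) ≤ t := by positivity
      calc (⌈A⌉₊:ℝ) * t + t ≤ (A + 1) * t + t := by gcongr
        _ = (A + 1 + 1) * t := by ring
        _ ≤ (A + A + A) * t := by gcongr
        _ = A * (t * 3) := by ring
        _ ≤ A * Real.exp (w / T) := by gcongr
        _ = Real.exp (η * κ * w) := by rw [hA, ← Real.exp_add, hc]; congr 1; ring
        _ ≤ #P := hPl
    have : ⌈A⌉₊ * t + t ≤ #P := by exact_mod_cast h1
    omega
  have hP1 : (#P:ℝ) + 1 ≤ Real.exp (2 * w) := by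
    have h1 : 1 ≤ Real.exp w := Real.one_le_exp hw0.le
    have h2 : Real.exp (2 * w) = Real.exp w * Real.exp w := by rw [← Real.exp_add]; congr 1; ring
    have h3 : 2 ≤ Real.exp w := by have := Real.add_one_le_exp w; linarith
    have h4 : Real.exp w * 2 ≤ Real.exp w * Real.exp w := by gcongr
    rw [h2]; linarith
  have hfin : A ^ t ≤ #M * Real.exp (2 * w) ^ t0 := by
    have h1 : ((⌈A⌉₊:ℝ)) ^ t ≤ #M * ((#P:ℝ) + 1) ^ t0 := by exact_mod_cast hchoose.trans hM2
    calc A ^ t ≤ (⌈A⌉₊:ℝ) ^ t := by gcongr; exact Nat.le_ceil _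
      _ ≤ _ := h1
      _ ≤ _ := by gcongr
  rw [hA, ← Real.exp_nat_mul, ← Real.exp_nat_mul] at hfin
  have hXe : X ^ (η / 3 - ε) = Real.exp (Y * (η / 3 - ε)) := by
    rw [Real.rpow_def_of_pos hX0]
  rw [hXe]
  refine le_of_mul_le_mul_right (le_trans ?_ hfin) (Real.exp_pos (t0 * (2 * w)))
  rw [← Real.exp_add]
  refine Real.exp_le_exp.2 ?_
  have h1 : (2 * t0 + 1) * w ≤ Y / T := by
    rw [le_div_iff₀ hT0]
    refine le_trans ?_ hC
    gcongr
    linarith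
  have h2 : c * (Y - w) ≤ t * (c * w) := by
    have h0 : c * (Y - w) ≤ c * (t * w) := mul_le_mul_of_nonneg_left (by linarith) hc0
    linarith
  have h3 : c * w ≤ w := mul_le_of_le_one_left hw0.le hc1
  have h4 : η / 3 - ε ≤ c - 1 / T := by
    have h5 : 1 / (T:ℝ) ≤ ε / 4 := by
      rw [div_le_iff₀ hε] at E2a
      rw [div_le_iff₀ hT0]
      linarith
    rw [hc]
    have h6 : η * (1 / 3 - ε / 2) ≤ η * κ := mul_le_mul_of_nonneg_left hκ3 hη0.le
    have h7 : η * ε ≤ 1 * ε := by gcongr; linarith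
    linarith
  have h5 : Y * (η / 3 - ε) ≤ Y * (c - 1 / T) := by gcongr
  have h6 : Y * (c - 1 / T) = c * Y - Y / T := by ring
  linarith

end CarmFrob

end Part18

/-- Main theorem: let `f` be monic and squarefree with splitting field `K`,
`n = [K:ℚ]`, and `0 < η < 1/16` such that the uniform lower bound for the number of
split primes in arithmetic progressions (away from an exceptional modulus
`q*(x) > log x`) holds for moduli `q ≤ x^η`.  Then for every `ε > 0` and all
sufficiently large `X`, there are at least `X^(η/3 − ε)` Carmichael numbers `m ≤ X` such
that `f` splits into linear factors modulo every prime divisor of `m`. -/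
theorem carmichael_frobenius_count (f : Polynomial ℤ) (hmonic : f.Monic)
    (hsqf : Squarefree f)
    (K : Type*) [Field K] [Algebra ℚ K]
    (hK : Polynomial.IsSplittingField ℚ K (f.map (Int.castRingHom ℚ)))
    (n : ℕ) (hn : n = Module.finrank ℚ K)
    (η : ℝ) (hη0 : 0 < η) (hη1 : η < 1 / 16)
    (hAP : ∃ x₀ : ℝ, ∃ qstar : ℝ → ℕ,
      (∀ x : ℝ, x₀ ≤ x → Real.log x < (qstar x : ℝ)) ∧
      ∀ x : ℝ, x₀ ≤ x → ∀ y : ℝ, x ^ ((1 : ℝ) / 2) < y → y ≤ x →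
        ∀ q : ℕ, 0 < q → (q : ℝ) ≤ x ^ η → ¬ (qstar x ∣ q) →
          ∀ a : ℤ, Int.gcd a (q : ℤ) = 1 →
            (primePi y : ℝ) / (2 * (n : ℝ) * (Nat.totient q : ℝ)) ≤
              ({p : ℕ | p.Prime ∧ (p : ℝ) < y ∧ (p : ℤ) ≡ a [ZMOD (q : ℤ)] ∧
                SplitsModLinear f p}.ncard : ℝ)) :
    ∀ ε : ℝ, 0 < ε → ∃ X₀ : ℝ, ∀ X : ℝ, X₀ ≤ X →
      X ^ (η / 3 - ε) ≤
        ({m : ℕ | (m : ℝ) ≤ X ∧ IsCarmichael m ∧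
          ∀ p : ℕ, p.Prime → p ∣ m → SplitsModLinear f p}.ncard : ℝ) := by
  obtain ⟨x₀, qstar, hq, hAP⟩ := hAP
  intro ε hε
  have hfd : FiniteDimensional ℚ K :=
    Polynomial.IsSplittingField.finiteDimensional K (f.map (Int.castRingHom ℚ))
  have hn1 : 1 ≤ n := by
    rw [hn]; exact Module.finrank_pos
  obtain ⟨X₀, hX₀⟩ := CarmFrob.main_count f n hn1 η hη0 hη1 x₀ qstar hq hAP ε hε
  refine ⟨X₀, fun X hX => ?_⟩
  obtain ⟨M, hM, hMc⟩ := hX₀ X hX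
  refine hMc.trans ?_
  have hfin : {m : ℕ | (m : ℝ) ≤ X ∧ IsCarmichael m ∧
      ∀ p : ℕ, p.Prime → p ∣ m → SplitsModLinear f p}.Finite := by
    refine (Set.finite_le_nat ⌊X⌋₊).subset fun m hm => ?_
    exact Nat.le_floor hm.1
  have h1 := Set.ncard_le_ncard (s := (M : Set ℕ)) (fun m hm => hM m hm) hfin
  rw [Set.ncard_coe_finset] at h1
  exact_mod_cast h1
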